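/- arXiv:2107.06674 — 3 statements merged into one kernel-verified Lean document; each statement's English description precedes it below -/
import Mathlib

section
/- Let F be a field and let T be a finite abelian subgroup of GL_n(F) whose order is not divisible by the characteristic of F. Let N = N_{GL_n(F)}(T) be the normalizer of T in GL_n(F) and let C = C_{GL_n(F)}(T) be the centralizer of T in GL_n(F) (note C ≤ N). Then the index of C in N is at most n!, i.e., [N_{GL_n(F)}(T) : C_{GL_n(F)}(T)] ≤ n!. -/
open Matrix

set_option synthInstance.maxHeartbeats 400000
set_option maxHeartbeats 1000000

/-!
Over an algebraic closure `K` of `F` the commuting elements of `T` are simultaneously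
diagonalizable, because `X ^ |T| - 1` is separable, so `K ^ n` is the direct sum of the joint
eigenspaces of `T`. The normalizer of `T` permutes these joint eigenspaces, of which there are at
most `n`. An element fixing all of the corresponding eigenvalue systems `T → K` acts trivially on
`T` by conjugation, that is, it lies in the centralizer. Hence `N / C` embeds into a symmetric group
of degree at most `n`.
-/

section

open Module Module.End
open scoped Nat

theorem natCard_dvd_factorial_natCard_of_faithfulSMul (H X : Type*) [Group H] [MulAction H X]
    [FaithfulSMul H X] [Finite X] : Nat.card H ∣ (Nat.card X)! := by
  rw [← Nat.card_perm]
  exact Subgroup.card_dvd_of_injective (MulAction.toPermHom H X) MulAction.toPerm_injective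

theorem linearMap_ext_of_iSup_eq_top {R M N ι : Type*} [Semiring R] [AddCommMonoid M]
    [AddCommMonoid N] [Module R M] [Module R N] {p : ι → Submodule R M} (hp : ⨆ i, p i = ⊤)
    {f g : M →ₗ[R] N} (h : ∀ i, ∀ v ∈ p i, f v = g v) : f = g := by
  rw [← LinearMap.eqLocus_eq_top, eq_top_iff, ← hp]
  exact iSup_le h

section JointEigenspaces

variable {ι R M : Type*} [CommRing R] [AddCommGroup M] [Module R M]

/-- The space of simultaneous eigenvectors of the family `f` with eigenvalue system `χ`
(together with zero). -/
def jointEigenspace (f : ι → End R M) (χ : ι → R) : Submodule R M :=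
  ⨅ i, (f i).eigenspace (χ i)

/-- The set of joint spectral values (weights) of the family `f`: the eigenvalue systems of its
simultaneous eigenvectors. -/
def jointSpectrum (f : ι → End R M) : Set (ι → R) :=
  {χ | jointEigenspace f χ ≠ ⊥}

variable {f : ι → End R M}

theorem mem_jointEigenspace {χ : ι → R} {v : M} :
    v ∈ jointEigenspace f χ ↔ ∀ i, f i v = χ i • v := by
  simp [jointEigenspace]

theorem mem_jointSpectrum {χ : ι → R} :
    χ ∈ jointSpectrum f ↔ ∃ v, (∀ i, f i v = χ i • v) ∧ v ≠ 0 := by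
  simp [jointSpectrum, Submodule.ne_bot_iff, mem_jointEigenspace]

theorem commute_of_iSup_jointEigenspace_eq_top (hf : ⨆ χ, jointEigenspace f χ = ⊤) (i j : ι) :
    Commute (f i) (f j) := by
  refine linearMap_ext_of_iSup_eq_top hf fun χ v hv ↦ ?_
  rw [mem_jointEigenspace] at hv
  simp only [Module.End.mul_apply, hv, map_smul, smul_comm (χ i)]

theorem iSupIndep_jointEigenspace [IsDomain R] [IsTorsionFree R M]
    (hcomm : ∀ i j, Commute (f i) (f j)) : iSupIndep (jointEigenspace f) :=
  (independent_iInf_maxGenEigenspace_of_forall_mapsTo f fun i j ↦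
    mapsTo_maxGenEigenspace_of_comm (hcomm j i)).mono fun _ ↦
      iInf_mono fun _ ↦ (genEigenspace _ _).mono le_top

section Finite

variable [IsDomain R] [IsTorsionFree R M] [Module.Finite R M]

theorem finite_jointSpectrum (hcomm : ∀ i j, Commute (f i) (f j)) : (jointSpectrum f).Finite :=
  have := (iSupIndep_jointEigenspace hcomm).fintypeNeBotOfFiniteDimensional
  Set.finite_coe_iff.1 (Finite.of_fintype {χ // jointEigenspace f χ ≠ ⊥})

theorem natCard_jointSpectrum_le_finrank (hcomm : ∀ i j, Commute (f i) (f j)) :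
    Nat.card (jointSpectrum f) ≤ finrank R M := by
  have hind := iSupIndep_jointEigenspace hcomm
  have : Fintype {χ // jointEigenspace f χ ≠ ⊥} := hind.fintypeNeBotOfFiniteDimensional
  exact (Nat.card_eq_fintype_card (α := {χ // jointEigenspace f χ ≠ ⊥})).trans_le
    hind.subtype_ne_bot_le_finrank

end Finite

section Action

variable {H : Type*} [Group H] [MulAction H ι]

attribute [local instance] arrowAction

/-- The joint spectrum as an invariant subset of `ι → R`, where `h • χ = χ ∘ (h⁻¹ • ·)`, for a
group `H` that permutes the members of the family `f` by conjugations. -/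
def jointSpectrumSubMulAction (f : ι → End R M)
    (hconj : ∀ h : H, ∃ g : (End R M)ˣ, ∀ i, SemiconjBy ↑g (f i) (f (h • i))) :
    SubMulAction H (ι → R) where
  carrier := jointSpectrum f
  smul_mem' h χ hχ := by
    obtain ⟨v, hv, hv0⟩ := mem_jointSpectrum.1 hχ
    obtain ⟨g, hg⟩ := hconj h
    refine mem_jointSpectrum.2 ⟨(g : End R M) v, fun i ↦ ?_, ?_⟩
    · calc f i ((g : End R M) v) = (g : End R M) (f (h⁻¹ • i) v) := by
            simpa using (LinearMap.congr_fun (hg (h⁻¹ • i)).eq v).symm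
        _ = (h • χ) i • (g : End R M) v := by rw [hv, map_smul]; rfl
    · exact fun h0 ↦ hv0 (((Module.End.isUnit_iff _).1 g.isUnit).injective (by simpa using h0))

theorem faithfulSMul_jointSpectrumSubMulAction [FaithfulSMul H ι] (hinj : Function.Injective f)
    (hf : ⨆ χ, jointEigenspace f χ = ⊤)
    (hconj : ∀ h : H, ∃ g : (End R M)ˣ, ∀ i, SemiconjBy ↑g (f i) (f (h • i))) :
    FaithfulSMul H (jointSpectrumSubMulAction f hconj) := by
  refine ⟨fun {a b} hab ↦ inv_injective (eq_of_smul_eq_smul fun i : ι ↦ hinj ?_)⟩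
  refine linearMap_ext_of_iSup_eq_top hf fun χ v hv ↦ ?_
  rw [mem_jointEigenspace] at hv
  obtain rfl | hv0 := eq_or_ne v 0
  · simp only [map_zero]
  · have hχ : a • χ = b • χ := congrArg Subtype.val (hab ⟨χ, mem_jointSpectrum.2 ⟨v, hv, hv0⟩⟩)
    rw [hv, hv]
    exact congrArg (· • v) (congrFun hχ i)

theorem natCard_dvd_factorial_finrank_of_forall_semiconjBy [IsDomain R]
    [IsTorsionFree R M] [Module.Finite R M] [FaithfulSMul H ι] (hinj : Function.Injective f)
    (hf : ⨆ χ, jointEigenspace f χ = ⊤)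
    (hconj : ∀ h : H, ∃ g : (End R M)ˣ, ∀ i, SemiconjBy ↑g (f i) (f (h • i))) :
    Nat.card H ∣ (finrank R M)! := by
  have hcomm := commute_of_iSup_jointEigenspace_eq_top hf
  have := faithfulSMul_jointSpectrumSubMulAction hinj hf hconj
  have : Finite (jointSpectrumSubMulAction f hconj) := finite_jointSpectrum hcomm
  exact (natCard_dvd_factorial_natCard_of_faithfulSMul H (jointSpectrumSubMulAction f hconj)).trans
    (Nat.factorial_dvd_factorial (natCard_jointSpectrum_le_finrank hcomm))

end Action

end JointEigenspaces

theorem iSup_jointEigenspace_eq_top_of_isSemisimple {ι K V : Type*} [Field K]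
    [IsAlgClosed K] [AddCommGroup V] [Module K V] [FiniteDimensional K V] {f : ι → End K V}
    (hcomm : ∀ i j, Commute (f i) (f j)) (hss : ∀ i, (f i).IsSemisimple) :
    ⨆ χ, jointEigenspace f χ = ⊤ := by
  have h := iSup_iInf_maxGenEigenspace_eq_top_of_iSup_maxGenEigenspace_eq_top_of_commute f
    (fun i j _ ↦ hcomm i j) fun i ↦ iSup_maxGenEigenspace_eq_top (f i)
  simpa only [(hss _).isFinitelySemisimple.maxGenEigenspace_eq_eigenspace] using! h

theorem relIndex_centralizer_normalizer_eq_natCard_range {G : Type*} [Group G] (T : Subgroup G) :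
    (Subgroup.centralizer (T : Set G)).relIndex (Subgroup.normalizer (T : Set G)) =
      Nat.card T.normalizerMonoidHom.range := by
  rw [Subgroup.relIndex, ← Subgroup.normalizerMonoidHom_ker, Subgroup.index_ker]

theorem relIndex_centralizer_normalizer_dvd_factorial_finrank {G R M : Type*} [Group G]
    [CommRing R] [IsDomain R] [AddCommGroup M] [Module R M] [IsTorsionFree R M] [Module.Finite R M]
    (ρ : G →* End R M) (T : Subgroup G) (hinj : Set.InjOn ρ T)
    (hT : ⨆ χ, jointEigenspace (fun t : T ↦ ρ t) χ = ⊤) :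
    (Subgroup.centralizer (T : Set G)).relIndex (Subgroup.normalizer (T : Set G)) ∣
      (finrank R M)! := by
  rw [relIndex_centralizer_normalizer_eq_natCard_range]
  refine natCard_dvd_factorial_finrank_of_forall_semiconjBy hinj.injective hT ?_
  rintro ⟨_, g, rfl⟩
  refine ⟨ρ.toHomUnits g, fun t ↦ SemiconjBy.map (f := ρ) ?_⟩
  simp [SemiconjBy, Subgroup.smul_def]

section Separable

variable {F A : Type*} [Field F] [Ring A] [Algebra F A]

theorem minpoly_separable_of_pow_eq_one {a : A} {m : ℕ} (hm : (m : F) ≠ 0) (ha : a ^ m = 1) :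
    (minpoly F a).Separable :=
  (Polynomial.X_pow_sub_one_separable_iff.2 hm).of_dvd (minpoly.dvd F a (by simp [ha]))

theorem isSemisimple_algHom_apply_of_minpoly_separable {K V : Type*} [Field K] [Algebra F K]
    [AddCommGroup V] [Module K V] [Module F V] [IsScalarTower F K V] (θ : A →ₐ[F] End K V) {a : A}
    (ha : (minpoly F a).Separable) : (θ a).IsSemisimple :=
  isSemisimple_of_squarefree_aeval_eq_zero (ha.map (f := algebraMap F K)).squarefree <| by
    rw [Polynomial.aeval_map_algebraMap, Polynomial.aeval_algHom_apply, minpoly.aeval, map_zero]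

end Separable

section MatrixExtension

variable (ι R S : Type*) [Fintype ι] [DecidableEq ι] [CommRing R] [CommRing S] [Algebra R S]

/-- The `R`-algebra homomorphism by which matrices over `R` act on column vectors over an
extension `S`. -/
def matrixToEndExtension : Matrix ι ι R →ₐ[R] End S (ι → S) :=
  ((Matrix.toLinAlgEquiv' : Matrix ι ι S ≃ₐ[S] _).toAlgHom.restrictScalars R).comp
    (Algebra.ofId R S).mapMatrix

theorem matrixToEndExtension_injective [FaithfulSMul R S] :
    Function.Injective (matrixToEndExtension ι R S) :=
  Matrix.toLinAlgEquiv'.injective.comp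
    (Matrix.map_injective (FaithfulSMul.algebraMap_injective R S))

end MatrixExtension

/-- As `relIndex` is `0` for an infinite index, divisibility, unlike `≤`, includes finiteness. -/
theorem normalizer_centralizer_index_le_general {ι F : Type*} [Fintype ι] [DecidableEq ι] [Field F]
    (T : Subgroup (GL ι F)) (hab : ∀ a ∈ T, ∀ b ∈ T, a * b = b * a)
    (hsep : ∀ t ∈ T, (minpoly F (t : Matrix ι ι F)).Separable) :
    (Subgroup.centralizer (T : Set (GL ι F))).relIndex
      (Subgroup.normalizer (T : Set (GL ι F))) ∣ (Fintype.card ι)! := by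
  let θ := matrixToEndExtension ι F (AlgebraicClosure F)
  let ρ : GL ι F →* End (AlgebraicClosure F) (ι → AlgebraicClosure F) :=
    (θ : Matrix ι ι F →* _).comp (Units.coeHom _)
  have hρ : Function.Injective ρ :=
    (matrixToEndExtension_injective ι F (AlgebraicClosure F)).comp Units.val_injective
  have hcomm : ∀ s t : T, Commute (ρ s) (ρ t) := fun s t ↦
    Commute.map (hab s s.2 t t.2 : Commute (s : GL ι F) t) ρ
  have hss : ∀ t : T, (ρ t).IsSemisimple := fun t ↦
    isSemisimple_algHom_apply_of_minpoly_separable θ (hsep t t.2)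
  simpa using relIndex_centralizer_normalizer_dvd_factorial_finrank ρ T hρ.injOn
    (iSup_jointEigenspace_eq_top_of_isSemisimple hcomm hss)

end

/-- If `T` is a finite abelian subgroup of `GL_n(F)` of order not divisible by the
characteristic of `F`, then the index of the centralizer of `T` in the normalizer of `T`
is at most `n!`. -/
theorem normalizer_centralizer_index_le
    (n : ℕ) (F : Type) [Field F]
    (T : Subgroup (GL (Fin n) F)) (hfin : Finite ↥T)
    (hab : ∀ a ∈ T, ∀ b ∈ T, a * b = b * a)
    (hchar : ¬ (ringChar F ∣ Nat.card ↥T)) :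
    (Subgroup.centralizer (T : Set (GL (Fin n) F))).relIndex
      (Subgroup.normalizer (T : Set (GL (Fin n) F))) ≤ Nat.factorial n := by
  have hsep : ∀ t ∈ T, (minpoly F (t : Matrix (Fin n) (Fin n) F)).Separable := fun _ ht ↦
    minpoly_separable_of_pow_eq_one ((ringChar.spec F _).not.2 hchar)
      (congrArg Units.val (orderOf_dvd_iff_pow_eq_one.1 (T.orderOf_dvd_natCard ht)))
  exact Nat.le_of_dvd n.factorial_pos
    (by simpa using normalizer_centralizer_index_le_general T hab hsep)
end

section
/- For every natural number n there is a constant C(n), depending only on n, with the following property. Let F be a finite field of characteristic p and let N ⊴ Γ ≤ GL_n(F) be subgroups such that the quotient Γ/N is abelian and the order of Γ/N is coprime to p. Let R = N_{GL_n(F)}(Γ) ∩ N_{GL_n(F)}(N) be the subgroup of elements normalizing both Γ and N, and let Z = {g ∈ R : g⁻¹x⁻¹gx ∈ N for all x ∈ Γ} be the subgroup of elements of R acting trivially on Γ/N. Then the index of Z in R is at most C(n). -/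
open Matrix
open scoped Pointwise
open scoped commutatorElement

set_option synthInstance.maxHeartbeats 400000
set_option maxHeartbeats 1000000

/-!
Extend scalars to an algebraically closed field `K`, so that `R` acts faithfully on `V = K ^ n`. A
commuting family of semisimple operators on `V` has at most `n` weights, and these separate its
members. Hence a normal commutative `p'`-subgroup of a group acting faithfully on `V` has a
centralizer of index dividing `n!`, because the group permutes the weights.

By a Frattini argument, a subgroup `H ≤ R` that is minimal (as regards `H ∩ Γ`) among those mapping
onto `R / N` has `H ∩ Γ` nilpotent, and the `p'`-part `L` of `H ∩ Γ` still maps onto `Γ / N`. A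
maximal normal commutative subgroup `A` of `L` is its own centralizer, so it has index dividing `n!`
in `L`. The `n!`-th powers of elements of `L` thus lie in `A` and generate a normal commutative
subgroup of `H`, so a subgroup of `H` of index at most `n!` centralizes them. Since `A` has at most
`n!ⁿ` elements of order dividing `n!`, the `n!`-th powers have bounded index in `Γ / N`, and only
boundedly many automorphisms of `Γ / N` fix all of them.
-/

section Groups

variable {G : Type*} [Group G]

theorem normal_closure_of_conj_mem {S : Set G}
    (hS : ∀ s ∈ S, ∀ g : G, g * s * g⁻¹ ∈ Subgroup.closure S) : (Subgroup.closure S).Normal :=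
  Subgroup.normalizer_eq_top_iff.mp <| top_le_iff.mp <|
    Subgroup.le_normalizer_closure_iff.mpr fun g _ s hs => hS s hs g

theorem isMulCommutative_closure_insert (A : Subgroup G) [IsMulCommutative A] {c : G}
    (hc : c ∈ Subgroup.centralizer (A : Set G)) :
    IsMulCommutative (Subgroup.closure (insert c (A : Set G))) := by
  refine Subgroup.isMulCommutative_closure fun a ha b hb => ?_
  rcases ha with rfl | ha <;> rcases hb with rfl | hb
  exacts [rfl, (hc b hb).symm, hc a ha, setLike_mul_comm ha hb]

theorem normal_closure_insert (A : Subgroup G) [A.Normal] {c : G} (hc : ∀ g : G, ⁅c, g⁆ ∈ A) :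
    (Subgroup.closure (insert c (A : Set G))).Normal := by
  have hA : A ≤ Subgroup.closure (insert c (A : Set G)) :=
    fun a ha => Subgroup.subset_closure (Set.mem_insert_of_mem c ha)
  refine normal_closure_of_conj_mem fun b hb g => ?_
  rcases hb with rfl | hb
  · rw [show g * b * g⁻¹ = ⁅b, g⁆⁻¹ * b by simp [commutatorElement_def, mul_assoc]]
    exact mul_mem (inv_mem (hA (hc g))) (Subgroup.subset_closure (Set.mem_insert b _))
  · exact hA (Subgroup.Normal.conj_mem ‹_› b hb g)

theorem centralizer_le_of_maximal [Group.IsNilpotent G] {A : Subgroup G}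
    (hA : Maximal (fun B : Subgroup G => B.Normal ∧ IsMulCommutative B) A) :
    Subgroup.centralizer (A : Set G) ≤ A := by
  obtain ⟨_, _⟩ := hA.prop
  have hle : ∀ i, Subgroup.upperCentralSeries G i ⊓ Subgroup.centralizer (A : Set G) ≤ A := by
    intro i
    induction i with
    | zero => simp
    | succ i ih =>
      rintro c ⟨hci, hc⟩
      have hcA (g : G) : ⁅c, g⁆ ∈ A :=
        ih ⟨hci g, (Subgroup.commutator_le_left _ ⊤)
          (Subgroup.commutator_mem_commutator hc (Subgroup.mem_top g))⟩
      refine hA.le_of_ge ⟨normal_closure_insert A hcA, isMulCommutative_closure_insert A hc⟩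
        (fun a ha => Subgroup.subset_closure (Set.mem_insert_of_mem c ha))
        (Subgroup.subset_closure (Set.mem_insert c _))
  obtain ⟨i, hi⟩ := Group.IsNilpotent.nilpotent G
  simpa [hi] using hle i

theorem exists_normal_isMulCommutative_centralizer_le (G : Type*) [Group G] [Finite G]
    [Group.IsNilpotent G] :
    ∃ A : Subgroup G, A.Normal ∧ IsMulCommutative A ∧ Subgroup.centralizer (A : Set G) ≤ A := by
  obtain ⟨A, hA⟩ := (Set.toFinite {A : Subgroup G | A.Normal ∧ IsMulCommutative A}).exists_maximal
    ⟨⊥, inferInstance, inferInstance⟩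
  exact ⟨A, hA.prop.1, hA.prop.2, centralizer_le_of_maximal hA⟩

theorem ker_conjNormal (A : Subgroup G) [A.Normal] :
    (MulAut.conjNormal : G →* MulAut A).ker = Subgroup.centralizer (A : Set G) := by
  ext g
  simp only [MonoidHom.mem_ker, MulEquiv.ext_iff, Subtype.ext_iff, MulAut.conjNormal_apply,
    Subgroup.mem_centralizer_iff, Subtype.forall, MulAut.one_apply, mul_inv_eq_iff_eq_mul]
  exact forall₂_congr fun _ _ => eq_comm

open scoped IsMulCommutative in
theorem index_range_powMonoidHom_dvd {L Q : Type*} [Group L] [CommGroup Q] {f : L →* Q}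
    (hf : Function.Surjective f) (A : Subgroup L) [IsMulCommutative A] [Finite A] (e : ℕ) :
    (powMonoidHom e : Q →* Q).range.index ∣ Nat.card (powMonoidHom e : A →* A).ker * A.index := by
  have hle : ((powMonoidHom e : A →* A).range.map A.subtype).map f ≤
      (powMonoidHom e : Q →* Q).range := by
    rintro _ ⟨_, ⟨_, ⟨a, rfl⟩, rfl⟩, rfl⟩
    exact ⟨f a, (map_pow f (a : L) e).symm⟩
  calc (powMonoidHom e : Q →* Q).range.index
    _ ∣ (((powMonoidHom e : A →* A).range.map A.subtype).map f).index :=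
      Subgroup.index_dvd_of_le hle
    _ ∣ ((powMonoidHom e : A →* A).range.map A.subtype).index := Subgroup.index_map_dvd _ hf
    _ = Nat.card (powMonoidHom e : A →* A).ker * A.index := by
      rw [Subgroup.index_map_subtype, Subgroup.index_range]

theorem card_fixingSubgroup_range_powMonoidHom_le (Q : Type*) [CommGroup Q] [Finite Q] (e : ℕ) :
    Nat.card (fixingSubgroup (MulAut Q) ((powMonoidHom e : Q →* Q).range : Set Q)) ≤
      (powMonoidHom e : Q →* Q).range.index ^ (powMonoidHom e : Q →* Q).range.index := by
  set P := (powMonoidHom e : Q →* Q).range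
  -- `φ` is determined by `x ↦ φ x / x`, which factors through `Q / P` and has values in `Q[e]`.
  have hker (φ : fixingSubgroup (MulAut Q) (P : Set Q)) (x : Q) :
      φ.1 x / x ∈ (powMonoidHom e : Q →* Q).ker := by
    have := (mem_fixingSubgroup_iff (MulAut Q)).mp φ.2 (x ^ e) ⟨x, rfl⟩
    rw [MonoidHom.mem_ker, powMonoidHom_apply, div_pow, ← map_pow, div_eq_one]
    exact this
  have hinj : Function.Injective fun (φ : fixingSubgroup (MulAut Q) (P : Set Q)) (x : Q ⧸ P) =>
      (⟨_, hker φ x.out⟩ : (powMonoidHom e : Q →* Q).ker) := by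
    intro φ ψ h
    refine Subtype.ext <| MulEquiv.ext fun x => ?_
    obtain ⟨y, hy⟩ := QuotientGroup.mk_out_eq_mul P x
    have hfix (φ : fixingSubgroup (MulAut Q) (P : Set Q)) : φ.1 (x * y) = φ.1 x * y := by
      rw [map_mul]
      exact congrArg _ ((mem_fixingSubgroup_iff (MulAut Q)).mp φ.2 y y.2)
    have := congrArg Subtype.val (congrFun h x)
    simpa only [div_left_inj, hy, hfix, mul_left_inj] using this
  calc _ ≤ Nat.card (Q ⧸ P → (powMonoidHom e : Q →* Q).ker) :=
      Nat.card_le_card_of_injective _ hinj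
    _ = Nat.card (powMonoidHom e : Q →* Q).ker ^ P.index := Nat.card_fun
    _ = P.index ^ P.index := by rw [Subgroup.index_range]

open scoped IsMulCommutative in
theorem index_centralizer_le_index_centralizer_pow (Q : Subgroup G) [Q.Normal]
    [IsMulCommutative Q] [Finite Q] (e : ℕ) :
    (Subgroup.centralizer (Q : Set G)).index ≤
      (Subgroup.centralizer ((· ^ e) '' (Q : Set G))).index *
        (powMonoidHom e : Q →* Q).range.index ^ (powMonoidHom e : Q →* Q).range.index := by
  set P := (powMonoidHom e : Q →* Q).range
  set C := Subgroup.centralizer ((· ^ e) '' (Q : Set G))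
  have hC : C.map MulAut.conjNormal ≤ fixingSubgroup (MulAut Q) (P : Set Q) := by
    rintro _ ⟨g, hg, rfl⟩
    refine (mem_fixingSubgroup_iff _).mpr ?_
    rintro _ ⟨x, rfl⟩
    refine Subtype.ext ?_
    rw [MulAut.smul_def, MulAut.conjNormal_apply, mul_inv_eq_iff_eq_mul]
    exact (hg _ ⟨x, x.2, rfl⟩).symm
  have hle : Subgroup.centralizer (Q : Set G) ≤ C := by
    refine Subgroup.centralizer_le ?_
    rintro _ ⟨x, hx, rfl⟩
    exact pow_mem hx e
  calc (Subgroup.centralizer (Q : Set G)).index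
    _ = C.index * (Subgroup.centralizer (Q : Set G)).relIndex C := by
      rw [mul_comm, Subgroup.relIndex_mul_index hle]
    _ = C.index * Nat.card (C.map (MulAut.conjNormal : G →* MulAut Q)) := by
      rw [← ker_conjNormal, Subgroup.relIndex_ker]
    _ ≤ C.index * Nat.card (fixingSubgroup (MulAut Q) (P : Set Q)) :=
      Nat.mul_le_mul_left _ (Subgroup.card_le_of_le hC)
    _ ≤ C.index * P.index ^ P.index :=
      Nat.mul_le_mul_left _ (card_fixingSubgroup_range_powMonoidHom_le Q e)

end Groups

section SimultaneousEigenspaces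

variable {ι K V : Type*} [Field K] [AddCommGroup V] [Module K V]

/-- The simultaneous eigenspace of the family `f` of operators with eigenvalues `χ`. -/
def weightSpace (f : ι → Module.End K V) (χ : ι → K) : Submodule K V :=
  ⨅ i, (f i).eigenspace (χ i)

/-- The weights of the family `f`: the systems of eigenvalues of common eigenvectors. They separate
the members of a commuting family of semisimple operators. -/
def Weight (f : ι → Module.End K V) : Type _ :=
  {χ : ι → K // weightSpace f χ ≠ ⊥}

variable {f : ι → Module.End K V}

theorem mem_weightSpace {χ : ι → K} {v : V} : v ∈ weightSpace f χ ↔ ∀ i, f i v = χ i • v := by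
  simp only [weightSpace, Submodule.mem_iInf, Module.End.mem_eigenspace_iff]

theorem weightSpace_eq_iInf_maxGenEigenspace (hss : ∀ i, (f i).IsFinitelySemisimple) (χ : ι → K) :
    weightSpace f χ = ⨅ i, (f i).maxGenEigenspace (χ i) :=
  iInf_congr fun i => ((hss i).maxGenEigenspace_eq_eigenspace (χ i)).symm

theorem iSupIndep_weightSpace (hf : Pairwise fun i j => Commute (f i) (f j)) :
    iSupIndep (weightSpace f) :=
  (Module.End.independent_iInf_maxGenEigenspace_of_forall_mapsTo f fun i j φ =>
    Module.End.mapsTo_maxGenEigenspace_of_comm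
      ((eq_or_ne j i).elim (fun h => h ▸ Commute.refl _) fun h => hf h) φ).mono
    fun χ => iInf_mono fun i => ((f i).genEigenspace (χ i)).mono le_top

variable [FiniteDimensional K V]

theorem finite_weight (hf : Pairwise fun i j => Commute (f i) (f j)) : Finite (Weight f) :=
  have := (iSupIndep_weightSpace hf).fintypeNeBotOfFiniteDimensional
  inferInstanceAs (Finite {χ // weightSpace f χ ≠ ⊥})

theorem card_weight_le_finrank (hf : Pairwise fun i j => Commute (f i) (f j)) :
    Nat.card (Weight f) ≤ Module.finrank K V := by
  have := (iSupIndep_weightSpace hf).fintypeNeBotOfFiniteDimensional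
  rw [Weight, Nat.card_eq_fintype_card]
  exact (iSupIndep_weightSpace hf).subtype_ne_bot_le_finrank

theorem iSup_weightSpace_eq_top [IsAlgClosed K] (hf : Pairwise fun i j => Commute (f i) (f j))
    (hss : ∀ i, (f i).IsFinitelySemisimple) : ⨆ χ, weightSpace f χ = ⊤ := by
  simp only [weightSpace_eq_iInf_maxGenEigenspace hss]
  exact Module.End.iSup_iInf_maxGenEigenspace_eq_top_of_iSup_maxGenEigenspace_eq_top_of_commute
    f hf fun i => (f i).iSup_maxGenEigenspace_eq_top

theorem eq_of_forall_weight_eq [IsAlgClosed K] (hf : Pairwise fun i j => Commute (f i) (f j))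
    (hss : ∀ i, (f i).IsFinitelySemisimple) {i j : ι} (h : ∀ χ : Weight f, χ.1 i = χ.1 j) :
    f i = f j := by
  suffices ∀ χ, weightSpace f χ ≤ LinearMap.eqLocus (f i) (f j) by
    rw [← LinearMap.eqLocus_eq_top, eq_top_iff, ← iSup_weightSpace_eq_top hf hss]
    exact iSup_le this
  intro χ v hv
  by_cases hχ : weightSpace f χ = ⊥
  · rw [hχ] at hv
    simp [(Submodule.mem_bot K).mp hv]
  · have := mem_weightSpace.mp hv
    rw [LinearMap.mem_eqLocus, this i, this j, show χ i = χ j from h ⟨χ, hχ⟩]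

end SimultaneousEigenspaces

theorem isSemisimple_of_pow_eq_one {K V : Type*} [Field K] [AddCommGroup V] [Module K V]
    {f : Module.End K V} {k : ℕ} (hf : f ^ k = 1) (hk : (k : K) ≠ 0) : f.IsSemisimple :=
  Module.End.isSemisimple_of_squarefree_aeval_eq_zero
    (Polynomial.X_pow_sub_one_separable_iff.mpr hk).squarefree (by simp [hf])

section Representations

variable {K V G : Type*} [Field K] [AddCommGroup V] [Module K V] [Group G]
  (ρ : Representation K G V) (A : Subgroup G)

theorem pairwise_commute_map [IsMulCommutative A] :
    Pairwise fun a b : A => Commute (ρ a) (ρ b) := fun a b _ =>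
  (show Commute (a : G) b from congrArg Subtype.val (mul_comm' a b)).map ρ

theorem mem_weightSpace_conj [A.Normal] (g : G) {χ : A → K} {v : V}
    (hv : v ∈ weightSpace (fun a : A => ρ a) χ) :
    ρ g v ∈ weightSpace (fun a : A => ρ a) fun a => χ (MulAut.conjNormal g⁻¹ a) := by
  refine mem_weightSpace.mpr fun a => ?_
  rw [← map_smul, ← mem_weightSpace.mp hv (MulAut.conjNormal g⁻¹ a), MulAut.conjNormal_apply,
    ← Module.End.mul_apply, ← Module.End.mul_apply, ← map_mul, ← map_mul]
  group

/-- The action of `G` on the weights of a normal subgroup by conjugation, which corresponds to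
the permutation of the weight spaces by `ρ`. -/
abbrev weightMulAction [A.Normal] : MulAction G (Weight fun a : A => ρ a) where
  smul g χ := ⟨fun a => χ.1 (MulAut.conjNormal g⁻¹ a), by
    obtain ⟨v, hv, hv0⟩ := Submodule.exists_mem_ne_zero_of_ne_bot χ.2
    refine Submodule.ne_bot_iff _ |>.mpr ⟨ρ g v, mem_weightSpace_conj ρ A g hv, fun h => hv0 ?_⟩
    simpa using congrArg (ρ g⁻¹) h⟩
  one_smul χ := Subtype.ext <| funext fun a => congrArg χ.1 (by simp)
  mul_smul g h χ := Subtype.ext <| funext fun a => congrArg χ.1 (by simp)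

theorem ker_toPermHom_weight_le_centralizer [A.Normal] [IsMulCommutative A] [IsAlgClosed K]
    [FiniteDimensional K V] (hρ : Function.Injective ρ)
    (hss : ∀ a : A, Module.End.IsSemisimple (ρ a)) :
    letI := weightMulAction ρ A
    (MulAction.toPermHom G (Weight fun a : A => ρ a)).ker ≤ Subgroup.centralizer (A : Set G) := by
  intro g hg
  refine Subgroup.mem_centralizer_iff.mpr fun a ha => ?_
  have hconj : ρ (MulAut.conjNormal g⁻¹ ⟨a, ha⟩ : A) = ρ a :=
    eq_of_forall_weight_eq (pairwise_commute_map ρ A) (fun a => (hss a).isFinitelySemisimple)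
      fun χ => congrFun (congrArg Subtype.val (Equiv.congr_fun hg χ)) ⟨a, ha⟩
  have := hρ hconj
  rw [MulAut.conjNormal_apply, inv_inv, mul_assoc, inv_mul_eq_iff_eq_mul] at this
  exact this

theorem index_centralizer_dvd_factorial [A.Normal] [IsMulCommutative A] [IsAlgClosed K]
    [FiniteDimensional K V] (hρ : Function.Injective ρ)
    (hss : ∀ a : A, Module.End.IsSemisimple (ρ a)) :
    (Subgroup.centralizer (A : Set G)).index ∣ (Module.finrank K V).factorial := by
  let _ := weightMulAction ρ A
  have := finite_weight (pairwise_commute_map ρ A)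
  calc (Subgroup.centralizer (A : Set G)).index
    _ ∣ (MulAction.toPermHom G (Weight fun a : A => ρ a)).ker.index :=
      Subgroup.index_dvd_of_le (ker_toPermHom_weight_le_centralizer ρ A hρ hss)
    _ = Nat.card (MulAction.toPermHom G (Weight fun a : A => ρ a)).range := Subgroup.index_ker _
    _ ∣ Nat.card (Equiv.Perm (Weight fun a : A => ρ a)) := Subgroup.card_subgroup_dvd_card _
    _ = (Nat.card (Weight fun a : A => ρ a)).factorial := Nat.card_perm
    _ ∣ (Module.finrank K V).factorial :=
      Nat.factorial_dvd_factorial (card_weight_le_finrank (pairwise_commute_map ρ A))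

open scoped IsMulCommutative in
theorem card_ker_powMonoidHom_le [IsMulCommutative A] [IsAlgClosed K] [FiniteDimensional K V]
    (hρ : Function.Injective ρ) (hss : ∀ a : A, Module.End.IsSemisimple (ρ a)) (e : ℕ) [NeZero e] :
    Nat.card (powMonoidHom e : A →* A).ker ≤ e ^ Module.finrank K V := by
  have hcomm := pairwise_commute_map ρ A
  have := finite_weight hcomm
  have hpow (a : (powMonoidHom e : A →* A).ker) (χ : Weight fun a : A => ρ a) :
      χ.1 a ^ e = 1 := by
    obtain ⟨v, hv, hv0⟩ := Submodule.exists_mem_ne_zero_of_ne_bot χ.2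
    have hav : Module.End.HasEigenvector (ρ a) (χ.1 a) v :=
      ⟨Module.End.mem_eigenspace_iff.mpr (mem_weightSpace.mp hv a), hv0⟩
    have ha : ρ a ^ e = 1 := by
      rw [← map_pow, ← Subgroup.coe_pow, show (a : A) ^ e = 1 from a.2, Subgroup.coe_one, map_one]
    refine smul_left_injective K hv0 ?_
    simpa [ha] using (hav.pow_apply e).symm
  have hinj : Function.Injective fun a χ => rootsOfUnity.mkOfPowEq _ (hpow a χ) := fun a b hab =>
    Subtype.ext <| Subtype.ext <| hρ <|
      eq_of_forall_weight_eq hcomm (fun a => (hss a).isFinitelySemisimple) fun χ => by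
        simpa using congrArg (fun z : rootsOfUnity e K => ((z : Kˣ) : K)) (congrFun hab χ)
  calc Nat.card (powMonoidHom e : A →* A).ker
    _ ≤ Nat.card (Weight (fun a : A => ρ a) → rootsOfUnity e K) :=
      Nat.card_le_card_of_injective _ hinj
    _ = Nat.card (rootsOfUnity e K) ^ Nat.card (Weight fun a : A => ρ a) := Nat.card_fun
    _ ≤ e ^ Nat.card (Weight fun a : A => ρ a) := Nat.pow_le_pow_left (card_rootsOfUnity K e) _
    _ ≤ e ^ Module.finrank K V :=
      Nat.pow_le_pow_right (NeZero.pos e) (card_weight_le_finrank hcomm)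

theorem isSemisimple_map_of_card_ne_zero {A : Subgroup G} (hA : (Nat.card A : K) ≠ 0) (a : A) :
    Module.End.IsSemisimple (ρ a) :=
  isSemisimple_of_pow_eq_one
    (by rw [← map_pow, ← Subgroup.coe_pow, pow_card_eq_one', Subgroup.coe_one, map_one]) hA

theorem natCast_card_ne_zero_of_le {A B : Subgroup G} (hAB : A ≤ B) (hB : (Nat.card B : K) ≠ 0) :
    (Nat.card A : K) ≠ 0 :=
  ne_zero_of_dvd_ne_zero hB (Nat.cast_dvd_cast (Subgroup.card_dvd_of_le hAB))

theorem exists_normal_isMulCommutative_index_dvd_factorial [IsAlgClosed K] [FiniteDimensional K V]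
    [Finite G] [Group.IsNilpotent G] (hρ : Function.Injective ρ) (hG : (Nat.card G : K) ≠ 0) :
    ∃ A : Subgroup G, A.Normal ∧ IsMulCommutative A ∧
      A.index ∣ (Module.finrank K V).factorial := by
  obtain ⟨A, _, _, hA⟩ := exists_normal_isMulCommutative_centralizer_le G
  have hss := isSemisimple_map_of_card_ne_zero ρ
    (ne_zero_of_dvd_ne_zero hG (Nat.cast_dvd_cast A.card_subgroup_dvd_card))
  exact ⟨A, ‹_›, ‹_›,
    (Subgroup.index_dvd_of_le hA).trans (index_centralizer_dvd_factorial ρ A hρ hss)⟩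

theorem commute_pow_factorial_of_isNilpotent [IsAlgClosed K] [FiniteDimensional K V]
    [Finite G] [Group.IsNilpotent G] (hρ : Function.Injective ρ) (hG : (Nat.card G : K) ≠ 0)
    (x y : G) :
    Commute (x ^ (Module.finrank K V).factorial) (y ^ (Module.finrank K V).factorial) := by
  obtain ⟨A, _, _, hA⟩ := exists_normal_isMulCommutative_index_dvd_factorial ρ hρ hG
  have hmem (x : G) : x ^ (Module.finrank K V).factorial ∈ A := by
    obtain ⟨k, hk⟩ := hA
    rw [hk, pow_mul]
    exact pow_mem (A.pow_index_mem x) k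
  exact setLike_mul_comm (hmem x) (hmem y)

open scoped IsMulCommutative in
theorem index_range_powMonoidHom_factorial_le [IsAlgClosed K] [FiniteDimensional K V]
    [Finite G] [Group.IsNilpotent G] (hρ : Function.Injective ρ) (hG : (Nat.card G : K) ≠ 0)
    {Q : Type*} [CommGroup Q] {f : G →* Q} (hf : Function.Surjective f) :
    (powMonoidHom (Module.finrank K V).factorial : Q →* Q).range.index ≤
      (Module.finrank K V).factorial ^ (Module.finrank K V + 1) := by
  set n := Module.finrank K V
  have : NeZero n.factorial := ⟨n.factorial_ne_zero⟩
  obtain ⟨A, _, _, hA⟩ := exists_normal_isMulCommutative_index_dvd_factorial ρ hρ hG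
  have hss := isSemisimple_map_of_card_ne_zero ρ
    (ne_zero_of_dvd_ne_zero hG (Nat.cast_dvd_cast A.card_subgroup_dvd_card))
  calc (powMonoidHom n.factorial : Q →* Q).range.index
    _ ≤ Nat.card (powMonoidHom n.factorial : A →* A).ker * A.index :=
      Nat.le_of_dvd (Nat.mul_pos Nat.card_pos (Nat.pos_of_ne_zero A.index_ne_zero_of_finite))
        (index_range_powMonoidHom_dvd hf A n.factorial)
    _ ≤ n.factorial ^ n * n.factorial :=
      Nat.mul_le_mul (card_ker_powMonoidHom_le ρ A hρ hss n.factorial)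
        (Nat.le_of_dvd n.factorial_pos hA)
    _ = n.factorial ^ (n + 1) := (pow_succ _ n).symm

theorem index_centralizer_image_pow_dvd_factorial [IsAlgClosed K] [FiniteDimensional K V]
    (hρ : Function.Injective ρ) (L : Subgroup G) [L.Normal] (hL : (Nat.card L : K) ≠ 0) (e : ℕ)
    (hcomm : ∀ x ∈ L, ∀ y ∈ L, Commute (x ^ e) (y ^ e)) :
    (Subgroup.centralizer ((· ^ e) '' (L : Set G))).index ∣ (Module.finrank K V).factorial := by
  set S : Set G := (· ^ e) '' (L : Set G)
  have hSL : Subgroup.closure S ≤ L := by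
    rw [Subgroup.closure_le]
    rintro _ ⟨x, hx, rfl⟩
    exact pow_mem hx e
  have : (Subgroup.closure S).Normal := normal_closure_of_conj_mem <| by
    rintro _ ⟨x, hx, rfl⟩ g
    exact Subgroup.subset_closure ⟨g * x * g⁻¹, Subgroup.Normal.conj_mem ‹_› x hx g, conj_pow⟩
  have : IsMulCommutative (Subgroup.closure S) := Subgroup.isMulCommutative_closure <| by
    rintro _ ⟨x, hx, rfl⟩ _ ⟨y, hy, rfl⟩
    exact hcomm x hx y hy
  rw [← Subgroup.centralizer_closure]
  exact index_centralizer_dvd_factorial ρ _ hρ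
    (isSemisimple_map_of_card_ne_zero ρ (natCast_card_ne_zero_of_le hSL hL))

theorem index_centralizer_image_map_dvd {Q : Type*} [Group Q] {π : G →* Q}
    (hπ : Function.Surjective π) (S : Set G) :
    (Subgroup.centralizer (π '' S)).index ∣ (Subgroup.centralizer S).index :=
  (Subgroup.index_dvd_of_le (Subgroup.map_centralizer_le_centralizer_image S π)).trans
    (Subgroup.index_map_dvd _ hπ)

/-- The bound on the order of the Weyl group of a section in degree `n`. The factor `n!` bounds the
index of the centralizer of the `n!`-th powers in the section, and `s ^ s` with `s = n! ^ (n + 1)`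
bounds the number of automorphisms of the section fixing these powers. -/
def weylBound (n : ℕ) : ℕ :=
  n.factorial * (n.factorial ^ (n + 1)) ^ n.factorial ^ (n + 1)

open scoped IsMulCommutative in
theorem index_centralizer_map_le_weylBound_of_isNilpotent [IsAlgClosed K] [FiniteDimensional K V]
    (hρ : Function.Injective ρ) {Q : Type*} [Group Q] {π : G →* Q} (hπ : Function.Surjective π)
    (L : Subgroup G) [L.Normal] [Finite L] [Group.IsNilpotent L] (hL : (Nat.card L : K) ≠ 0)
    [IsMulCommutative (L.map π)] :
    (Subgroup.centralizer (L.map π : Set Q)).index ≤ weylBound (Module.finrank K V) := by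
  set n := Module.finrank K V
  have hρL : Function.Injective (ρ.comp L.subtype) := hρ.comp L.subtype_injective
  have hcomm : ∀ x ∈ L, ∀ y ∈ L, Commute (x ^ n.factorial) (y ^ n.factorial) := fun x hx y hy =>
    (commute_pow_factorial_of_isNilpotent (ρ.comp L.subtype) hρL hL ⟨x, hx⟩ ⟨y, hy⟩).map L.subtype
  have hpow : (· ^ n.factorial) '' (L.map π : Set Q) = π '' ((· ^ n.factorial) '' (L : Set G)) := by
    simp only [Subgroup.coe_map, Set.image_image, map_pow]
  have hC : (Subgroup.centralizer ((· ^ n.factorial) '' (L.map π : Set Q))).index ∣ n.factorial :=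
    hpow ▸ (index_centralizer_image_map_dvd hπ _).trans
      (index_centralizer_image_pow_dvd_factorial ρ hρ L hL n.factorial hcomm)
  have hsurj := π.subgroupMap_surjective L
  have hs := index_range_powMonoidHom_factorial_le (ρ.comp L.subtype) hρL hL hsurj
  have : Finite (L.map π) := .of_surjective _ hsurj
  have : (L.map π).Normal := Subgroup.Normal.map ‹_› π hπ
  calc (Subgroup.centralizer (L.map π : Set Q)).index
    _ ≤ _ := index_centralizer_le_index_centralizer_pow (L.map π) n.factorial
    _ ≤ weylBound n :=
      Nat.mul_le_mul (Nat.le_of_dvd n.factorial_pos hC) (Nat.pow_self_mono hs)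

end Representations

section Frattini

variable {G Q : Type*} [Group G] [Group Q] {p : ℕ} [Fact p.Prime]

theorem map_normalizer_sylow_eq_top {A : Type*} [CommGroup A] {f : G →* A}
    (hf : Function.Surjective f) [Finite (Sylow p G)] (P : Sylow p G) :
    (Subgroup.normalizer (P : Set G)).map f = ⊤ := by
  set T := ((P : Subgroup G).map f).comap f
  have hPT : (P : Subgroup G) ≤ T := Subgroup.le_comap_map f P
  have hT : T.map f ≤ (Subgroup.normalizer (P : Set G)).map f :=
    (Subgroup.map_comap_le f _).trans (Subgroup.map_mono Subgroup.le_normalizer)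
  rw [← sup_eq_left.mpr hT, ← Subgroup.map_sup, P.normalizer_sup_eq_top' hPT,
    Subgroup.map_top_of_surjective f hf]

open scoped IsMulCommutative in
theorem map_normalizer_map_sylow_eq_top {f : G →* Q} (hf : Function.Surjective f)
    (M : Subgroup G) [M.Normal] [Finite (Sylow p M)] [IsMulCommutative (M.map f)]
    (P : Sylow p M) : (Subgroup.normalizer (P.map M.subtype : Set G)).map f = ⊤ := by
  have hM : M.map f ≤ (Subgroup.normalizer (P.map M.subtype : Set G)).map f := by
    have hP := map_normalizer_sylow_eq_top (f.subgroupMap_surjective M) P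
    calc M.map f
      _ = (⊤ : Subgroup (M.map f)).map (M.map f).subtype := by
        rw [← MonoidHom.range_eq_map, Subgroup.range_subtype]
      _ = ((Subgroup.normalizer (P : Set M)).map M.subtype).map f := by
        rw [← hP, Subgroup.map_map, Subgroup.map_map]
        rfl
      _ ≤ (Subgroup.normalizer (P.map M.subtype : Set G)).map f :=
        Subgroup.map_mono (Subgroup.le_normalizer_map _)
  rw [← sup_eq_left.mpr hM, ← Subgroup.map_sup, P.normalizer_sup_eq_top,
    Subgroup.map_top_of_surjective f hf]

theorem isMulCommutative_of_le {A B : Subgroup G} (hAB : A ≤ B) [IsMulCommutative B] :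
    IsMulCommutative A :=
  .of_setLike_mul_comm fun _ ha _ hb => setLike_mul_comm (hAB ha) (hAB hb)

theorem finite_subgroupOf (Γ H : Subgroup G) [Finite Γ] : Finite (Γ.subgroupOf H) :=
  .of_injective (fun x => (⟨x.1.1, x.2⟩ : Γ)) fun _ _ hxy =>
    Subtype.ext <| Subtype.ext <| Subtype.mk.inj hxy

theorem surjective_comp_subtype {f : G →* Q} {H : Subgroup G} (hH : H.map f = ⊤) :
    Function.Surjective (f.comp H.subtype) := by
  rw [← MonoidHom.range_eq_top, MonoidHom.range_comp, Subgroup.range_subtype, hH]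

theorem exists_map_eq_top_isNilpotent_subgroupOf {f : G →* Q} (hf : Function.Surjective f)
    (Γ : Subgroup G) [Γ.Normal] [Finite Γ] [IsMulCommutative (Γ.map f)] :
    ∃ H : Subgroup G, H.map f = ⊤ ∧ Group.IsNilpotent (Γ.subgroupOf H) := by
  obtain ⟨H, hH, hmin⟩ := exists_minimalFor_of_wellFoundedLT (fun H : Subgroup G => H.map f = ⊤)
    (fun H => H.subgroupOf Γ) ⟨⊤, Subgroup.map_top_of_surjective f hf⟩
  refine ⟨H, hH, ?_⟩
  set M := Γ.subgroupOf H
  have : Finite M := finite_subgroupOf Γ H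
  have : IsMulCommutative (M.map (f.comp H.subtype)) :=
    isMulCommutative_of_le (B := Γ.map f) <| by
      rw [← Subgroup.map_map]
      exact Subgroup.map_mono (Subgroup.map_comap_le H.subtype Γ)
  refine (Group.isNilpotent_of_finite_tfae.out 3 0 rfl rfl).mp fun p hp P => ?_
  set N := Subgroup.normalizer (P.map M.subtype : Set H)
  have hN : (N.map H.subtype).map f = ⊤ := by
    rw [Subgroup.map_map]
    exact map_normalizer_map_sylow_eq_top (surjective_comp_subtype hH) M P
  have hMN : M ≤ N := by
    intro x hx
    have := hmin hN (Subgroup.comap_mono (Subgroup.map_subtype_le N)) (x := ⟨x, hx⟩) x.2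
    simpa [Subgroup.mem_subgroupOf] using this
  refine ⟨fun x hx m => ?_⟩
  obtain ⟨y, hy, hyx⟩ := (hMN m.2 (x : H)).mp ⟨x, hx, rfl⟩
  rwa [← show y = m * x * m⁻¹ from Subtype.ext hyx]

end Frattini

section NilpotentGroups

variable {G : Type*} [Group G]

theorem characteristic_of_coprime_card_index {N : Subgroup G} [N.Normal]
    (h : (Nat.card N).Coprime N.index) : N.Characteristic :=
  Subgroup.characteristic_iff_map_le.mpr fun σ => Subgroup.relIndex_eq_one.mp <|
    Nat.eq_one_of_dvd_coprimes h
      ((Subgroup.relIndex_dvd_card _ _).trans (Subgroup.card_map_dvd N σ.toMonoidHom))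
      (Subgroup.relIndex_dvd_index_of_normal _ _)

theorem exists_surjective_monoidHom_sylow [Finite G] [Group.IsNilpotent G] {p : ℕ}
    [hp : Fact p.Prime] (P : Sylow p G) : ∃ f : G →* P, Function.Surjective f := by
  by_cases hpG : p ∣ Nat.card G
  · let e := Sylow.directProductOfNormal (G := G) fun _ => inferInstance
    let pr := (Pi.evalMonoidHom (fun P : Sylow p G => (P : Subgroup G)) P).comp <|
      Pi.evalMonoidHom (fun q : (Nat.card G).primeFactors => ∀ P : Sylow q G, (P : Subgroup G))
        ⟨p, Nat.mem_primeFactors.mpr ⟨hp.out, hpG, Nat.card_pos.ne'⟩⟩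
    have hpr : Function.Surjective pr :=
      (Function.surjective_eval _).comp (Function.surjective_eval _)
    exact ⟨pr.comp e.symm.toMonoidHom, hpr.comp e.symm.surjective⟩
  · have hP : Nat.card P = 1 := by
      rw [P.card_eq_multiplicity, Nat.factorization_eq_zero_of_not_dvd hpG, pow_zero]
    have := (Nat.card_eq_one_iff_unique.mp hP).1
    exact ⟨1, fun x => ⟨1, Subsingleton.elim _ _⟩⟩

theorem exists_characteristic_not_dvd_card_index_eq_pow (G : Type*) [Group G] [Finite G]
    [Group.IsNilpotent G] (p : ℕ) [hp : Fact p.Prime] :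
    ∃ N : Subgroup G, N.Characteristic ∧ ¬ p ∣ Nat.card N ∧ ∃ k, N.index = p ^ k := by
  let P : Sylow p G := default
  obtain ⟨f, hf⟩ := exists_surjective_monoidHom_sylow P
  have hindex : f.ker.index = Nat.card P := by
    rw [Subgroup.index_ker, f.range_eq_top_of_surjective hf, Subgroup.card_top]
  have hcard : Nat.card f.ker = P.index := by
    refine Nat.eq_of_mul_eq_mul_right (Nat.card_pos (α := P)) ?_
    rw [← hindex, Subgroup.card_mul_index, hindex, Subgroup.index_mul_card]
  refine ⟨f.ker, characteristic_of_coprime_card_index ?_, hcard ▸ P.not_dvd_index,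
    hindex ▸ IsPGroup.iff_card.mp P.2⟩
  rw [hcard, hindex]
  exact P.card_coprime_index.symm

theorem exists_characteristic_card_ne_zero_index_eq_pow (K : Type*) [Field K] (p : ℕ)
    [hp : ExpChar K p] (G : Type*) [Group G] [Finite G] [Group.IsNilpotent G] :
    ∃ N : Subgroup G, N.Characteristic ∧ (Nat.card N : K) ≠ 0 ∧ ∃ k, N.index = p ^ k := by
  cases hp with
  | zero => exact ⟨⊤, inferInstance, Nat.cast_ne_zero.mpr Nat.card_pos.ne', 0, by simp⟩
  | prime hp =>
    have := Fact.mk hp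
    obtain ⟨N, hN, hpN, hk⟩ := exists_characteristic_not_dvd_card_index_eq_pow G p
    exact ⟨N, hN, mt (CharP.cast_eq_zero_iff K p _).mp hpN, hk⟩

end NilpotentGroups

section Sections

theorem map_eq_range_of_coprime {G Q : Type*} [Group G] [Group Q] {f : G →* Q} {H : Subgroup G}
    (h : (Nat.card f.range).Coprime H.index) : H.map f = f.range := by
  refine le_antisymm (Subgroup.map_le_range f H) (Subgroup.relIndex_eq_one.mp ?_)
  refine Nat.eq_one_of_dvd_coprimes h (Subgroup.relIndex_dvd_card _ _) ?_
  rw [← Subgroup.index_comap]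
  exact Subgroup.index_dvd_of_le (Subgroup.le_comap_map f H)

theorem map_subgroupOf_eq_map {G Q : Type*} [Group G] [Group Q] {f : G →* Q} {H Γ : Subgroup G}
    (hH : H.map f = ⊤) (hΓ : f.ker ≤ Γ) : (Γ.subgroupOf H).map (f.comp H.subtype) = Γ.map f := by
  rw [← Subgroup.map_map, Subgroup.subgroupOf_map_subtype]
  refine le_antisymm (Subgroup.map_mono inf_le_left) ?_
  rintro _ ⟨x, hx, rfl⟩
  obtain ⟨h, hhH, hhx⟩ := hH.ge (Subgroup.mem_top (f x))
  have hker : x⁻¹ * h ∈ f.ker := by rw [MonoidHom.mem_ker, map_mul, map_inv, hhx, inv_mul_cancel]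
  exact ⟨h, ⟨(Γ.mul_mem_cancel_left (inv_mem hx)).mp (hΓ hker), hhH⟩, hhx⟩

theorem index_centralizer_map_le_weylBound {K V G Q : Type*} [Field K] [IsAlgClosed K]
    [AddCommGroup V] [Module K V] [FiniteDimensional K V] [Group G] [Group Q]
    (p : ℕ) [ExpChar K p] (ρ : Representation K G V) (hρ : Function.Injective ρ)
    {f : G →* Q} (hf : Function.Surjective f) (Γ : Subgroup G) [Γ.Normal] [Finite Γ]
    (hker : f.ker ≤ Γ) [IsMulCommutative (Γ.map f)] (hcop : (Nat.card (Γ.map f)).Coprime p) :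
    (Subgroup.centralizer (Γ.map f : Set Q)).index ≤ weylBound (Module.finrank K V) := by
  obtain ⟨H, hH, _⟩ := exists_map_eq_top_isNilpotent_subgroupOf hf Γ
  set M := Γ.subgroupOf H
  set π : H →* Q := f.comp H.subtype
  have : Finite M := finite_subgroupOf Γ H
  obtain ⟨N, _, hN, k, hk⟩ := exists_characteristic_card_ne_zero_index_eq_pow K p M
  set L := N.map M.subtype
  have hML : M.map π = Γ.map f := map_subgroupOf_eq_map hH hker
  have hrange : (π.comp M.subtype).range = Γ.map f := by
    rw [MonoidHom.range_comp, M.range_subtype, hML]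
  have hL : L.map π = Γ.map f := by
    rw [Subgroup.map_map, ← hrange]
    refine map_eq_range_of_coprime ?_
    rw [hrange, hk]
    exact hcop.pow_right k
  let e : N ≃* L := N.equivMapOfInjective M.subtype M.subtype_injective
  have : Finite L := .of_equiv N e.toEquiv
  have : Group.IsNilpotent L := Group.nilpotent_of_mulEquiv e
  have : IsMulCommutative (L.map π) := hL ▸ ‹_›
  rw [← hL]
  exact index_centralizer_map_le_weylBound_of_isNilpotent (ρ.comp H.subtype)
    (hρ.comp H.subtype_injective) (surjective_comp_subtype hH) L (Nat.card_congr e.toEquiv ▸ hN)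

theorem mem_comap_mk'_centralizer_map_iff {G : Type*} [Group G] {Γ N : Subgroup G} [N.Normal]
    {g : G} :
    g ∈ (Subgroup.centralizer (Γ.map (QuotientGroup.mk' N) : Set (G ⧸ N))).comap
      (QuotientGroup.mk' N) ↔ ∀ x ∈ Γ, g⁻¹ * x⁻¹ * g * x ∈ N := by
  simp only [Subgroup.mem_comap, Subgroup.mem_centralizer_iff, Subgroup.coe_map,
    Set.forall_mem_image, ← map_mul, SetLike.mem_coe]
  refine forall₂_congr fun x _ => ?_
  rw [QuotientGroup.mk'_apply, QuotientGroup.mk'_apply, QuotientGroup.eq]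
  simp only [_root_.mul_inv_rev, mul_assoc]

theorem exists_finset_card_le_index {G : Type*} [Group G] (H : Subgroup G) [H.FiniteIndex] :
    ∃ S : Finset G, S.card ≤ H.index ∧ ∀ g, ∃ s ∈ S, s⁻¹ * g ∈ H := by
  classical
  have := Fintype.ofFinite (G ⧸ H)
  refine ⟨Finset.univ.image (Quotient.out : G ⧸ H → G), ?_, fun g => ?_⟩
  · rw [Subgroup.index, Nat.card_eq_fintype_card]
    exact Finset.card_image_le
  · refine ⟨_, Finset.mem_image_of_mem _ (Finset.mem_univ (g : G ⧸ H)), ?_⟩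
    exact QuotientGroup.eq.mp (QuotientGroup.out_eq' _)

theorem finiteIndex_centralizer {G : Type*} [Group G] (A : Subgroup G) [A.Normal] [Finite A] :
    (Subgroup.centralizer (A : Set G)).FiniteIndex :=
  ker_conjNormal A ▸ inferInstance

theorem exists_finset_card_le_weylBound {K V G : Type*} [Field K] [IsAlgClosed K]
    [AddCommGroup V] [Module K V] [FiniteDimensional K V] [Group G] (p : ℕ) [ExpChar K p]
    (ρ : Representation K G V) (hρ : Function.Injective ρ) (Γ N : Subgroup G) [Γ.Normal]
    [N.Normal] [Finite Γ] (hNΓ : N ≤ Γ) (hab : ⁅Γ, Γ⁆ ≤ N)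
    (hcop : (N.relIndex Γ).Coprime p) :
    ∃ S : Finset G, S.card ≤ weylBound (Module.finrank K V) ∧
      ∀ g, ∃ s ∈ S, ∀ x ∈ Γ, (s⁻¹ * g)⁻¹ * x⁻¹ * (s⁻¹ * g) * x ∈ N := by
  set q := QuotientGroup.mk' N
  have hq : Function.Surjective q := QuotientGroup.mk'_surjective N
  have hker : q.ker = N := QuotientGroup.ker_mk' N
  have : IsMulCommutative (Γ.map q) := by
    rw [← Subgroup.commutator_self_eq_bot_iff, ← Subgroup.map_commutator, Subgroup.map_eq_bot_iff,
      hker]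
    exact hab
  have hbound := index_centralizer_map_le_weylBound p ρ hρ hq Γ (hker.trans_le hNΓ)
    (by rwa [← Subgroup.relIndex_ker, hker])
  have : (Γ.map q).Normal := Subgroup.Normal.map ‹_› q hq
  have : Finite (Γ.map q) := .of_surjective _ (q.subgroupMap_surjective Γ)
  have := finiteIndex_centralizer (Γ.map q)
  have : ((Subgroup.centralizer (Γ.map q : Set (G ⧸ N))).comap q).FiniteIndex :=
    ⟨(Subgroup.index_comap_of_surjective _ hq).trans_ne Subgroup.FiniteIndex.index_ne_zero⟩
  obtain ⟨S, hS, hcover⟩ := exists_finset_card_le_index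
    ((Subgroup.centralizer (Γ.map q : Set (G ⧸ N))).comap q)
  rw [Subgroup.index_comap_of_surjective _ hq] at hS
  refine ⟨S, hS.trans hbound, fun g => ?_⟩
  obtain ⟨s, hs, hsg⟩ := hcover g
  exact ⟨s, hs, mem_comap_mk'_centralizer_map_iff.mp hsg⟩

end Sections

theorem exists_injective_representation (n : ℕ) (F K : Type*) [Field F] [Field K]
    [Algebra F K] :
    ∃ ρ : Representation K (GL (Fin n) F) (Fin n → K), Function.Injective ρ :=
  ⟨(Matrix.toLinAlgEquiv' : Matrix (Fin n) (Fin n) K ≃ₐ[K] _).toMonoidHom.comp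
    ((algebraMap F K).mapMatrix.toMonoidHom.comp (Units.coeHom _)),
    Matrix.toLinAlgEquiv'.injective.comp
      ((Matrix.map_injective (algebraMap F K).injective).comp Units.val_injective)⟩

theorem weyl_group_of_section_bounded_general (n : ℕ) {F : Type*} [Field F] (p : ℕ) [ExpChar F p]
    (Γ N : Subgroup (GL (Fin n) F)) [Finite Γ] (hNΓ : N ≤ Γ)
    (hab : ∀ a ∈ Γ, ∀ b ∈ Γ, ⁅a, b⁆ ∈ N) (hcop : Nat.Coprime (N.subgroupOf Γ).index p) :
    ∃ S : Finset (GL (Fin n) F), S.card ≤ weylBound n ∧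
      ∀ g ∈ Subgroup.normalizer (Γ : Set (GL (Fin n) F)) ⊓
          Subgroup.normalizer (N : Set (GL (Fin n) F)),
        ∃ s ∈ S,
          s⁻¹ * g ∈ Subgroup.normalizer (Γ : Set (GL (Fin n) F)) ⊓
            Subgroup.normalizer (N : Set (GL (Fin n) F)) ∧
          ∀ x ∈ Γ, (s⁻¹ * g)⁻¹ * x⁻¹ * (s⁻¹ * g) * x ∈ N := by
  set R := Subgroup.normalizer (Γ : Set (GL (Fin n) F)) ⊓
    Subgroup.normalizer (N : Set (GL (Fin n) F))
  have : (Γ.subgroupOf R).Normal := Subgroup.normal_subgroupOf_of_le_normalizer inf_le_left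
  have : (N.subgroupOf R).Normal := Subgroup.normal_subgroupOf_of_le_normalizer inf_le_right
  have : Finite (Γ.subgroupOf R) := finite_subgroupOf Γ R
  have : ExpChar (AlgebraicClosure F) p := expChar_of_injective_algebraMap
    (algebraMap F (AlgebraicClosure F)).injective p
  have hΓR : Γ ≤ R := le_inf Subgroup.le_normalizer <| Subgroup.le_normalizer_iff.mpr
    fun g hg x hx => by
      simpa [commutatorElement_def] using mul_mem (hab g hg x (hNΓ hx)) hx
  obtain ⟨ρ, hρ⟩ := exists_injective_representation n F (AlgebraicClosure F)
  obtain ⟨S, hS, hcover⟩ := exists_finset_card_le_weylBound p (ρ.comp R.subtype)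
    (hρ.comp R.subtype_injective) (Γ.subgroupOf R) (N.subgroupOf R) (Subgroup.comap_mono hNΓ)
    (Subgroup.commutator_le.mpr fun a ha b hb => hab a ha b hb)
    (by rwa [Subgroup.relIndex_subgroupOf hΓR])
  rw [Module.finrank_fin_fun] at hS
  refine ⟨S.map ⟨R.subtype, R.subtype_injective⟩, (Finset.card_map _).trans_le hS, fun g hg => ?_⟩
  obtain ⟨s, hs, hsg⟩ := hcover ⟨g, hg⟩
  exact ⟨s, Finset.mem_map_of_mem _ hs, mul_mem (inv_mem s.2) hg,
    fun x hx => hsg ⟨x, hΓR hx⟩ hx⟩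

/-- **Bounded Weyl group of an abelian `p'`-section.**
For each `n` there is `C(n)` such that: if `F` is a finite field of characteristic `p`,
`N ⊴ Γ ≤ GL_n(F)` with `Γ/N` abelian of order coprime to `p`, `R` is the set of elements
normalizing both `Γ` and `N`, and `Z ⊆ R` those acting trivially on `Γ/N`, then `R` is
covered by at most `C(n)` left cosets of `Z`. -/
theorem weyl_group_of_section_bounded :
    ∀ n : ℕ, ∃ C : ℕ,
      ∀ (F : Type) [Field F] [Fintype F] (p : ℕ) [CharP F p], p.Prime →
      ∀ Γ N : Subgroup (GL (Fin n) F), N ≤ Γ →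
      (∀ g ∈ Γ, ∀ x ∈ N, g * x * g⁻¹ ∈ N) →
      (∀ a ∈ Γ, ∀ b ∈ Γ, ⁅a, b⁆ ∈ N) →
      Nat.Coprime ((N.subgroupOf Γ).index) p →
      ∃ S : Finset (GL (Fin n) F), S.card ≤ C ∧
        ∀ g ∈ Subgroup.normalizer (Γ : Set (GL (Fin n) F)) ⊓ Subgroup.normalizer (N : Set (GL (Fin n) F)), ∃ s ∈ S,
          s⁻¹ * g ∈ Subgroup.normalizer (Γ : Set (GL (Fin n) F)) ⊓ Subgroup.normalizer (N : Set (GL (Fin n) F)) ∧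
          ∀ x ∈ Γ, (s⁻¹ * g)⁻¹ * x⁻¹ * (s⁻¹ * g) * x ∈ N :=
  fun n => ⟨weylBound n, fun F _ _ p _ hp Γ N hNΓ _ hab hcop =>
    have := ExpChar.prime (R := F) hp
    weyl_group_of_section_bounded_general n p Γ N hNΓ hab hcop⟩
end

section
/- For every natural number d ≥ 1 there is a constant m = m(d), depending only on d, with the following property. Let Γ be a group and let N ≤ G be finite normal subgroups of Γ, and let K ≥ 1 be a real number. Assume: (i) [G,N] = N, where [G,N] is the subgroup generated by commutators of elements of G and N; (ii) N is nilpotent; (iii) the quotient G/N can be generated by d elements; (iv) every group homomorphism from G to GL_e(ℂ) with nontrivial image satisfies e > K^m. Let A be a finite symmetric subset of Γ with |A^3| ≤ K·|A|, generating Γ, and satisfying G ⊆ A·N (A covers G/N). Then (A^2 ∩ G)^3 = G; moreover, if Γ = G, then already A^3 = G. -/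
open Matrix
open scoped Pointwise

set_option synthInstance.maxHeartbeats 400000
set_option maxHeartbeats 1000000

/-!
By Gowers' theorem the triple product of a subset of positive density in a quasirandom group is the
whole group, so `(A ^ 2 ∩ G) ^ 3 = G` as soon as `G` lies in a bounded power of `A`. Suppose that
`(A ^ 2 ∩ G) ^ 3` covers `G` modulo a normal subgroup `R ≤ N`, as it does for `R = N`. Then it also
covers `G` modulo a smaller normal subgroup.

* If `⁅G, R⁆ < R`, pass to `Γ ⧸ ⁅G, R⁆`, where the image of `R` centralizes `G`. Splitting functions
  on `G` by the characters of this central subgroup, one sees from quasirandomness that `A ^ 2` has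
  positive density in `G`, as otherwise the powers of `A` would grow too fast.
* If `⁅G, R⁆ = R`, pass to `Γ ⧸ ⁅R, R⁆`, where the image `M` of `R` is abelian and `⁅G, M⁆ = M`. The
  large spectrum of a set of small doubling in `M` is almost invariant under `G`, and
  quasirandomness turns this into exact invariance on differences `k • x - x`. By Bogolyubov's
  lemma a bounded power of `A` then contains `⁅G, H⁆`, where `H` is generated by `A ^ 18 ∩ M`. The
  elements of `M` fixed by `G` modulo `⁅G, H⁆` form a subgroup `J` modulo which `A ^ 6 ∩ G` is a
  normal supplement of `M` in `G`; this forces `J = M`, hence `⁅G, H⁆ = M`.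

As `N` is solvable, this reaches `R = ⊥`. If `K < 2`, then `A ^ 2` is already a subgroup, with
cyclic quotient, so it contains the perfect group `G`.
-/

/-! ### Quasirandom groups -/

/-- The representation of `G` by translations of the complex functions on a `G`-set `X`. -/
noncomputable def translation (G X : Type*) [Group G] [MulAction G X] :
    Representation ℂ G (EuclideanSpace ℂ X) where
  toFun g :=
    { toFun v := WithLp.toLp 2 fun x ↦ v (g⁻¹ • x)
      map_add' _ _ := rfl
      map_smul' _ _ := rfl }
  map_one' := by ext; simp
  map_mul' a b := LinearMap.ext fun v ↦ PiLp.ext fun x ↦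
    congrArg v (show (a * b)⁻¹ • x = b⁻¹ • a⁻¹ • x by simp [mul_smul])

lemma translation_apply {G X : Type*} [Group G] [MulAction G X] (g : G)
    (v : EuclideanSpace ℂ X) (x : X) : translation G X g v x = v (g⁻¹ • x) := rfl

/-- A group is `D`-quasirandom, in the sense of Gowers, if each of its nontrivial complex linear
representations has dimension greater than `D`. -/
def IsQuasirandom (G : Type*) [Group G] (D : ℝ) : Prop :=
  ∀ (e : ℕ) (φ : G →* GL (Fin e) ℂ), φ.range ≠ ⊥ → D < (e : ℝ)

namespace IsQuasirandom

variable {G : Type*} [Group G] {D : ℝ}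

lemma of_surjective {H : Type*} [Group H] (h : IsQuasirandom G D) {f : G →* H}
    (hf : Function.Surjective f) : IsQuasirandom H D := fun e φ hφ ↦
  h e (φ.comp f) (by rwa [MonoidHom.range_comp, MonoidHom.range_eq_top.2 hf,
    ← MonoidHom.range_eq_map])

lemma representation_eq_one {V : Type*} [AddCommGroup V] [Module ℂ V] [FiniteDimensional ℂ V]
    (h : IsQuasirandom G D) (ρ : Representation ℂ G V) (hV : (Module.finrank ℂ V : ℝ) ≤ D) :
    ρ = 1 := by
  let toMatrix := LinearMap.toMatrixAlgEquiv (Module.finBasis ℂ V)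
  let φ := (toMatrix.toMulEquiv.toMonoidHom.comp ρ).toHomUnits
  have hφ : φ = 1 := by
    by_contra hne
    exact (h _ φ (mt MonoidHom.range_eq_bot_iff.1 hne)).not_ge hV
  ext1 g
  have hg : toMatrix (ρ g) = 1 := congrArg Units.val (DFunLike.congr_fun hφ g)
  exact toMatrix.injective (hg.trans (map_one toMatrix).symm)

lemma apply_eq_self_of_mem {V : Type*} [AddCommGroup V] [Module ℂ V]
    (h : IsQuasirandom G D) (ρ : Representation ℂ G V) {W : Submodule ℂ V} [FiniteDimensional ℂ W]
    (hρW : ∀ g, W ≤ W.comap (ρ g)) (hW : (Module.finrank ℂ W : ℝ) ≤ D) (g : G) {w : V}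
    (hw : w ∈ W) : ρ g w = w := by
  have htriv := DFunLike.congr_fun (h.representation_eq_one (ρ.subrepresentation W hρW) hW) g
  exact congrArg Subtype.val (LinearMap.congr_fun htriv ⟨w, hw⟩)

lemma subgroup_eq_top (h : IsQuasirandom G D) (J : Subgroup G) [J.FiniteIndex]
    (hJ : (J.index : ℝ) ≤ D) : J = ⊤ := by
  classical
  have := Fintype.ofFinite (G ⧸ J)
  have hdim : (Module.finrank ℂ (EuclideanSpace ℂ (G ⧸ J)) : ℝ) ≤ D := by
    rwa [finrank_euclideanSpace, ← Nat.card_eq_fintype_card]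
  refine (Subgroup.eq_top_iff' J).2 fun g ↦ ?_
  have htriv := DFunLike.congr_fun (h.representation_eq_one (translation G (G ⧸ J)) hdim) g
  have hg := congrArg (· (g • ((1 : G) : G ⧸ J)))
    (LinearMap.congr_fun htriv (EuclideanSpace.single ((1 : G) : G ⧸ J) 1))
  have hcoset : (g : G ⧸ J) = (1 : G) := by simpa [translation_apply] using hg
  simpa using QuotientGroup.eq.1 hcoset.symm

lemma smul_eq {X : Type*} [MulAction G X] [Finite X] (h : IsQuasirandom G D)
    (hX : (Nat.card X : ℝ) ≤ D) (g : G) (x : X) : g • x = x := by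
  have := Finite.of_equiv _ (MulAction.orbitEquivQuotientStabilizer G x)
  have := (MulAction.stabilizer G x).finiteIndex_of_finite_quotient
  have hindex : (MulAction.stabilizer G x).index ≤ Nat.card X := by
    rw [MulAction.index_stabilizer, ← Set.ncard_univ]
    exact Set.ncard_le_ncard (Set.subset_univ _)
  have htop := h.subgroup_eq_top (MulAction.stabilizer G x) ((Nat.cast_le.2 hindex).trans hX)
  exact MulAction.mem_stabilizer_iff.1 (htop ▸ Subgroup.mem_top g)

lemma monoidHom_eq_one {B : Type*} [CommGroup B] [Finite B] (h : IsQuasirandom G D) (hD : 1 ≤ D)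
    (f : G →* B) : f = 1 := by
  ext g
  by_contra hne
  obtain ⟨ψ, hψ⟩ := CommGroup.exists_apply_ne_one_of_hasEnoughRootsOfUnity B ℂ hne
  let ρ : Representation ℂ G ℂ :=
    (Module.toModuleEnd ℂ ℂ).toMonoidHom.comp ((Units.coeHom ℂ).comp (ψ.comp f))
  have hg := DFunLike.congr_fun (h.representation_eq_one ρ (by simpa using hD)) g
  refine hψ (Units.ext ?_)
  simpa [ρ] using LinearMap.congr_fun hg 1

protected lemma isPerfect [Finite G] (h : IsQuasirandom G D) (hD : 1 ≤ D) :
    Group.IsPerfect G := by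
  refine ⟨(Subgroup.eq_top_iff' _).2 fun g ↦ ?_⟩
  have hg := DFunLike.congr_fun (h.monoidHom_eq_one hD (Abelianization.of (G := G))) g
  rwa [MonoidHom.one_apply, ← MonoidHom.mem_ker, Abelianization.ker_of] at hg

end IsQuasirandom

section HilbertSchmidt

variable {X Y : Type*} [Fintype X] [Fintype Y] [DecidableEq Y]

lemma sum_norm_sq_toEuclideanLin_le {ι : Type*} [Fintype ι] (k : Matrix X Y ℂ)
    {b : ι → EuclideanSpace ℂ Y} (hb : Orthonormal ℂ b) :
    ∑ i, ‖toEuclideanLin k (b i)‖ ^ 2 ≤ ∑ x, ∑ y, ‖k x y‖ ^ 2 := by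
  simp_rw [EuclideanSpace.norm_sq_eq]
  rw [Finset.sum_comm]
  refine Finset.sum_le_sum fun x _ ↦ ?_
  have hbessel := hb.sum_inner_products_le (s := Finset.univ) (WithLp.toLp 2 (star (k x)))
  have hinner (i : ι) :
      toEuclideanLin k (b i) x = inner ℂ (WithLp.toLp 2 (star (k x))) (b i) := by
    simp [EuclideanSpace.inner_eq_star_dotProduct, toLpLin_apply, mulVec, dotProduct_comm]
  rw [EuclideanSpace.norm_sq_eq] at hbessel
  simpa [hinner, norm_inner_symm] using hbessel

lemma norm_sq_toEuclideanLin (k : Matrix X Y ℂ) (v : EuclideanSpace ℂ Y) :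
    (‖toEuclideanLin k v‖ ^ 2 : ℂ) = inner ℂ v (toEuclideanLin (kᴴ * k) v) := by
  have hadj : toEuclideanLin (kᴴ * k) v = LinearMap.adjoint (toEuclideanLin k)
      (toEuclideanLin k v) := by
    classical
    simp [← toEuclideanLin_conjTranspose_eq_adjoint, toLpLin_apply]
  rw [hadj, LinearMap.adjoint_inner_right, inner_self_eq_norm_sq_to_K]
  rfl

lemma finrank_eigenspace_mul_le (k : Matrix X Y ℂ) (μ : ℝ) :
    Module.finrank ℂ (Module.End.eigenspace (toEuclideanLin (kᴴ * k)) (μ : ℂ)) * μ ≤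
      ∑ x, ∑ y, ‖k x y‖ ^ 2 := by
  set W := Module.End.eigenspace (toEuclideanLin (kᴴ * k)) (μ : ℂ)
  let b := stdOrthonormalBasis ℂ W
  have hb : Orthonormal ℂ fun i ↦ (b i : EuclideanSpace ℂ Y) :=
    b.orthonormal.comp_linearIsometry W.subtypeₗᵢ
  have hμ : ∀ i, ‖toEuclideanLin k (b i)‖ ^ 2 = μ := fun i ↦ by
    have hi := norm_sq_toEuclideanLin k (b i)
    rw [Module.End.mem_eigenspace_iff.1 (b i).2, inner_smul_right, inner_self_eq_norm_sq_to_K,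
      hb.1 i] at hi
    exact Complex.ofReal_injective (by simpa using hi)
  simpa [hμ] using sum_norm_sq_toEuclideanLin_le k hb

lemma norm_sq_toEuclideanLin_eq_sum (k : Matrix X Y ℂ)
    (hk : (toEuclideanLin (kᴴ * k)).IsSymmetric) (v : EuclideanSpace ℂ Y) :
    ‖toEuclideanLin k v‖ ^ 2 = ∑ i, hk.eigenvalues finrank_euclideanSpace i *
      ‖inner ℂ (hk.eigenvectorBasis finrank_euclideanSpace i) v‖ ^ 2 := by
  have hsum := norm_sq_toEuclideanLin k v
  rw [← (hk.eigenvectorBasis finrank_euclideanSpace).sum_inner_mul_inner] at hsum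
  refine Complex.ofReal_injective ?_
  push_cast
  refine hsum.trans (Finset.sum_congr rfl fun i _ ↦ ?_)
  have hi := hk.eigenvectorBasis_apply_self_apply finrank_euclideanSpace v i
  rw [OrthonormalBasis.repr_apply_apply, OrthonormalBasis.repr_apply_apply] at hi
  rw [hi, ← inner_conj_symm, mul_left_comm, Complex.conj_mul']
  rfl

end HilbertSchmidt

section Translation

variable {G X : Type*} [Group G] [MulAction G X] [Fintype X] [DecidableEq X]

lemma commute_translation_toEuclideanLin {k : Matrix X X ℂ}
    (hk : ∀ (g : G) x y, k (g • x) (g • y) = k x y) (g : G) :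
    Commute (translation G X g) (toEuclideanLin k) := by
  ext v x
  have hx : ∑ y, k x y * v (g⁻¹ • y) = ∑ y, k (g⁻¹ • x) y * v y := by
    rw [← Equiv.sum_comp (MulAction.toPerm g)]
    simp [← hk g (g⁻¹ • x)]
  simpa [translation_apply, toLpLin_apply, mulVec, dotProduct] using hx.symm

end Translation

namespace IsQuasirandom

variable {G X : Type*} [Group G] {D : ℝ} [MulAction G X] [Fintype X]

/- On an eigenspace of `kᴴ * k` for an eigenvalue above `L / D`, where `L` is the Hilbert–Schmidt
norm of `k` squared, `G` acts trivially because the dimension is less than `D`. -/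
lemma sum_norm_sq_mulVec_le (h : IsQuasirandom G D) (hD : 0 < D) {k : Matrix X X ℂ}
    (hk : ∀ (g : G) x y, k (g • x) (g • y) = k x y) {v : X → ℂ}
    (hv : ∀ u : X → ℂ, (∀ (g : G) x, u (g • x) = u x) → star u ⬝ᵥ v = 0) :
    ∑ x, ‖(k *ᵥ v) x‖ ^ 2 ≤ (∑ x, ∑ y, ‖k x y‖ ^ 2) / D * ∑ x, ‖v x‖ ^ 2 := by
  classical
  set L := ∑ x, ∑ y, ‖k x y‖ ^ 2
  have hsymm : (toEuclideanLin (kᴴ * k)).IsSymmetric :=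
    isSymmetric_toEuclideanLin_iff.2 (isHermitian_conjTranspose_mul_self k)
  have hinv (g : G) (x y : X) : (kᴴ * k) (g • x) (g • y) = (kᴴ * k) x y := by
    rw [mul_apply, ← Equiv.sum_comp (MulAction.toPerm g)]
    simp [mul_apply, hk]
  have hfixed (μ : ℝ) (hμ : L / D < μ) (w : EuclideanSpace ℂ X)
      (hw : w ∈ Module.End.eigenspace (toEuclideanLin (kᴴ * k)) (μ : ℂ)) (g : G) :
      translation G X g w = w := by
    refine h.apply_eq_self_of_mem _ (fun g ↦ ?_) ?_ g hw
    · exact fun w hw ↦ Module.End.mapsTo_genEigenspace_of_comm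
        (commute_translation_toEuclideanLin hinv g).symm _ _ hw
    · refine le_of_mul_le_mul_right ((finrank_eigenspace_mul_le k μ).trans ?_)
        (lt_of_le_of_lt (by positivity) hμ)
      rw [div_lt_iff₀ hD] at hμ
      linarith
  have hspectral := norm_sq_toEuclideanLin_eq_sum k hsymm (WithLp.toLp 2 v)
  have hparseval := (hsymm.eigenvectorBasis finrank_euclideanSpace).sum_sq_norm_inner_right
    (WithLp.toLp 2 v)
  rw [EuclideanSpace.norm_sq_eq] at hspectral hparseval
  refine hspectral.trans_le ?_
  rw [← hparseval, Finset.mul_sum]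
  refine Finset.sum_le_sum fun i _ ↦ ?_
  rcases le_or_gt (hsymm.eigenvalues finrank_euclideanSpace i) (L / D) with hi | hi
  · gcongr
  · set b := hsymm.eigenvectorBasis finrank_euclideanSpace i
    have hb (g : G) : translation G X g b = b :=
      hfixed _ hi b (hsymm.hasEigenvector_eigenvectorBasis finrank_euclideanSpace i).1 g
    have horth : star b.ofLp ⬝ᵥ v = 0 := hv _ fun g x ↦ by
      simpa [translation_apply] using congrArg (· x) (hb g⁻¹)
    rw [EuclideanSpace.inner_eq_star_dotProduct, dotProduct_comm, horth]
    simp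

end IsQuasirandom

/-! ### Mixing in quasirandom groups -/

section BalancedIndicator

variable {G : Type*} [Fintype G]

open Classical in
/-- The balanced indicator `1_X - |X| / |G|` of a set `X`, that is, the projection of its indicator
to the functions of mean zero. -/
noncomputable def balancedIndicator (X : Finset G) (x : G) : ℂ :=
  ((if x ∈ X then 1 else 0 : ℝ) - X.card / Fintype.card G : ℝ)

lemma balancedIndicator_of_notMem {X : Finset G} {x : G} (hx : x ∉ X) :
    balancedIndicator X x = -(X.card / Fintype.card G) := by
  simp [balancedIndicator, hx]

variable [Nonempty G]

lemma sum_balancedIndicator (X : Finset G) : ∑ x, balancedIndicator X x = 0 := by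
  simp only [balancedIndicator, ← Complex.ofReal_sum, Finset.sum_sub_distrib, Finset.sum_boole]
  simp [mul_div_cancel₀]

lemma sum_norm_sq_balancedIndicator_le (X : Finset G) :
    ∑ x, ‖balancedIndicator X x‖ ^ 2 ≤ X.card := by
  classical
  set r : ℝ := X.card / Fintype.card G with hr
  have hx (x : G) : ‖balancedIndicator X x‖ ^ 2 = (if x ∈ X then 1 - 2 * r else 0) + r ^ 2 := by
    simp only [balancedIndicator, Complex.norm_real, Real.norm_eq_abs, sq_abs]
    split_ifs <;> ring
  simp only [hx, Finset.sum_add_distrib, Finset.sum_ite_mem, Finset.univ_inter,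
    Finset.sum_const, Finset.card_univ, nsmul_eq_mul]
  calc (X.card * (1 - 2 * r) + Fintype.card G * r ^ 2 : ℝ)
      = X.card - X.card ^ 2 / Fintype.card G := by rw [hr]; field_simp; ring
    _ ≤ X.card := sub_le_self _ (by positivity)

end BalancedIndicator

namespace IsQuasirandom

variable {G : Type*} [Group G] {D : ℝ}

lemma sum_norm_sq_convolution_le [Fintype G] (h : IsQuasirandom G D) (hD : 0 < D) (q : G → ℂ)
    {v : G → ℂ} (hv : ∑ y, v y = 0) :
    ∑ g, ‖∑ y, q (y⁻¹ * g) * v y‖ ^ 2 ≤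
      Fintype.card G * (∑ x, ‖q x‖ ^ 2) / D * ∑ y, ‖v y‖ ^ 2 := by
  have hinv (g x y : G) : of (fun x y ↦ q (y⁻¹ * x)) (g • x) (g • y) =
      of (fun x y ↦ q (y⁻¹ * x)) x y := by simp [mul_assoc]
  have hconst (u : G → ℂ) (hu : ∀ g x : G, u (g • x) = u x) : star u ⬝ᵥ v = 0 := by
    have hu1 (x : G) : u x = u 1 := by simpa using hu x 1
    simp [dotProduct, hu1, ← Finset.mul_sum, hv]
  have hnorm : ∑ x, ∑ y, ‖q (y⁻¹ * x)‖ ^ 2 = Fintype.card G * ∑ x, ‖q x‖ ^ 2 := by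
    rw [Finset.sum_comm]
    have hshift (y : G) : ∑ x, ‖q (y⁻¹ * x)‖ ^ 2 = ∑ x, ‖q x‖ ^ 2 :=
      Equiv.sum_comp (Equiv.mulLeft y⁻¹) fun x ↦ ‖q x‖ ^ 2
    simp [hshift]
  rw [← hnorm]
  exact h.sum_norm_sq_mulVec_le hD hinv hconst

open Classical in
/- The mixing inequality of Babai, Nikolov and Pyber: off `X * Y` the convolution of the balanced
indicator of `X` with the indicator of `Y` is constantly `-|X||Y| / |G|`. -/
lemma card_mul_card_mul_card_compl_le [Fintype G] (h : IsQuasirandom G D) (hD : 0 < D)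
    (X Y : Finset G) :
    D * (X.card * Y.card * (X * Y)ᶜ.card) ≤ (Fintype.card G : ℝ) ^ 3 := by
  let q : G → ℂ := fun x ↦ if x ∈ Y then 1 else 0
  have hq : ∑ x, ‖q x‖ ^ 2 = Y.card := by simp [q, apply_ite, Finset.sum_ite_mem]
  have hconv (g : G) (hg : g ∈ (X * Y)ᶜ) : ‖∑ y, q (y⁻¹ * g) * balancedIndicator X y‖ ^ 2 =
      (X.card * Y.card / Fintype.card G : ℝ) ^ 2 := by
    have hy (y : G) :
        q (y⁻¹ * g) * balancedIndicator X y = -(X.card / Fintype.card G) * q (y⁻¹ * g) := by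
      by_cases hyX : y ∈ X
      · have hyY : y⁻¹ * g ∉ Y := fun hyY ↦
          Finset.mem_compl.1 hg (Finset.mem_mul.2 ⟨y, hyX, _, hyY, mul_inv_cancel_left y g⟩)
        simp [q, hyY]
      · rw [balancedIndicator_of_notMem hyX, mul_comm]
    have hsum : ∑ y, q (y⁻¹ * g) = Y.card := by
      refine (Equiv.sum_comp ((Equiv.inv G).trans (Equiv.mulRight g)) q).trans ?_
      simp [q]
    rw [Finset.sum_congr rfl fun y _ ↦ hy y, ← Finset.mul_sum, hsum]
    simp [div_mul_eq_mul_div]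
  have hmix : (X * Y)ᶜ.card * (X.card * Y.card / Fintype.card G : ℝ) ^ 2 ≤
      Fintype.card G * Y.card / D * X.card := calc
    _ = ∑ g ∈ (X * Y)ᶜ, ‖∑ y, q (y⁻¹ * g) * balancedIndicator X y‖ ^ 2 := by
      rw [Finset.sum_congr rfl hconv, Finset.sum_const, nsmul_eq_mul]
    _ ≤ ∑ g, ‖∑ y, q (y⁻¹ * g) * balancedIndicator X y‖ ^ 2 :=
      Finset.sum_le_univ_sum_of_nonneg fun _ ↦ sq_nonneg _
    _ ≤ _ := hq ▸ h.sum_norm_sq_convolution_le hD q (sum_balancedIndicator X)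
    _ ≤ _ := by gcongr; exact sum_norm_sq_balancedIndicator_le X
  rcases (mul_nonneg X.card.cast_nonneg Y.card.cast_nonneg : (0 : ℝ) ≤ _).eq_or_lt with h0 | h0
  · rw [← h0]; simp
  rw [div_pow, div_mul_eq_mul_div, mul_div_assoc', div_le_div_iff₀ (by positivity) hD] at hmix
  exact le_of_mul_le_mul_left (by linarith) h0

/- Gowers' theorem on product-free sets. -/
lemma mul_mul_eq_univ [Finite G] (h : IsQuasirandom G D) (hD : 0 < D) {X Y Z : Set G}
    (hcard : (Nat.card G : ℝ) ^ 3 < D * (X.ncard * Y.ncard * Z.ncard)) :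
    X * Y * Z = Set.univ := by
  classical
  have := Fintype.ofFinite G
  refine Set.eq_univ_iff_forall.2 fun z ↦ ?_
  by_contra hz
  have hsubset : Z.toFinset.image (z * ·⁻¹) ⊆ (X.toFinset * Y.toFinset)ᶜ := by
    refine Finset.image_subset_iff.2 fun c hc ↦ Finset.mem_compl.2 fun hXY ↦ hz ?_
    rw [← Finset.mem_coe, Finset.coe_mul, Set.coe_toFinset, Set.coe_toFinset] at hXY
    exact ⟨_, hXY, c, Set.mem_toFinset.1 hc, inv_mul_cancel_right z c⟩
  have hZ : (Z.ncard : ℝ) ≤ (X.toFinset * Y.toFinset)ᶜ.card := by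
    rw [Set.ncard_eq_toFinset_card', ← Finset.card_image_of_injective Z.toFinset
      ((mul_right_injective z).comp inv_injective)]
    exact_mod_cast Finset.card_le_card hsubset
  refine hcard.not_ge (le_trans ?_ (Nat.card_eq_fintype_card (α := G) ▸
    h.card_mul_card_mul_card_compl_le hD X.toFinset Y.toFinset))
  rw [← Set.ncard_eq_toFinset_card', ← Set.ncard_eq_toFinset_card']
  gcongr

lemma pow_three_eq {Γ : Type*} [Group Γ] {G : Subgroup Γ} [Finite G] (h : IsQuasirandom G D)
    (hD : 0 < D) {S : Set Γ} (hS : S ⊆ G) (hcard : (Nat.card G : ℝ) ^ 3 < D * S.ncard ^ 3) :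
    S ^ 3 = G := by
  obtain ⟨T, rfl⟩ := Set.subset_range_iff_exists_image_eq.1
    (hS.trans Subtype.range_coe.superset : S ⊆ Set.range G.subtype)
  rw [Set.ncard_image_of_injective T G.subtype_injective] at hcard
  have hT : T ^ 3 = Set.univ := by
    rw [pow_succ, sq]
    exact h.mul_mul_eq_univ hD (by rwa [← sq, ← pow_succ])
  rw [← Set.image_pow, hT, Set.image_univ, Subgroup.coe_subtype, Subtype.range_coe]

end IsQuasirandom

/-! ### Sections of central quotients -/

lemma sum_norm_sq_sum_addChar_mul {V : Type*} [AddCommGroup V] [Fintype V] (F : V → ℂ) :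
    ∑ χ : AddChar V ℂ, ‖∑ m, χ m * F m‖ ^ 2 = Fintype.card V * ∑ m, ‖F m‖ ^ 2 := by
  classical
  have hterm (x y : V) : ∑ χ : AddChar V ℂ, χ x * F x * star (χ y * F y) =
      if x = y then (Fintype.card V : ℂ) * ‖F y‖ ^ 2 else 0 := by
    have hχ (χ : AddChar V ℂ) : χ x * F x * star (χ y * F y) = χ (x - y) * (F x * star (F y)) := by
      rw [sub_eq_add_neg, AddChar.map_add_eq_mul, AddChar.map_neg_eq_conj, star_mul',
        starRingEnd_apply]
      ring
    simp_rw [hχ, ← Finset.sum_mul, AddChar.sum_apply_eq_ite, sub_eq_zero]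
    split_ifs with hxy
    · rw [hxy, ← Complex.mul_conj']; rfl
    · simp
  refine Complex.ofReal_injective ?_
  push_cast
  simp_rw [← Complex.mul_conj', map_sum, Finset.sum_mul_sum, ← starRingEnd_apply] at hterm ⊢
  rw [Finset.sum_comm]
  simp_rw [Finset.sum_comm (s := (Finset.univ : Finset (AddChar V ℂ))), hterm, Finset.mul_sum]
  simp

section Central

variable {G V : Type*} [Group G] [AddCommGroup V] [Fintype V] {ι : Multiplicative V →* G}

/-- The component of a function `F` on `G` on which a central copy of `V` in `G` acts by the
character `χ⁻¹`, scaled by the order of `V`. -/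
noncomputable def isotypic (ι : Multiplicative V →* G) (χ : AddChar V ℂ) (F : G → ℂ) (g : G) : ℂ :=
  ∑ m : V, χ m * F (g * ι (.ofAdd m))

lemma isotypic_mul_apply (χ : AddChar V ℂ) (F : G → ℂ) (g : G) (m : V) :
    isotypic ι χ F (g * ι (.ofAdd m)) = χ (-m) * isotypic ι χ F g := by
  rw [isotypic, isotypic, Finset.mul_sum, ← Equiv.sum_comp (Equiv.addLeft (-m))]
  refine Finset.sum_congr rfl fun k _ ↦ ?_
  dsimp only [Equiv.coe_addLeft]
  rw [AddChar.map_add_eq_mul, mul_assoc g, ← ι.map_mul, ← ofAdd_add,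
    add_neg_cancel_left, mul_assoc]

variable [Fintype G]

lemma sum_isotypic (χ : AddChar V ℂ) (F : G → ℂ) :
    ∑ g, isotypic ι χ F g = (∑ m, χ m) * ∑ g, F g := by
  simp_rw [isotypic]
  rw [Finset.sum_comm, Finset.sum_mul]
  refine Finset.sum_congr rfl fun m _ ↦ ?_
  rw [← Finset.mul_sum, ← Equiv.sum_comp (Equiv.mulRight (ι (.ofAdd m))) F]
  rfl

lemma sum_sum_norm_sq_isotypic (ι : Multiplicative V →* G) (F : G → ℂ) :
    ∑ χ, ∑ g, ‖isotypic ι χ F g‖ ^ 2 = Fintype.card V ^ 2 * ∑ g, ‖F g‖ ^ 2 := by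
  have hshift (m : V) : ∑ g, ‖F (g * ι (.ofAdd m))‖ ^ 2 = ∑ g, ‖F g‖ ^ 2 :=
    Equiv.sum_comp (Equiv.mulRight (ι (.ofAdd m))) fun g ↦ ‖F g‖ ^ 2
  rw [Finset.sum_comm]
  simp_rw [isotypic, sum_norm_sq_sum_addChar_mul]
  rw [← Finset.mul_sum, Finset.sum_comm]
  simp only [hshift, Finset.sum_const, Finset.card_univ, nsmul_eq_mul]
  ring

/-- Right convolution of `f` by the counting measure on the values of `s`, with multiplicity. -/
def convolveValues (s : G → G) (f : G → ℂ) (g : G) : ℂ := ∑ x, f (g * (s x)⁻¹)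

lemma sum_convolveValues (s : G → G) (f : G → ℂ) :
    ∑ g, convolveValues s f g = Fintype.card G * ∑ g, f g := by
  have hshift (x : G) : ∑ g, f (g * (s x)⁻¹) = ∑ g, f g := Equiv.sum_comp (Equiv.mulRight (s x)⁻¹) f
  simp_rw [convolveValues]
  rw [Finset.sum_comm]
  simp [hshift]

lemma isotypic_convolveValues (hι : ∀ m, ι m ∈ Subgroup.center G) {s : G → G} {c : G → V}
    (hs : ∀ g, s g * ι (.ofAdd (c g)) = g) (χ : AddChar V ℂ) (f : G → ℂ) (g : G) :
    isotypic ι χ (convolveValues s f) g = ∑ y, χ (-c (y⁻¹ * g)) * isotypic ι χ f y := by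
  have hcomm (m : V) (x : G) : ι (.ofAdd m) * x = x * ι (.ofAdd m) :=
    (Subgroup.mem_center_iff.1 (hι _) x).symm
  have hswap : isotypic ι χ (convolveValues s f) g = ∑ x, isotypic ι χ f (g * (s x)⁻¹) := by
    simp_rw [isotypic, convolveValues, Finset.mul_sum]
    rw [Finset.sum_comm]
    simp_rw [mul_assoc, hcomm]
  rw [hswap, ← Equiv.sum_comp ((Equiv.inv G).trans (Equiv.mulRight g))]
  refine Finset.sum_congr rfl fun y _ ↦ ?_
  have hy : g * (s (y⁻¹ * g))⁻¹ = y * ι (.ofAdd (c (y⁻¹ * g))) := by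
    rw [mul_inv_eq_iff_eq_mul, mul_assoc, hcomm, hs, mul_inv_cancel_left]
  rw [← isotypic_mul_apply, ← hy]
  rfl

end Central

/- Every component but the trivial one has mean zero, so the mixing inequality applies to it. -/
lemma IsQuasirandom.sum_norm_sq_convolveValues_le {G V : Type*} [Group G] [AddCommGroup V]
    [Fintype G] [Finite V] {ι : Multiplicative V →* G} {D : ℝ} (h : IsQuasirandom G D) (hD : 0 < D)
    (hι : ∀ m, ι m ∈ Subgroup.center G) {s : G → G} {c : G → V}
    (hs : ∀ g, s g * ι (.ofAdd (c g)) = g) (f : G → ℂ) :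
    ∑ g, ‖convolveValues s f g‖ ^ 2 ≤
      Fintype.card G * ‖∑ g, f g‖ ^ 2 + (Fintype.card G : ℝ) ^ 2 / D * ∑ g, ‖f g‖ ^ 2 := by
  classical
  have := Fintype.ofFinite V
  set n : ℝ := (Fintype.card G : ℝ)
  set N : ℝ := (Fintype.card V : ℝ)
  have hχ (χ : AddChar V ℂ) : ∑ g, ‖isotypic ι χ (convolveValues s f) g‖ ^ 2 ≤
      (if χ = 0 then n * (N * ‖∑ g, f g‖) ^ 2 else 0) +
        n ^ 2 / D * ∑ g, ‖isotypic ι χ f g‖ ^ 2 := by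
    simp_rw [isotypic_convolveValues hι hs]
    split_ifs with hχ
    · refine le_add_of_le_of_nonneg (le_of_eq ?_) (by positivity)
      simp_rw [hχ, AddChar.zero_apply, one_mul, sum_isotypic]
      simp [n, N]
    · have hmean : ∑ y, isotypic ι χ f y = 0 := by
        rw [sum_isotypic, AddChar.sum_eq_ite, if_neg hχ, zero_mul]
      refine (h.sum_norm_sq_convolution_le hD (fun x ↦ χ (-c x)) hmean).trans_eq ?_
      simp [n, sq]
  have hsum := Finset.sum_le_sum fun χ (_ : χ ∈ Finset.univ) ↦ hχ χ
  rw [sum_sum_norm_sq_isotypic, Finset.sum_add_distrib, Finset.sum_ite_eq',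
    if_pos (Finset.mem_univ _), ← Finset.mul_sum, sum_sum_norm_sq_isotypic, mul_pow] at hsum
  have hN : 0 < N ^ 2 := pow_pos (Nat.cast_pos.2 Fintype.card_pos) 2
  exact le_of_mul_le_mul_left (by linarith) hN

lemma norm_sum_sq_le_card_mul_sum_norm_sq {α : Type*} [Fintype α] (P : Finset α) {f : α → ℂ}
    (hf : ∀ x ∉ P, f x = 0) : ‖∑ x, f x‖ ^ 2 ≤ P.card * ∑ x, ‖f x‖ ^ 2 := by
  rw [← Finset.sum_subset P.subset_univ fun x _ hx ↦ hf x hx]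
  calc ‖∑ x ∈ P, f x‖ ^ 2 ≤ (∑ x ∈ P, ‖f x‖) ^ 2 := by gcongr; exact norm_sum_le _ _
    _ ≤ P.card * ∑ x ∈ P, ‖f x‖ ^ 2 := sq_sum_le_card_mul_sum_sq
    _ ≤ P.card * ∑ x, ‖f x‖ ^ 2 := by
      gcongr
      exact P.subset_univ

/- Cauchy–Schwarz, applied to the convolution of the indicator of `C` by a section of `G ⧸ Z` with
values in `S`, which is supported on `C * S`. -/
lemma IsQuasirandom.card_mul_ncard_le {G : Type*} [Group G] [Finite G] {D : ℝ}
    (h : IsQuasirandom G D) (hD : 0 < D) {Z : Subgroup G} (hZ : Z ≤ Subgroup.center G)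
    (C : Set G) {S : Set G} (hS : S * (Z : Set G) = Set.univ) :
    (Nat.card G * C.ncard : ℝ) ≤ (C * S).ncard * (C.ncard + Nat.card G / D) := by
  classical
  have := Fintype.ofFinite G
  let : CommGroup Z :=
    { mul_comm := fun x y ↦ Subtype.ext (Subgroup.mem_center_iff.1 (hZ y.2) x) }
  choose s hs c hc hsc using fun g ↦ Set.mem_mul.1 (hS ▸ Set.mem_univ g)
  let f : G → ℂ := C.indicator 1
  have hf : ∑ g, f g = C.ncard := by
    simp [f, Set.indicator_apply, Set.ncard_eq_toFinset_card']
  have hf2 : ∑ g, ‖f g‖ ^ 2 = C.ncard := by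
    simp [f, Set.indicator_apply, Set.ncard_eq_toFinset_card', apply_ite]
  have hsupp (g : G) (hg : g ∉ (C * S).toFinset) : convolveValues s f g = 0 := by
    refine Finset.sum_eq_zero fun x _ ↦ Set.indicator_of_notMem (fun hx ↦ hg ?_) _
    exact Set.mem_toFinset.2 ⟨_, hx, _, hs x, inv_mul_cancel_right g (s x)⟩
  have hL2 := h.sum_norm_sq_convolveValues_le (V := Additive Z) (ι := Z.subtype) hD
    (fun m ↦ hZ m.toAdd.toMul.2) (c := fun g ↦ ⟨c g, hc g⟩) hsc f
  have hCS := (norm_sum_sq_le_card_mul_sum_norm_sq _ hsupp).trans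
    (mul_le_mul_of_nonneg_left hL2 (Nat.cast_nonneg _))
  rw [sum_convolveValues, hf, hf2, ← Set.ncard_eq_toFinset_card'] at hCS
  rw [Nat.card_eq_fintype_card]
  rcases (C.ncard).eq_zero_or_pos with hC | hC
  · rw [hC, Nat.cast_zero, mul_zero]
    positivity
  · have hn : (0 : ℝ) < Fintype.card G := Nat.cast_pos.2 Fintype.card_pos
    have hC' : (0 : ℝ) < C.ncard := Nat.cast_pos.2 hC
    refine le_of_mul_le_mul_left ?_ (mul_pos hn hC')
    simp only [norm_mul, RCLike.norm_natCast] at hCS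
    linear_combination hCS

/-! ### Bogolyubov's lemma for the large spectrum -/

section Spectrum

variable {V : Type*} [AddCommGroup V]

/-- The Fourier coefficient at `χ` of the indicator function of `Y`, without normalisation. -/
noncomputable def charSum (Y : Finset V) (χ : AddChar V ℂ) : ℂ := ∑ y ∈ Y, χ y

/-- The characters at which the Fourier coefficient of `Y` is large, where `L` is to be thought of
as a bound for the doubling of `Y`: these are the ones relevant for Bogolyubov's lemma. -/
def largeSpectrum (Y : Finset V) (L : ℝ) : Set (AddChar V ℂ) :=
  {χ | (Y.card : ℝ) ^ 2 ≤ 4 * L * ‖charSum Y χ‖ ^ 2}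

lemma charSum_sq (Y : Finset V) (χ : AddChar V ℂ) :
    charSum Y χ ^ 2 = ∑ p ∈ Y ×ˢ Y, χ (p.1 + p.2) := by
  rw [sq, charSum, Finset.sum_mul_sum, Finset.sum_product]
  simp_rw [AddChar.map_add_eq_mul]

lemma sum_norm_sq_charSum [Fintype V] (Y : Finset V) :
    ∑ χ, ‖charSum Y χ‖ ^ 2 = (Fintype.card V : ℝ) * Y.card := by
  classical
  have h := sum_norm_sq_sum_addChar_mul fun y ↦ if y ∈ Y then (1 : ℂ) else 0
  have hcoeff (χ : AddChar V ℂ) : ∑ y, χ y * (if y ∈ Y then 1 else 0) = charSum Y χ := by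
    simp [charSum]
  simp_rw [hcoeff] at h
  simpa [apply_ite] using h

/- The two terms on the left are of use for `χ` inside and outside the large spectrum,
respectively. -/
lemma norm_charSum_pow_four_mul_re_ge [Finite V] (Y : Finset V) {L : ℝ} (hL : 0 < L) {x : V}
    (hx : ∀ χ ∈ largeSpectrum Y L, ‖χ x - 1‖ ≤ 1 / 2) (χ : AddChar V ℂ) :
    1 / 2 * ‖charSum Y χ‖ ^ 4 - 3 / 2 * ((Y.card : ℝ) ^ 2 / (4 * L)) * ‖charSum Y χ‖ ^ 2 ≤
      ‖charSum Y χ‖ ^ 4 * (χ x).re := by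
  set t := ‖charSum Y χ‖ ^ 2 with ht
  have ht0 : 0 ≤ t := sq_nonneg _
  rw [show ‖charSum Y χ‖ ^ 4 = t ^ 2 by rw [ht, ← pow_mul]]
  by_cases hχ : χ ∈ largeSpectrum Y L
  · have hre : 1 / 2 ≤ (χ x).re := by
      have h := (abs_le.1 ((Complex.abs_re_le_norm _).trans (hx χ hχ))).1
      rw [Complex.sub_re, Complex.one_re] at h
      linarith
    have hpos : 0 ≤ 3 / 2 * ((Y.card : ℝ) ^ 2 / (4 * L)) * t := by positivity
    nlinarith [sq_nonneg t]
  · have hre : -1 ≤ (χ x).re :=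
      (abs_le.1 ((Complex.abs_re_le_norm _).trans (AddChar.norm_apply χ x).le)).1
    have hsmall : t ≤ (Y.card : ℝ) ^ 2 / (4 * L) := by
      rw [le_div_iff₀ (by positivity), mul_comm]
      exact (not_le.1 hχ).le
    nlinarith [mul_le_mul_of_nonneg_right hsmall ht0, sq_nonneg t]

variable [DecidableEq V]

lemma sum_norm_charSum_pow_four [Fintype V] (Y : Finset V) :
    ∑ χ, ‖charSum Y χ‖ ^ 4 = (Fintype.card V : ℝ) * Y.addEnergy Y := by
  let r (v : V) : ℕ := ((Y ×ˢ Y).filter fun p ↦ p.1 + p.2 = v).card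
  have hr (χ : AddChar V ℂ) : ∑ v, χ v * (r v : ℂ) = charSum Y χ ^ 2 := by
    rw [charSum_sq, ← Finset.sum_fiberwise (Y ×ˢ Y) fun p ↦ p.1 + p.2]
    refine Finset.sum_congr rfl fun v _ ↦ ?_
    rw [Finset.sum_congr rfl fun p hp ↦ congrArg χ (Finset.mem_filter.1 hp).2, Finset.sum_const,
      nsmul_eq_mul, mul_comm]
  have h := sum_norm_sq_sum_addChar_mul fun v ↦ (r v : ℂ)
  simp_rw [hr, norm_pow, ← pow_mul, RCLike.norm_natCast] at h
  rw [h, Finset.addEnergy_eq_sum_sq]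
  simp [r]

lemma card_pow_four_le_card_add_mul_sum [Fintype V] (Y : Finset V) :
    (Fintype.card V : ℝ) * (Y.card : ℝ) ^ 4 ≤ (Y + Y).card * ∑ χ, ‖charSum Y χ‖ ^ 4 := by
  have h : (Y.card : ℝ) ^ 2 * (Y.card : ℝ) ^ 2 ≤ (Y + Y).card * Y.addEnergy Y := by
    exact_mod_cast Finset.le_card_add_mul_addEnergy Y Y
  rw [sum_norm_charSum_pow_four, mul_left_comm]
  exact mul_le_mul_of_nonneg_left (by linarith) (Nat.cast_nonneg _)

lemma ofReal_norm_charSum_pow_four [Finite V] {Y : Finset V} (hY : -Y = Y) (χ : AddChar V ℂ) :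
    ((‖charSum Y χ‖ ^ 4 : ℝ) : ℂ) = charSum Y χ ^ 4 := by
  have hstar : (starRingEnd ℂ) (charSum Y χ) = charSum Y χ := by
    conv_rhs => rw [← hY]
    simp [charSum, ← Finset.image_neg_eq_neg, AddChar.map_neg_eq_conj]
  have hsq : ((‖charSum Y χ‖ ^ 2 : ℝ) : ℂ) = charSum Y χ ^ 2 := by
    rw [Complex.ofReal_pow, ← Complex.mul_conj', hstar, sq]
  rw [show 4 = 2 * 2 from rfl, pow_mul, Complex.ofReal_pow, hsq, pow_mul]

lemma sum_norm_charSum_pow_four_mul_eq_zero [Finite V] {Y : Finset V} (hY : -Y = Y) {x : V}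
    (hx : x ∉ Y + Y + (Y + Y)) : ∑ χ, ((‖charSum Y χ‖ ^ 4 : ℝ) : ℂ) * χ x = 0 := by
  have hexpand (χ : AddChar V ℂ) : ((‖charSum Y χ‖ ^ 4 : ℝ) : ℂ) * χ x =
      ∑ q ∈ (Y ×ˢ Y) ×ˢ (Y ×ˢ Y), χ (q.1.1 + q.1.2 + (q.2.1 + q.2.2) + x) := by
    rw [ofReal_norm_charSum_pow_four hY, show 4 = 2 + 2 from rfl, pow_add, charSum_sq,
      Finset.sum_mul_sum, ← Finset.sum_product', Finset.sum_mul]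
    simp_rw [AddChar.map_add_eq_mul]
  have := Fintype.ofFinite V
  simp_rw [hexpand]
  rw [Finset.sum_comm]
  refine Finset.sum_eq_zero fun q hq ↦ ?_
  rw [AddChar.sum_apply_eq_ite, if_neg fun h0 ↦ hx ?_]
  simp only [Finset.mem_product] at hq
  have hneg {y : V} (hy : y ∈ Y) : -y ∈ Y := hY ▸ Finset.neg_mem_neg hy
  have hxq : x = -q.1.1 + -q.1.2 + (-q.2.1 + -q.2.2) := by
    rw [← neg_eq_of_add_eq_zero_right h0]; abel
  rw [hxq]
  exact Finset.add_mem_add (Finset.add_mem_add (hneg hq.1.1) (hneg hq.1.2))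
    (Finset.add_mem_add (hneg hq.2.1) (hneg hq.2.2))

lemma mem_add_add_of_forall_mem_largeSpectrum [Finite V] {Y : Finset V} (hY : -Y = Y)
    (hne : Y.Nonempty) {L : ℝ} (hL : 0 < L) (hYY : ((Y + Y).card : ℝ) ≤ L * Y.card) {x : V}
    (hx : ∀ χ ∈ largeSpectrum Y L, ‖χ x - 1‖ ≤ 1 / 2) : x ∈ Y + Y + (Y + Y) := by
  have := Fintype.ofFinite V
  by_contra hxn
  have hy : (0 : ℝ) < Y.card := Nat.cast_pos.2 hne.card_pos
  have hre := congrArg Complex.re (sum_norm_charSum_pow_four_mul_eq_zero hY hxn)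
  simp only [Complex.re_sum, Complex.re_ofReal_mul, Complex.zero_re] at hre
  have hupper := Finset.sum_le_sum fun χ (_ : χ ∈ Finset.univ) ↦
    norm_charSum_pow_four_mul_re_ge Y hL hx χ
  rw [hre, Finset.sum_sub_distrib, ← Finset.mul_sum, ← Finset.mul_sum,
    sum_norm_sq_charSum] at hupper
  have hlower : Fintype.card V * (Y.card : ℝ) ^ 4 ≤ L * Y.card * ∑ χ, ‖charSum Y χ‖ ^ 4 :=
    (card_pow_four_le_card_add_mul_sum Y).trans (by gcongr)
  have hpos : 0 < (Fintype.card V : ℝ) * (Y.card : ℝ) ^ 4 := by positivity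
  refine absurd (mul_le_mul_of_nonneg_left hupper (by positivity : 0 ≤ L * Y.card)) (not_le.2 ?_)
  field_simp
  nlinarith

end Spectrum

/-! ### Differences along an action of a quasirandom group -/

section AddChar

variable {V : Type*} [AddCommGroup V] [Finite V]

lemma norm_addChar_add_sub_one_le (ψ : AddChar V ℂ) (a b : V) :
    ‖ψ (a + b) - 1‖ ≤ ‖ψ a - 1‖ + ‖ψ b - 1‖ := by
  have h : ψ (a + b) - 1 = (ψ a - 1) + ψ a * (ψ b - 1) := by rw [AddChar.map_add_eq_mul]; ring
  simpa [h] using norm_add_le (ψ a - 1) (ψ a * (ψ b - 1))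

lemma norm_addChar_neg_sub_one (ψ : AddChar V ℂ) (a : V) : ‖ψ (-a) - 1‖ = ‖ψ a - 1‖ := by
  rw [← RCLike.norm_conj (ψ a - 1), map_sub, map_one, AddChar.map_neg_eq_conj]

lemma card_mul_norm_addChar_sub_one_sq_le [DecidableEq V] (ψ : AddChar V ℂ) {X Y : Finset V}
    (h0 : 0 ∈ X) {x : V} (hx : x ∈ X) :
    Y.card * ‖ψ x - 1‖ ^ 2 ≤ 4 * ∑ z ∈ X + Y, ‖ψ z - 1‖ ^ 2 := by
  have htranslate {a : V} (ha : a ∈ X) :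
      ∑ y ∈ Y, ‖ψ (a + y) - 1‖ ^ 2 ≤ ∑ z ∈ X + Y, ‖ψ z - 1‖ ^ 2 := by
    refine (Finset.sum_map Y (addLeftEmbedding a) fun z ↦ ‖ψ z - 1‖ ^ 2).symm.trans_le
      (Finset.sum_le_sum_of_subset_of_nonneg (fun z hz ↦ ?_) fun _ _ _ ↦ sq_nonneg _)
    obtain ⟨y, hy, rfl⟩ := Finset.mem_map.1 hz
    exact Finset.add_mem_add ha hy
  have hterm (y : V) : ‖ψ x - 1‖ ^ 2 ≤ 2 * ‖ψ (x + y) - 1‖ ^ 2 + 2 * ‖ψ (0 + y) - 1‖ ^ 2 := by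
    have h := norm_addChar_add_sub_one_le ψ (x + y) (-y)
    rw [add_neg_cancel_right, norm_addChar_neg_sub_one] at h
    rw [zero_add]
    nlinarith [norm_nonneg (ψ x - 1), sq_nonneg (‖ψ (x + y) - 1‖ - ‖ψ y - 1‖)]
  calc Y.card * ‖ψ x - 1‖ ^ 2 = ∑ _y ∈ Y, ‖ψ x - 1‖ ^ 2 := by simp
    _ ≤ ∑ y ∈ Y, (2 * ‖ψ (x + y) - 1‖ ^ 2 + 2 * ‖ψ (0 + y) - 1‖ ^ 2) :=
      Finset.sum_le_sum fun y _ ↦ hterm y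
    _ ≤ 4 * ∑ z ∈ X + Y, ‖ψ z - 1‖ ^ 2 := by
      rw [Finset.sum_add_distrib, ← Finset.mul_sum, ← Finset.mul_sum]
      linarith [htranslate hx, htranslate h0]

end AddChar

section Action

variable {G V : Type*} [Group G] [AddCommGroup V] [DistribMulAction G V] {D : ℝ}

section Kernel

variable [DecidableEq V]

/-- The matrix whose action on functions is `f ↦ 1_Z * (f ⋆ 1_{-Y})`, that is, summation over the
translates of `Y` by elements of `Z`. -/
def translateKernel (Z Y : Finset V) : Matrix V V ℂ :=
  .of fun x y ↦ if x ∈ Z ∧ y - x ∈ Y then 1 else 0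

/-- The difference of a character `χ` and its translate under `g`, cut off outside `W`. -/
def charDifference (W : Finset V) (χ : AddChar V ℂ) (g : G) (y : V) : ℂ :=
  if y ∈ W then χ y - χ (g • y) else 0

lemma smul_mem_iff_of_smul_finset_eq {Y : Finset V} {g : G} (h : g • Y = Y) (y : V) :
    g • y ∈ Y ↔ y ∈ Y := by
  conv_lhs => rw [← h]
  exact Finset.smul_mem_smul_finset_iff g

lemma sum_smul_of_smul_finset_eq {Y : Finset V} {g : G} (h : g • Y = Y) (f : V → ℂ) :
    ∑ y ∈ Y, f (g • y) = ∑ y ∈ Y, f y :=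
  Finset.sum_equiv (MulAction.toPerm g) (fun y ↦ (smul_mem_iff_of_smul_finset_eq h y).symm)
    fun _ _ ↦ rfl

lemma charSum_smul_add {Y : Finset V} {g : G} (h : g • Y = Y) (χ : AddChar V ℂ) (x : V) :
    ∑ y ∈ Y, χ (g • (x + y)) = χ (g • x) * charSum Y χ := by
  simp_rw [smul_add, AddChar.map_add_eq_mul, ← Finset.mul_sum]
  rw [sum_smul_of_smul_finset_eq h χ, charSum]

variable [Fintype V]

lemma sum_norm_sq_translateKernel (Z Y : Finset V) :
    ∑ x, ∑ y, ‖translateKernel Z Y x y‖ ^ 2 = Z.card * Y.card := by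
  have hrow (x : V) : ∑ y, ‖translateKernel Z Y x y‖ ^ 2 = if x ∈ Z then (Y.card : ℝ) else 0 := by
    rw [← Equiv.sum_comp (Equiv.addLeft x)]
    by_cases hx : x ∈ Z <;> simp [translateKernel, hx, apply_ite]
  simp [hrow]

lemma sum_norm_sq_charDifference_le (W : Finset V) (χ : AddChar V ℂ) (g : G) :
    ∑ y, ‖charDifference W χ g y‖ ^ 2 ≤ 4 * W.card := by
  have hterm (y : V) : ‖charDifference W χ g y‖ ^ 2 ≤ if y ∈ W then 4 else 0 := by
    rw [charDifference]
    split_ifs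
    · have h := norm_sub_le (χ y) (χ (g • y))
      rw [AddChar.norm_apply, AddChar.norm_apply] at h
      nlinarith [norm_nonneg (χ y - χ (g • y))]
    · simp
  exact (Finset.sum_le_sum fun y _ ↦ hterm y).trans_eq (by simp [mul_comm])

lemma star_dotProduct_charDifference {W : Finset V} {g : G} (hW : g • W = W) (χ : AddChar V ℂ)
    {u : V → ℂ} (hu : ∀ y, u (g • y) = u y) : star u ⬝ᵥ charDifference W χ g = 0 := by
  have h := sum_smul_of_smul_finset_eq hW fun y ↦ star (u y) * χ y
  simp_rw [hu] at h
  simp only [dotProduct, charDifference, mul_ite, mul_sub, mul_zero, Pi.star_apply,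
    Finset.sum_ite_mem, Finset.univ_inter, Finset.sum_sub_distrib, h, sub_self]

lemma norm_translateKernel_mulVec_charDifference {Y Z : Finset V} {g : G} (hY : g • Y = Y)
    (χ : AddChar V ℂ) {x : V} (hx : x ∈ Z) :
    ‖(translateKernel Z Y *ᵥ charDifference (Z + Y) χ g) x‖ =
      ‖charSum Y χ‖ * ‖χ (g • x - x) - 1‖ := by
  have hsum : (translateKernel Z Y *ᵥ charDifference (Z + Y) χ g) x =
      ∑ y ∈ Y, (χ (x + y) - χ (g • (x + y))) := by
    rw [mulVec, dotProduct, ← Equiv.sum_comp (Equiv.addLeft x), ← Finset.univ_inter Y,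
      ← Finset.sum_ite_mem]
    refine Finset.sum_congr rfl fun y _ ↦ ?_
    by_cases hy : y ∈ Y
    · simp [translateKernel, charDifference, hx, hy, Finset.add_mem_add hx hy]
    · simp [translateKernel, hy]
  have hfactor : χ (g • x - x) - 1 = χ (-x) * (χ (g • x) - χ x) := by
    rw [mul_sub, ← AddChar.map_add_eq_mul, ← AddChar.map_add_eq_mul, neg_add_cancel,
      AddChar.map_zero_eq_one, neg_add_eq_sub]
  rw [hsum, Finset.sum_sub_distrib, charSum_smul_add hY, hfactor]
  simp_rw [AddChar.map_add_eq_mul, ← Finset.mul_sum]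
  rw [← charSum, ← sub_mul, norm_mul, norm_mul, AddChar.norm_apply, one_mul, norm_sub_rev, mul_comm]

end Kernel

variable [Finite V] [DecidableEq V]

lemma IsQuasirandom.norm_sq_charSum_mul_sum_le (h : IsQuasirandom G D) (hD : 0 < D)
    {Y Z : Finset V} (hY : ∀ g : G, g • Y = Y) (hZ : ∀ g : G, g • Z = Z) (χ : AddChar V ℂ) (g : G) :
    ‖charSum Y χ‖ ^ 2 * ∑ x ∈ Z, ‖χ (g • x - x) - 1‖ ^ 2 ≤
      Z.card * Y.card / D * (4 * (Z + Y).card) := by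
  have := Fintype.ofFinite V
  have hZY (g : G) : g • (Z + Y) = Z + Y := by rw [smul_add, hZ, hY]
  have hinv (g : G) (x y : V) : translateKernel Z Y (g • x) (g • y) = translateKernel Z Y x y := by
    simp only [translateKernel, of_apply, ← smul_sub, smul_mem_iff_of_smul_finset_eq (hZ g),
      smul_mem_iff_of_smul_finset_eq (hY g)]
  calc ‖charSum Y χ‖ ^ 2 * ∑ x ∈ Z, ‖χ (g • x - x) - 1‖ ^ 2
      = ∑ x ∈ Z, ‖(translateKernel Z Y *ᵥ charDifference (Z + Y) χ g) x‖ ^ 2 := by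
        rw [Finset.mul_sum]
        refine Finset.sum_congr rfl fun x hx ↦ ?_
        rw [norm_translateKernel_mulVec_charDifference (hY g) χ hx, mul_pow]
    _ ≤ ∑ x, ‖(translateKernel Z Y *ᵥ charDifference (Z + Y) χ g) x‖ ^ 2 :=
      Finset.sum_le_sum_of_subset_of_nonneg Z.subset_univ fun _ _ _ ↦ sq_nonneg _
    _ ≤ _ := h.sum_norm_sq_mulVec_le hD hinv fun u hu ↦
      star_dotProduct_charDifference (hZY g) χ (hu g)
    _ ≤ _ := by
      rw [sum_norm_sq_translateKernel]
      gcongr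
      exact sum_norm_sq_charDifference_le _ χ g

lemma IsQuasirandom.norm_addChar_smul_sub_sub_one_le (h : IsQuasirandom G D)
    {X Y : Finset V} (h0 : 0 ∈ X) (hY0 : Y.Nonempty)
    (hX : ∀ g : G, g • X = X) (hY : ∀ g : G, g • Y = Y) {L : ℝ} (hL : 0 < L)
    (hcard : ((X + Y + Y).card : ℝ) ≤ L * Y.card) (hD : 65536 * L ^ 3 ≤ D) {χ : AddChar V ℂ}
    (hχ : χ ∈ largeSpectrum Y L) (g : G) {x : V} (hx : x ∈ X) :
    ‖χ (g • x - x) - 1‖ ≤ 1 / 32 := by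
  have hD0 : 0 < D := lt_of_lt_of_le (by positivity) hD
  have hXY (g : G) : g • (X + Y) = X + Y := by rw [smul_add, hX, hY]
  have hcard' : ((X + Y).card : ℝ) ≤ L * Y.card :=
    (Nat.cast_le.2 (Finset.card_le_card_add_right hY0)).trans hcard
  let ψ : AddChar V ℂ :=
    χ.compAddMonoidHom (DistribSMul.toAddMonoidHom V g - AddMonoidHom.id V)
  set y : ℝ := (Y.card : ℝ)
  have hy : 0 < y := Nat.cast_pos.2 hY0.card_pos
  set T := ∑ z ∈ X + Y, ‖ψ z - 1‖ ^ 2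
  have hT0 : 0 ≤ T := Finset.sum_nonneg fun _ _ ↦ sq_nonneg _
  have hT : y ^ 2 * T ≤ y ^ 2 * (16 * L ^ 3 * y / D) :=
    calc y ^ 2 * T ≤ 4 * L * ‖charSum Y χ‖ ^ 2 * T := mul_le_mul_of_nonneg_right hχ hT0
      _ = 4 * L * (‖charSum Y χ‖ ^ 2 * T) := by ring
      _ ≤ 4 * L * ((X + Y).card * y / D * (4 * (X + Y + Y).card)) :=
        mul_le_mul_of_nonneg_left (h.norm_sq_charSum_mul_sum_le hD0 hY hXY χ g) (by positivity)
      _ ≤ 4 * L * (L * y * y / D * (4 * (L * y))) := by gcongr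
      _ = _ := by ring
  have hbound : y * ‖ψ x - 1‖ ^ 2 ≤ y * (1 / 32) ^ 2 :=
    calc y * ‖ψ x - 1‖ ^ 2 ≤ 4 * T := card_mul_norm_addChar_sub_one_sq_le ψ h0 hx
      _ ≤ 4 * (16 * L ^ 3 * y / D) := by
        gcongr
        exact le_of_mul_le_mul_left hT (by positivity)
      _ = y * (64 * L ^ 3 / D) := by ring
      _ ≤ y * (1 / 32) ^ 2 := by
        gcongr
        rw [div_le_iff₀ hD0]
        linarith
  exact le_of_sq_le_sq (le_of_mul_le_mul_left hbound hy) (by norm_num)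

end Action

lemma natCast_mul_norm_sub_one_le {z : ℂ} {n : ℕ} (hz : ∀ i ≤ n, ‖z ^ i - 1‖ ≤ 1 / 32) :
    n * ‖z - 1‖ ≤ 1 / 31 := by
  have hdev : ‖(n : ℂ) - ∑ i ∈ Finset.range n, z ^ i‖ ≤ n * (1 / 32) := by
    have h : (n : ℂ) - ∑ i ∈ Finset.range n, z ^ i = ∑ i ∈ Finset.range n, (1 - z ^ i) := by simp
    rw [h, ← nsmul_eq_mul, ← Finset.card_range n, ← Finset.sum_const, Finset.card_range]
    refine norm_sum_le_of_le _ fun i hi ↦ ?_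
    rw [norm_sub_rev]
    exact hz i (Finset.mem_range.1 hi).le
  have hlow : (31 / 32 : ℝ) * n ≤ ‖∑ i ∈ Finset.range n, z ^ i‖ := by
    have h := norm_sub_norm_le (n : ℂ) (∑ i ∈ Finset.range n, z ^ i)
    rw [Complex.norm_natCast] at h
    linarith
  have hgeom : ‖∑ i ∈ Finset.range n, z ^ i‖ * ‖z - 1‖ ≤ 1 / 32 := by
    rw [← norm_mul, geom_sum_mul]
    exact hz n le_rfl
  nlinarith [mul_le_mul_of_nonneg_right hlow (norm_nonneg (z - 1))]

section Halving

variable {G V : Type*} [Group G] [AddCommGroup V] [Finite V] [DistribMulAction G V]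

lemma norm_addChar_nsmul_sub_sub_one_le {χ : AddChar V ℂ} {k : G} {x : V} {δ : ℝ}
    (hδ : ∀ g : G, ‖χ (g • (k • x - x) - (k • x - x)) - 1‖ ≤ δ) (n : ℕ) :
    ‖χ (n • (k • x - x) - (k ^ n • x - x)) - 1‖ ≤ n * δ := by
  induction n with
  | zero => simp
  | succ n ih =>
    have h : (n + 1) • (k • x - x) - (k ^ (n + 1) • x - x) =
        (n • (k • x - x) - (k ^ n • x - x)) + -(k ^ n • (k • x - x) - (k • x - x)) := by
      rw [add_smul, one_smul, pow_succ, mul_smul, smul_sub (k ^ n)]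
      abel
    rw [h, Nat.cast_succ, add_mul, one_mul]
    refine (norm_addChar_add_sub_one_le χ _ _).trans (add_le_add ih ?_)
    rw [norm_addChar_neg_sub_one]
    exact hδ _

variable {S : Set (AddChar V ℂ)} {X Y : Set V}

/- Put `u = k • x - x`. As long as `n * δ ≤ 1 / 4`, the point `n • u` differs from `k ^ n • x - x`
by at most `1 / 4` in every character of `S`, hence lies in `X`, so that the `n`-th power of
`χ (g • u - u)` is close to `1`. Taking `n` about `1 / (4 * δ)` improves the bound on
`χ (g • u - u)` itself. -/
lemma norm_addChar_smul_sub_halve (hYX : Y ⊆ X)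
    (hX : ∀ x, (∀ χ ∈ S, ‖χ x - 1‖ ≤ 1 / 2) → x ∈ X)
    (hS : ∀ χ ∈ S, ∀ g : G, ∀ x ∈ X, ‖χ (g • x - x) - 1‖ ≤ 1 / 32) {δ : ℝ} (hδ0 : 0 < δ)
    (hδ : δ ≤ 1 / 4)
    (h : ∀ χ ∈ S, ∀ g k : G, ∀ x ∈ Y, ‖χ (g • (k • x - x) - (k • x - x)) - 1‖ ≤ δ) :
    ∀ χ ∈ S, ∀ g k : G, ∀ x ∈ Y, ‖χ (g • (k • x - x) - (k • x - x)) - 1‖ ≤ δ / 2 := by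
  intro χ hχ g k x hx
  set u := k • x - x
  have hmem (n : ℕ) (hn : n * δ ≤ 1 / 4) : n • u ∈ X := by
    refine hX _ fun χ hχ ↦ ?_
    rw [← sub_add_cancel (n • u) (k ^ n • x - x)]
    refine (norm_addChar_add_sub_one_le χ _ _).trans ?_
    have h₁ := norm_addChar_nsmul_sub_sub_one_le (fun g ↦ h χ hχ g k x hx) n
    have h₂ := hS χ hχ (k ^ n) x (hYX hx)
    linarith
  set z := χ (g • u - u) with hz
  have hpow (n : ℕ) (hn : n * δ ≤ 1 / 4) : ‖z ^ n - 1‖ ≤ 1 / 32 := by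
    rw [hz, ← AddChar.map_nsmul_eq_pow, smul_sub, ← smul_comm g n u]
    exact hS χ hχ g _ (hmem n hn)
  set n := ⌊1 / (4 * δ)⌋₊
  have hn_le : n * δ ≤ 1 / 4 := by
    have hfloor : (n : ℝ) ≤ 1 / (4 * δ) := Nat.floor_le (by positivity)
    rw [le_div_iff₀ (by positivity)] at hfloor
    linarith
  have le_hn : 1 / 8 ≤ n * δ := by
    have hfloor : 1 / (4 * δ) < n + 1 := Nat.lt_floor_add_one _
    have hn : (1 : ℝ) ≤ n := by
      refine Nat.one_le_cast.2 (Nat.le_floor ?_)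
      rw [Nat.cast_one, le_div_iff₀ (by positivity)]
      linarith
    rw [div_lt_iff₀ (by positivity)] at hfloor
    nlinarith
  have hgeom : n * ‖z - 1‖ ≤ 1 / 31 := natCast_mul_norm_sub_one_le fun i hi ↦
    hpow i ((mul_le_mul_of_nonneg_right (Nat.cast_le.2 hi) hδ0.le).trans hn_le)
  nlinarith [mul_le_mul_of_nonneg_right le_hn (norm_nonneg (z - 1)),
    mul_le_mul_of_nonneg_left hgeom hδ0.le]

lemma addChar_smul_sub_smul_sub_eq_one (hYX : Y ⊆ X) (hsub : ∀ k : G, ∀ x ∈ Y, k • x - x ∈ X)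
    (hX : ∀ x, (∀ χ ∈ S, ‖χ x - 1‖ ≤ 1 / 2) → x ∈ X)
    (hS : ∀ χ ∈ S, ∀ g : G, ∀ x ∈ X, ‖χ (g • x - x) - 1‖ ≤ 1 / 32) {χ : AddChar V ℂ} (hχ : χ ∈ S)
    (g k : G) {x : V} (hx : x ∈ Y) : χ (g • (k • x - x) - (k • x - x)) = 1 := by
  have hbound (n : ℕ) : ∀ χ ∈ S, ∀ g k : G, ∀ x ∈ Y,
      ‖χ (g • (k • x - x) - (k • x - x)) - 1‖ ≤ 1 / 32 / 2 ^ n := by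
    induction n with
    | zero =>
      intro χ hχ g k x hx
      simpa using hS χ hχ g _ (hsub k x hx)
    | succ n ih =>
      rw [pow_succ, ← div_div]
      refine norm_addChar_smul_sub_halve hYX hX hS (by positivity) ?_ ih
      exact (div_le_self (by norm_num) (one_le_pow₀ one_le_two)).trans (by norm_num)
  rw [← sub_eq_zero, ← norm_le_zero_iff]
  exact ge_of_tendsto' (tendsto_const_nhds.div_atTop
    (tendsto_pow_atTop_atTop_of_one_lt one_lt_two)) fun n ↦ hbound n χ hχ g k x hx

/- Modulo `P`, the map `g ↦ g • x - x` is a homomorphism. -/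
lemma IsQuasirandom.smul_sub_mem {D : ℝ} (h : IsQuasirandom G D) (hD : 1 ≤ D) {P : AddSubgroup V}
    {x : V} (hx : ∀ g k : G, g • (k • x - x) - (k • x - x) ∈ P) (g : G) : g • x - x ∈ P := by
  let f : G →* Multiplicative (V ⧸ P) :=
    { toFun g := .ofAdd ((g • x - x : V) : V ⧸ P)
      map_one' := by simp
      map_mul' a b := by
        rw [← ofAdd_add, ← QuotientAddGroup.mk_add]
        refine congrArg Multiplicative.ofAdd (QuotientAddGroup.eq.2 ?_)
        have hab : -((a * b) • x - x) + (a • x - x + (b • x - x)) =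
            -(a • (b • x - x) - (b • x - x)) := by
          rw [mul_smul, smul_sub a]; abel
        exact hab ▸ neg_mem (hx a b) }
  have hg := DFunLike.congr_fun (h.monoidHom_eq_one hD f) g
  exact (QuotientAddGroup.eq_zero_iff _).1 (Multiplicative.ofAdd.injective hg)

theorem IsQuasirandom.exists_addSubgroup_le_smul_sub_mem [DecidableEq V] {D L : ℝ}
    (h : IsQuasirandom G D) {Y : Finset V} (h0 : 0 ∈ Y) (hneg : -Y = Y) (hY : ∀ g : G, g • Y = Y)
    (hcard : ((Y + Y + (Y + Y) + Y + Y).card : ℝ) ≤ L * Y.card) (hD : 65536 * L ^ 3 ≤ D) :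
    ∃ P : AddSubgroup V, (P : Set V) ⊆ ↑(Y + Y + (Y + Y)) ∧ ∀ g : G, ∀ y ∈ Y, g • y - y ∈ P := by
  have hne : Y.Nonempty := ⟨0, h0⟩
  have hYY : Y + Y ⊆ Y + Y + (Y + Y) :=
    Finset.subset_add_left _ (by simpa using Finset.add_mem_add h0 h0)
  have hcard₂ : ((Y + Y).card : ℝ) ≤ L * Y.card := by
    refine le_trans (Nat.cast_le.2 ?_) hcard
    exact (Finset.card_le_card hYY).trans <|
      (Finset.card_le_card_add_right hne).trans (Finset.card_le_card_add_right hne)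
  have hL : 1 ≤ L := by
    have hle : (Y.card : ℝ) ≤ L * Y.card :=
      (Nat.cast_le.2 (Finset.card_le_card_add_right hne)).trans hcard₂
    exact le_of_mul_le_mul_right (by linarith) (Nat.cast_pos.2 hne.card_pos)
  have hL0 : 0 < L := one_pos.trans_le hL
  have hYX : Y ⊆ Y + Y + (Y + Y) := (Finset.subset_add_left _ h0).trans hYY
  have hsub (k : G) (x : V) (hx : x ∈ Y) : k • x - x ∈ Y + Y + (Y + Y) := by
    refine hYY (sub_eq_add_neg (k • x) x ▸ Finset.add_mem_add ?_ ?_)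
    · exact (smul_mem_iff_of_smul_finset_eq (hY k) x).2 hx
    · exact hneg ▸ Finset.neg_mem_neg hx
  have hX (g : G) : g • (Y + Y + (Y + Y)) = Y + Y + (Y + Y) := by simp_rw [smul_add, hY]
  have hone {χ : AddChar V ℂ} (hχ : χ ∈ largeSpectrum Y L) (g k : G) {x : V} (hx : x ∈ Y) :=
    addChar_smul_sub_smul_sub_eq_one hYX hsub
      (fun x ↦ mem_add_add_of_forall_mem_largeSpectrum hneg hne hL0 hcard₂)
      (fun χ hχ g x ↦ h.norm_addChar_smul_sub_sub_one_le (hYX h0) hne hX hY hL0 hcard hD hχ g)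
      hχ g k hx
  refine ⟨⨅ χ ∈ largeSpectrum Y L, χ.toAddMonoidHom.ker, fun x hx ↦ ?_, fun g y hy ↦ ?_⟩
  · refine mem_add_add_of_forall_mem_largeSpectrum hneg hne hL0 hcard₂ fun χ hχ ↦ ?_
    simp only [AddSubgroup.coe_iInf, Set.mem_iInter] at hx
    have hχx : χ x = 1 := hx χ hχ
    norm_num [hχx]
  · refine h.smul_sub_mem ?_ (fun g k ↦ ?_) g
    · nlinarith [one_le_pow₀ hL (n := 3)]
    · simp only [AddSubgroup.mem_iInf]
      exact fun χ hχ ↦ AddMonoidHom.mem_ker.2 (hone hχ g k hy)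

end Halving

/-! ### Sets of small tripling -/

section Growth

variable {Γ : Type*} [Group Γ] {A : Set Γ}

lemma finite_set_pow (hA : A.Finite) : ∀ k : ℕ, (A ^ k).Finite
  | 0 => by simp
  | k + 1 => pow_succ A k ▸ (finite_set_pow hA k).mul hA

lemma one_mem_sq (hne : A.Nonempty) (hinv : A⁻¹ = A) : (1 : Γ) ∈ A ^ 2 := by
  obtain ⟨a, ha⟩ := hne
  rw [sq]
  exact ⟨a, ha, a⁻¹, hinv ▸ Set.inv_mem_inv.2 ha, mul_inv_cancel a⟩

lemma pow_two_mul_subset (hne : A.Nonempty) (hinv : A⁻¹ = A) {i j : ℕ} (hij : i ≤ j) :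
    A ^ (2 * i) ⊆ A ^ (2 * j) := by
  rw [pow_mul, pow_mul]
  exact Set.pow_subset_pow_right (one_mem_sq hne hinv) hij

lemma mul_mem_pow_add {i j : ℕ} {x y : Γ} (hx : x ∈ A ^ i) (hy : y ∈ A ^ j) :
    x * y ∈ A ^ (i + j) :=
  pow_add A i j ▸ Set.mul_mem_mul hx hy

lemma inv_mem_pow (hinv : A⁻¹ = A) {k : ℕ} {x : Γ} (hx : x ∈ A ^ k) : x⁻¹ ∈ A ^ k := by
  rw [← hinv, inv_pow]
  exact Set.inv_mem_inv.2 hx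

lemma conj_mem_pow (hinv : A⁻¹ = A) {i j : ℕ} {a x : Γ} (ha : a ∈ A ^ i) (hx : x ∈ A ^ j) :
    a * x * a⁻¹ ∈ A ^ (i + j + i) :=
  mul_mem_pow_add (mul_mem_pow_add ha hx) (inv_mem_pow hinv ha)

lemma ncard_coe_pow_inter [DecidableEq Γ] (A : Finset Γ) (J : Subgroup Γ)
    [DecidablePred (· ∈ J)] (k : ℕ) :
    ((A : Set Γ) ^ k ∩ J).ncard = {x ∈ A ^ k | x ∈ J}.card := by
  rw [← Set.ncard_coe_finset, Finset.coe_filter, ← Finset.coe_pow]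
  rfl

/- In a fibre of `(a, x) ↦ a * x` on `A × (A ^ k ∩ J)` the first coordinates lie in a single left
coset of `J`. -/
lemma ncard_mul_ncard_pow_inter_le (hA : A.Finite) (hinv : A⁻¹ = A) (J : Subgroup Γ) (k : ℕ) :
    A.ncard * (A ^ k ∩ J).ncard ≤ (A ^ 2 ∩ J).ncard * (A ^ (k + 1)).ncard := by
  classical
  lift A to Finset Γ using hA
  replace hinv : A⁻¹ = A := Finset.coe_injective (by rw [Finset.coe_inv, hinv])
  rw [ncard_coe_pow_inter, ncard_coe_pow_inter, ← Finset.coe_pow, Set.ncard_coe_finset,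
    Set.ncard_coe_finset, ← Finset.card_product]
  refine Finset.card_le_mul_card_image_of_maps_to (f := fun p : Γ × Γ ↦ p.1 * p.2) ?_ _ ?_
  · rintro ⟨a, x⟩ h
    simp only [Finset.mem_product, Finset.mem_filter] at h
    exact pow_succ' A k ▸ Finset.mul_mem_mul h.1 h.2.1
  intro b _
  obtain h | ⟨⟨a, x⟩, h⟩ := Finset.eq_empty_or_nonempty
    {p ∈ A ×ˢ {x ∈ A ^ k | x ∈ J} | p.1 * p.2 = b}
  · simp [h]
  simp only [Finset.mem_filter, Finset.mem_product] at h
  refine Finset.card_le_card_of_injOn (fun p ↦ a⁻¹ * p.1) ?_ ?_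
  · rintro ⟨c, y⟩ h'
    simp only [Finset.coe_filter, Finset.mem_product, Finset.mem_filter, Set.mem_ofPred_eq] at h' ⊢
    refine ⟨sq A ▸ Finset.mul_mem_mul (hinv ▸ Finset.inv_mem_inv h.1.1) h'.1.1, ?_⟩
    have hcoset : a⁻¹ * c = x * y⁻¹ := by
      rw [inv_mul_eq_iff_eq_mul, ← mul_assoc, h.2, ← h'.2, mul_inv_cancel_right]
    exact hcoset ▸ J.mul_mem h.1.2.2 (J.inv_mem h'.1.2.2)
  · rintro ⟨c, y⟩ h' ⟨c', y'⟩ h'' hcc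
    simp only [Finset.coe_filter, Set.mem_ofPred_eq] at h' h''
    obtain rfl : c = c' := mul_left_cancel hcc
    rw [mul_left_cancel (h'.2.trans h''.2.symm)]

lemma ncard_image_mk'_pow_mul_le (hA : A.Finite) (R : Subgroup Γ) [R.Normal] (m n : ℕ) :
    (QuotientGroup.mk' R '' (A ^ m)).ncard * (A ^ n ∩ R).ncard ≤ (A ^ (m + n)).ncard := by
  classical
  lift A to Finset Γ using hA
  rw [ncard_coe_pow_inter, ← Finset.coe_pow, ← Finset.coe_pow, ← Finset.coe_image,
    Set.ncard_coe_finset, Set.ncard_coe_finset]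
  exact Finset.card_pow_quotient_mul_pow_inter_subgroup_le

lemma ncard_le_ncard_image_mk'_mul (hA : A.Finite) (hinv : A⁻¹ = A) (R : Subgroup Γ) [R.Normal] :
    A.ncard ≤ (QuotientGroup.mk' R '' A).ncard * (A ^ 2 ∩ R).ncard := by
  classical
  lift A to Finset Γ using hA
  rw [ncard_coe_pow_inter, ← Finset.coe_image, Set.ncard_coe_finset, Set.ncard_coe_finset]
  exact Finset.le_card_quotient_mul_sq_inter_subgroup
    (Finset.coe_injective (by rw [Finset.coe_inv, hinv]))

lemma ncard_pow_le_of_tripling {K : ℝ} (hA : A.Finite) (hinv : A⁻¹ = A)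
    (h3 : ((A ^ 3).ncard : ℝ) ≤ K * A.ncard) {k : ℕ} (hk : 1 ≤ k) :
    ((A ^ (k + 2)).ncard : ℝ) ≤ K ^ k * A.ncard := by
  classical
  lift A to Finset Γ using hA
  rw [← Finset.coe_pow, Set.ncard_coe_finset, Set.ncard_coe_finset] at h3 ⊢
  exact Finset.small_pow_of_small_tripling (by lia) h3
    (Finset.coe_injective (by rw [Finset.coe_inv, hinv]))

/-- `A` is a finite nonempty symmetric set with `|A ^ k| ≤ K ^ k |A|` for all `k`. The images in a
quotient group of a set with tripling at most `K` have this property, without loss in `K`. -/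
structure HasSmallPowers (A : Set Γ) (K : ℝ) : Prop where
  finite : A.Finite
  nonempty : A.Nonempty
  inv_eq : A⁻¹ = A
  ncard_pow_le (k : ℕ) : ((A ^ k).ncard : ℝ) ≤ K ^ k * A.ncard

namespace HasSmallPowers

variable {K : ℝ}

lemma ncard_pos (h : HasSmallPowers A K) : (0 : ℝ) < A.ncard :=
  Nat.cast_pos.2 ((Set.ncard_pos h.finite).2 h.nonempty)

lemma one_le (h : HasSmallPowers A K) : 1 ≤ K := by
  refine le_of_mul_le_mul_right ?_ h.ncard_pos
  simpa using h.ncard_pow_le 1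

lemma ncard_pow_inter_le (h : HasSmallPowers A K) (J : Subgroup Γ) (k : ℕ) :
    ((A ^ k ∩ J).ncard : ℝ) ≤ K ^ (k + 1) * (A ^ 2 ∩ J).ncard := by
  refine le_of_mul_le_mul_left ?_ h.ncard_pos
  calc (A.ncard * (A ^ k ∩ J).ncard : ℝ)
      ≤ (A ^ 2 ∩ J).ncard * (A ^ (k + 1)).ncard :=
        mod_cast ncard_mul_ncard_pow_inter_le h.finite h.inv_eq J k
    _ ≤ (A ^ 2 ∩ J).ncard * (K ^ (k + 1) * A.ncard) := by gcongr; exact h.ncard_pow_le _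
    _ = A.ncard * (K ^ (k + 1) * (A ^ 2 ∩ J).ncard) := by ring

lemma natCard_le (h : HasSmallPowers A K) {J : Subgroup Γ} {k : ℕ} (hJ : (J : Set Γ) ⊆ A ^ k) :
    (Nat.card J : ℝ) ≤ K ^ (k + 1) * (A ^ 2 ∩ J).ncard := by
  have := h.ncard_pow_inter_le J k
  rwa [Set.inter_eq_right.2 hJ, ← Nat.card_coe_set_eq] at this

lemma image_mk' (hA : A.Finite) (hne : A.Nonempty) (hinv : A⁻¹ = A)
    (h3 : ((A ^ 3).ncard : ℝ) ≤ K * A.ncard) (R : Subgroup Γ) [R.Normal] :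
    HasSmallPowers (QuotientGroup.mk' R '' A) K := by
  refine ⟨hA.image _, hne.image _, by rw [← Set.image_inv, hinv], fun k ↦ ?_⟩
  obtain rfl | hk := k.eq_zero_or_pos
  · rw [pow_zero, pow_zero, one_mul, ← Set.singleton_one, Set.ncard_singleton]
    exact_mod_cast (Set.ncard_pos (hA.image _)).2 (hne.image _)
  have hR : 0 < (A ^ 2 ∩ R).ncard :=
    (Set.ncard_pos ((finite_set_pow hA 2).subset Set.inter_subset_left)).2
      ⟨1, one_mem_sq hne hinv, R.one_mem⟩
  have hpow := ncard_pow_le_of_tripling hA hinv h3 hk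
  have hK : 0 ≤ K := nonneg_of_mul_nonneg_left ((Nat.cast_nonneg _).trans h3)
    (Nat.cast_pos.2 ((Set.ncard_pos hA).2 hne))
  refine le_of_mul_le_mul_right ?_ (Nat.cast_pos.2 hR)
  rw [← Set.image_pow]
  calc ((QuotientGroup.mk' R '' (A ^ k)).ncard * (A ^ 2 ∩ R).ncard : ℝ)
      ≤ (A ^ (k + 2)).ncard := mod_cast ncard_image_mk'_pow_mul_le hA R k 2
    _ ≤ K ^ k * A.ncard := hpow
    _ ≤ K ^ k * ((QuotientGroup.mk' R '' A).ncard * (A ^ 2 ∩ R).ncard) := by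
      gcongr
      exact_mod_cast ncard_le_ncard_image_mk'_mul hA hinv R
    _ = K ^ k * (QuotientGroup.mk' R '' A).ncard * (A ^ 2 ∩ R).ncard := by ring

end HasSmallPowers

end Growth

lemma IsQuasirandom.inter_pow_three_eq {Γ : Type*} [Group Γ] {G : Subgroup Γ} [Finite G]
    {D c : ℝ} (h : IsQuasirandom G D) {B : Set Γ} (hcard : (Nat.card G : ℝ) ≤ c * (B ∩ G).ncard)
    (hc : c ^ 3 < D) : (B ∩ G) ^ 3 = G := by
  have hG : (0 : ℝ) < c * (B ∩ G).ncard := (Nat.cast_pos.2 Nat.card_pos).trans_le hcard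
  have hc0 : 0 < c := pos_of_mul_pos_left hG (Nat.cast_nonneg _)
  have hB : (0 : ℝ) < (B ∩ G).ncard := pos_of_mul_pos_right hG hc0.le
  refine h.pow_three_eq ((pow_pos hc0 3).trans hc) Set.inter_subset_right ?_
  calc (Nat.card G : ℝ) ^ 3 ≤ (c * (B ∩ G).ncard) ^ 3 := by gcongr
    _ = c ^ 3 * (B ∩ G).ncard ^ 3 := mul_pow ..
    _ < D * (B ∩ G).ncard ^ 3 := by gcongr

/-! ### Covering modulo a central subgroup -/

section Central

variable {Γ : Type*} [Group Γ]

lemma ncard_preimage_subtype (G : Subgroup Γ) (S : Set Γ) :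
    (G.subtype ⁻¹' S).ncard = (S ∩ G).ncard := by
  rw [← Set.ncard_image_of_injective _ G.subtype_injective, Set.image_preimage_eq_inter_range,
    Subgroup.coe_subtype, Subtype.range_coe]

lemma IsQuasirandom.natCard_le_of_central {G M : Subgroup Γ} [Finite G] {D : ℝ}
    (h : IsQuasirandom G D) (hMG : M ≤ G) (hcen : M ≤ Subgroup.centralizer G)
    {B S : Set Γ} (hcov : (G : Set Γ) ⊆ S * M) {c : ℝ} (hc : 0 < c)
    (hgrowth : ((B * S ∩ G).ncard : ℝ) ≤ c * (B ∩ G).ncard) (hB : (B ∩ G).Nonempty)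
    (hD : 2 * c ≤ D) : (Nat.card G : ℝ) ≤ 2 * c * (B ∩ G).ncard := by
  have hZ : M.subgroupOf G ≤ Subgroup.center G := fun m hm ↦ Subgroup.mem_center_iff.2 fun g ↦
    Subtype.ext (Subgroup.mem_centralizer_iff.1 (hcen hm) g g.2)
  have hS : G.subtype ⁻¹' S * (M.subgroupOf G : Set G) = Set.univ := by
    refine Set.eq_univ_iff_forall.2 fun g ↦ ?_
    obtain ⟨s, hs, m, hm, hsm⟩ := Set.mem_mul.1 (hcov g.2)
    have hsG : s ∈ G := by
      rw [eq_mul_inv_of_mul_eq hsm]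
      exact G.mul_mem g.2 (G.inv_mem (hMG hm))
    exact ⟨⟨s, hsG⟩, hs, ⟨m, hMG hm⟩, hm, Subtype.ext hsm⟩
  have hmain := h.card_mul_ncard_le (by linarith) hZ (G.subtype ⁻¹' B) hS
  have hBS : ((G.subtype ⁻¹' B * G.subtype ⁻¹' S).ncard : ℝ) ≤ (B * S ∩ G).ncard := by
    rw [← ncard_preimage_subtype]
    exact_mod_cast Set.ncard_le_ncard (Set.preimage_mul_preimage_subset G.subtype)
  rw [ncard_preimage_subtype] at hmain
  have hb : (0 : ℝ) < (B ∩ G).ncard :=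
    Nat.cast_pos.2 ((Set.ncard_pos ((Set.toFinite (G : Set Γ)).subset Set.inter_subset_right)).2 hB)
  have hD0 : 0 < D := by linarith
  have hle : (Nat.card G : ℝ) ≤ c * ((B ∩ G).ncard + Nat.card G / D) := by
    refine le_of_mul_le_mul_right ?_ hb
    calc _ ≤ _ := hmain
      _ ≤ c * (B ∩ G).ncard * ((B ∩ G).ncard + Nat.card G / D) := by
        gcongr
        exact hBS.trans hgrowth
      _ = _ := by ring
  have hhalf : c * (Nat.card G / D) ≤ (Nat.card G / 2 : ℝ) := by
    rw [mul_div_assoc', div_le_div_iff₀ hD0 two_pos]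
    nlinarith [Nat.cast_nonneg (α := ℝ) (Nat.card G)]
  linarith

lemma HasSmallPowers.inter_pow_three_eq_of_central {A : Set Γ} {K D : ℝ} (h : HasSmallPowers A K)
    (hK : 2 ≤ K) {G M : Subgroup Γ} [Finite G] (hG : IsQuasirandom G D) (hD : K ^ 31 ≤ D)
    (hMG : M ≤ G) (hcen : M ≤ Subgroup.centralizer G) (hcov : (G : Set Γ) ⊆ A ^ 6 * M) :
    (A ^ 2 ∩ G) ^ 3 = G := by
  have hgrowth : ((A ^ 2 * A ^ 6 ∩ G).ncard : ℝ) ≤ K ^ 9 * (A ^ 2 ∩ G).ncard := by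
    rw [← pow_add]
    exact h.ncard_pow_inter_le G 8
  have h9 : 2 * K ^ 9 ≤ K ^ 10 := by
    rw [pow_succ' K 9]
    gcongr
  refine hG.inter_pow_three_eq (c := K ^ 10) ?_ ?_
  · refine (hG.natCard_le_of_central hMG hcen hcov (by positivity) hgrowth
      ⟨1, one_mem_sq h.nonempty h.inv_eq, G.one_mem⟩ ?_).trans (by gcongr)
    exact h9.trans ((pow_le_pow_right₀ (by linarith) (by norm_num)).trans hD)
  · rw [← pow_mul]
    exact (pow_lt_pow_right₀ (by linarith) (by norm_num)).trans_le hD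

end Central

/-! ### Commutators of a quasirandom group with an abelian normal subgroup -/

section Commutators

open scoped commutatorElement

namespace IsQuasirandom

lemma exists_subgroup_smul_div_mem {G V : Type*} [Group G] [CommGroup V] [Finite V]
    [MulDistribMulAction G V] {D L : ℝ} (h : IsQuasirandom G D) {Y : Set V} (h1 : 1 ∈ Y)
    (hinv : Y⁻¹ = Y) (hY : ∀ g : G, g • Y = Y) (hcard : ((Y ^ 6).ncard : ℝ) ≤ L * Y.ncard)
    (hD : 65536 * L ^ 3 ≤ D) :
    ∃ P : Subgroup V, (P : Set V) ⊆ Y ^ 4 ∧ ∀ g : G, ∀ y ∈ Y, g • y / y ∈ P := by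
  classical
  have := Fintype.ofFinite V
  let : DistribMulAction G (Additive V) :=
    { smul := fun g v ↦ .ofMul (g • v.toMul)
      one_smul := one_smul G (α := V)
      mul_smul := mul_smul (β := V)
      smul_zero := smul_one (N := V)
      smul_add := smul_mul' (N := V) }
  let Z : Finset (Additive V) := (Y.toFinset : Finset V)
  have hZ : (Z : Set (Additive V)) = Y := Set.coe_toFinset Y
  have hmem {v : Additive V} : v ∈ Z ↔ v.toMul ∈ Y := Set.mem_toFinset (α := V)
  have h6 : ((Z + Z + (Z + Z) + Z + Z : Finset (Additive V)) : Set (Additive V)) =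
      (Y ^ 6 : Set V) := by
    simp only [Finset.coe_add, hZ, pow_succ (n := 5), pow_succ (n := 4), pow_add Y 2 2, sq]
    rfl
  have h4 : ((Z + Z + (Z + Z) : Finset (Additive V)) : Set (Additive V)) = (Y ^ 4 : Set V) := by
    simp only [Finset.coe_add, hZ, pow_add Y 2 2, sq]
    rfl
  obtain ⟨P, hPY, hP⟩ := h.exists_addSubgroup_le_smul_sub_mem (Y := Z) (L := L)
    (hmem.2 h1)
    (Finset.coe_injective (by rw [Finset.coe_neg, hZ]; exact hinv))
    (fun g ↦ Finset.coe_injective (by rw [Finset.coe_smul_finset, hZ]; exact hY g))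
    (by
      rw [← Set.ncard_coe_finset, ← Set.ncard_coe_finset, h6, hZ]
      exact hcard) hD
  exact ⟨AddSubgroup.toSubgroup' P, h4 ▸ hPY, fun g y hy ↦ hP g y (hmem.2 hy)⟩

open scoped IsMulCommutative in
lemma exists_subgroup_commutatorElement_mem {Γ : Type*} [Group Γ] {G M : Subgroup Γ} [M.Normal]
    [Finite M] [IsMulCommutative M] {D L : ℝ} (h : IsQuasirandom G D) {Y : Set Γ} (hYM : Y ⊆ M)
    (h1 : 1 ∈ Y) (hinv : Y⁻¹ = Y) (hconj : ∀ g ∈ G, ∀ y ∈ Y, g * y * g⁻¹ ∈ Y)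
    (hcard : ((Y ^ 6).ncard : ℝ) ≤ L * Y.ncard) (hD : 65536 * L ^ 3 ≤ D) :
    ∃ P : Subgroup Γ, (P : Set Γ) ⊆ Y ^ 4 ∧ ∀ g ∈ G, ∀ y ∈ Y, ⁅g, y⁆ ∈ P := by
  let : MulDistribMulAction G M :=
    MulDistribMulAction.compHom M ((MulAut.conjNormal (H := M)).comp G.subtype)
  obtain ⟨Y, rfl⟩ := Set.subset_range_iff_exists_image_eq.1
    (hYM.trans Subtype.range_coe.superset : Y ⊆ Set.range M.subtype)
  have hmem {y : M} : (y : Γ) ∈ M.subtype '' Y ↔ y ∈ Y := M.subtype_injective.mem_set_image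
  have hsmul (g : G) : g • Y ⊆ Y := by
    rintro _ ⟨y, hy, rfl⟩
    exact hmem.1 (hconj g g.2 y (hmem.2 hy))
  rw [← Set.image_pow, Set.ncard_image_of_injective _ M.subtype_injective,
    Set.ncard_image_of_injective _ M.subtype_injective] at hcard
  obtain ⟨P, hPY, hP⟩ := h.exists_subgroup_smul_div_mem (hmem.1 h1)
    (M.subtype_injective.image_injective (by rw [Set.image_inv, hinv]))
    (fun g ↦ (hsmul g).antisymm (Set.subset_smul_set_iff.2 (hsmul g⁻¹))) hcard hD
  refine ⟨P.map M.subtype, ?_, ?_⟩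
  · rw [Subgroup.coe_map, ← Set.image_pow]
    exact Set.image_mono hPY
  · rintro g hg _ ⟨y, hy, rfl⟩
    exact ⟨_, hP ⟨g, hg⟩ y hy, by rw [commutatorElement_def, div_eq_mul_inv]; rfl⟩

end IsQuasirandom

end Commutators

section FixedModulo

open scoped commutatorElement

variable {Γ : Type*} [Group Γ] {G M P H : Subgroup Γ}

/-- The subgroup of those elements of the abelian normal subgroup `M` that are fixed, modulo `P`,
by conjugation by every element of `G`; that is, the largest `H ≤ M` with `⁅G, H⁆ ≤ P`. -/
def fixedModulo (G M P : Subgroup Γ) [M.Normal] [IsMulCommutative M] : Subgroup Γ where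
  carrier := {y | y ∈ M ∧ ∀ g ∈ G, ⁅g, y⁆ ∈ P}
  mul_mem' := by
    rintro x y ⟨hx, hxP⟩ ⟨hy, hyP⟩
    refine ⟨M.mul_mem hx hy, fun g hg ↦ ?_⟩
    have hcomm : x * ⁅g, y⁆ = ⁅g, y⁆ * x :=
      setLike_mul_comm (s := M) hx
        (Subgroup.commutator_le_right G M (Subgroup.commutator_mem_commutator hg hy))
    rw [commutatorElement_mul_right_eq_mul_conj, mul_assoc ⁅g, x⁆, hcomm, ← mul_assoc,
      mul_inv_cancel_right]
    exact P.mul_mem (hxP g hg) (hyP g hg)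
  one_mem' := ⟨M.one_mem, fun g _ ↦ by simp⟩
  inv_mem' := by
    rintro x ⟨hx, hxP⟩
    refine ⟨M.inv_mem hx, fun g hg ↦ ?_⟩
    have hcomm : x⁻¹ * ⁅x, g⁆ = ⁅x, g⁆ * x⁻¹ :=
      setLike_mul_comm (s := M) (M.inv_mem hx)
        (Subgroup.commutator_le_left M G (Subgroup.commutator_mem_commutator hx hg))
    rw [commutatorElement_inv_right, hcomm, inv_mul_cancel_right, ← commutatorElement_inv]
    exact P.inv_mem (hxP g hg)

variable [M.Normal] [IsMulCommutative M]

lemma le_fixedModulo_iff : H ≤ fixedModulo G M P ↔ H ≤ M ∧ ⁅G, H⁆ ≤ P :=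
  ⟨fun hH ↦ ⟨fun _ hy ↦ (hH hy).1, Subgroup.commutator_le.2 fun g hg _ hy ↦ (hH hy).2 g hg⟩,
    fun hH _ hy ↦ ⟨hH.1 hy, fun _ hg ↦ hH.2 (Subgroup.commutator_mem_commutator hg hy)⟩⟩

lemma closure_le_fixedModulo_iff {S : Set Γ} (hS : S ⊆ M) :
    Subgroup.closure S ≤ fixedModulo G M P ↔ ∀ g ∈ G, ∀ x ∈ S, ⁅g, x⁆ ∈ P := by
  rw [Subgroup.closure_le]
  exact ⟨fun h g hg x hx ↦ (h hx).2 g hg, fun h x hx ↦ ⟨hS hx, fun g hg ↦ h g hg x hx⟩⟩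

lemma le_normalizer_fixedModulo (hG : H ≤ Subgroup.normalizer G)
    (hP : H ≤ Subgroup.normalizer P) : H ≤ Subgroup.normalizer (fixedModulo G M P) := by
  refine Subgroup.le_normalizer_iff.2 fun γ hγ y hy ↦
    ⟨Subgroup.Normal.conj_mem ‹_› y hy.1 γ, fun g hg ↦ ?_⟩
  have hg' : γ⁻¹ * g * γ ∈ G := by
    simpa using Subgroup.le_normalizer_iff.1 hG γ⁻¹ (H.inv_mem hγ) g hg
  have hconj := Subgroup.le_normalizer_iff.1 hP γ hγ _ (hy.2 _ hg')
  rw [conjugate_commutatorElement] at hconj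
  simpa [mul_assoc] using hconj

instance fixedModulo_normal [G.Normal] [P.Normal] : (fixedModulo G M P).Normal :=
  Subgroup.normalizer_eq_top_iff.1 <| top_unique <|
    le_normalizer_fixedModulo Subgroup.le_normalizer_of_normal Subgroup.le_normalizer_of_normal

open scoped IsMulCommutative in
-- Modulo `P`, the map `g ↦ ⁅g, x⁆` is a homomorphism from `G` to the abelian group `M ⧸ P`.
lemma commutator_le_of_commutator_commutator_le [Group.IsPerfect G] (hHM : H ≤ M)
    (hP : ⁅G, ⁅G, H⁆⁆ ≤ P) : ⁅G, H⁆ ≤ P := by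
  refine Subgroup.commutator_le.2 fun g hg x hx ↦ ?_
  have hmem (g : G) : ⁅(g : Γ), x⁆ ∈ M :=
    Subgroup.commutator_le_right G M (Subgroup.commutator_mem_commutator g.2 (hHM hx))
  let c (g : G) : M := ⟨⁅(g : Γ), x⁆, hmem g⟩
  have hc (a b : G) : c (a * b) = ⟨⁅(a : Γ), c b⁆, Subgroup.commutator_le_right G M
      (Subgroup.commutator_mem_commutator a.2 (hmem b))⟩ * (c b * c a) :=
    Subtype.ext (by simp [c, commutatorElement_def, mul_assoc])
  let f : G →* M ⧸ P.subgroupOf M := MonoidHom.mk' (fun g ↦ c g) <| by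
    intro a b
    have hab := hP (Subgroup.commutator_mem_commutator a.2
      (Subgroup.commutator_mem_commutator b.2 hx))
    rw [hc, QuotientGroup.mk_mul, (QuotientGroup.eq_one_iff _).2 (Subgroup.mem_subgroupOf.2 hab),
      one_mul, QuotientGroup.mk_mul, mul_comm]
  have hf : f ⟨g, hg⟩ = 1 := Abelianization.commutator_subset_ker f
    (Group.IsPerfect.commutator_eq_top (G := G) ▸ Subgroup.mem_top _)
  exact Subgroup.mem_subgroupOf.1 ((QuotientGroup.eq_one_iff _).1 hf)

lemma IsQuasirandom.commutator_le_of_relIndex_le {Q : Subgroup Γ} {D : ℝ}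
    (h : IsQuasirandom G D) (hQ : G ≤ Subgroup.normalizer Q) (hH : G ≤ Subgroup.normalizer H)
    [Q.IsFiniteRelIndex H] (hD : (Q.relIndex H : ℝ) ≤ D) : ⁅G, H⁆ ≤ Q := by
  let : MulDistribMulAction G H :=
    MulDistribMulAction.compHom H (H.normalizerMonoidHom.comp (Subgroup.inclusion hH))
  have hsmul (g : G) (x : H) : ((g • x : H) : Γ) = g * x * (g : Γ)⁻¹ := rfl
  have : MulAction.QuotientAction G (Q.subgroupOf H) := by
    refine ⟨fun g x y hxy ↦ ?_⟩
    rw [← smul_inv', ← smul_mul', Subgroup.mem_subgroupOf, hsmul]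
    exact Subgroup.le_normalizer_iff.1 hQ g g.2 _ hxy
  refine Subgroup.commutator_le.2 fun g hg x hx ↦ ?_
  have hfix := h.smul_eq (X := H ⧸ Q.subgroupOf H) hD ⟨g, hg⟩ (QuotientGroup.mk ⟨x, hx⟩⁻¹)
  rw [MulAction.Quotient.smul_mk, QuotientGroup.eq] at hfix
  simpa [Subgroup.mem_subgroupOf, hsmul, commutatorElement_def, mul_assoc] using hfix

end FixedModulo

section NormalAbelian

open scoped commutatorElement

variable {Γ : Type*} [Group Γ] {A : Set Γ} {K D : ℝ} {G M : Subgroup Γ}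

lemma normal_of_conj_mem (hinv : A⁻¹ = A) (hgen : Subgroup.closure A = ⊤) {H : Subgroup Γ}
    (hH : ∀ a ∈ A, ∀ x ∈ H, a * x * a⁻¹ ∈ H) : H.Normal := by
  refine Subgroup.normalizer_eq_top_iff.1 (top_unique (hgen ▸ (Subgroup.closure_le _).2 ?_))
  refine fun a ha ↦ Subgroup.mem_normalizer_iff.2 fun x ↦ ⟨hH a ha x, fun hx ↦ ?_⟩
  simpa [mul_assoc] using hH a⁻¹ (Set.mem_inv.1 (hinv.symm ▸ ha)) _ hx

lemma HasSmallPowers.relIndex_le (h : HasSmallPowers A K) {H Q : Subgroup Γ} {k : ℕ}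
    (hH : (H : Set Γ) ⊆ A ^ k) (hQ : A ^ 2 ∩ H ⊆ Q) : (Q.relIndex H : ℝ) ≤ K ^ (k + 1) := by
  have := ((finite_set_pow h.finite k).subset hH).to_subtype
  have hcard : Nat.card (Q.subgroupOf H) * Q.relIndex H = Nat.card H := Subgroup.card_mul_index _
  have hle : (A ^ 2 ∩ H).ncard ≤ Nat.card (Q.subgroupOf H) := by
    rw [← Subgroup.card_map_of_injective H.subtype_injective, Subgroup.subgroupOf_map_subtype,
      ← SetLike.coe_sort_coe, Nat.card_coe_set_eq]
    exact Set.ncard_le_ncard (Set.subset_inter hQ Set.inter_subset_right)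
      ((Set.toFinite (H : Set Γ)).inter_of_right _)
  have hpos : (0 : ℝ) < Nat.card (Q.subgroupOf H) := Nat.cast_pos.2 Nat.card_pos
  have hK : 0 ≤ K ^ (k + 1) := pow_nonneg (zero_le_one.trans h.one_le) _
  refine le_of_mul_le_mul_left ?_ hpos
  calc (Nat.card (Q.subgroupOf H) : ℝ) * Q.relIndex H = Nat.card H := by exact_mod_cast hcard
    _ ≤ K ^ (k + 1) * (A ^ 2 ∩ H).ncard := h.natCard_le hH
    _ ≤ K ^ (k + 1) * Nat.card (Q.subgroupOf H) := by gcongr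
    _ = Nat.card (Q.subgroupOf H) * K ^ (k + 1) := mul_comm _ _

lemma HasSmallPowers.ncard_pow_le_of_subset (h : HasSmallPowers A K) [Finite M] {Y : Set Γ}
    {k n : ℕ} (hYA : Y ⊆ A ^ k) (hYM : Y ⊆ M) (hAY : A ^ 2 ∩ M ⊆ Y) (hn : n ≠ 0) :
    ((Y ^ n).ncard : ℝ) ≤ K ^ (k * n + 1) * Y.ncard := by
  have hK := zero_le_one.trans h.one_le
  have hMfin := Set.toFinite (M : Set Γ)
  have hYn : Y ^ n ⊆ A ^ (k * n) ∩ M := by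
    refine Set.subset_inter ?_ ((Set.pow_subset_pow_left hYM).trans_eq (coe_set_pow hn M))
    exact pow_mul A k n ▸ Set.pow_subset_pow_left hYA
  calc ((Y ^ n).ncard : ℝ) ≤ (A ^ (k * n) ∩ M).ncard :=
        mod_cast Set.ncard_le_ncard hYn (hMfin.inter_of_right _)
    _ ≤ K ^ (k * n + 1) * (A ^ 2 ∩ M).ncard := h.ncard_pow_inter_le M _
    _ ≤ K ^ (k * n + 1) * Y.ncard := by
        gcongr
        exact hMfin.subset hYM

lemma image2_conj_subset_pow [IsMulCommutative M] (hinv : A⁻¹ = A) {i j : ℕ}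
    (hcov : (G : Set Γ) ⊆ A ^ i * M) :
    Set.image2 (fun g x ↦ g * x * g⁻¹) G (A ^ j ∩ M) ⊆ A ^ (i + j + i) := by
  rintro _ ⟨g, hg, x, hx, rfl⟩
  obtain ⟨a, ha, m, hm, rfl⟩ := hcov hg
  have hmx : m * x = x * m := setLike_mul_comm hm hx.2
  have : a * m * x * (a * m)⁻¹ = a * x * a⁻¹ := by
    rw [mul_assoc a m x, hmx]
    group
  simpa only [this] using conj_mem_pow hinv ha hx.1

lemma HasSmallPowers.commutator_closure_subset (h : HasSmallPowers A K) [M.Normal] [Finite M]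
    [IsMulCommutative M] (hG : IsQuasirandom G D) (hcov : (G : Set Γ) ⊆ A ^ 6 * M)
    (hD : 65536 * (K ^ 181) ^ 3 ≤ D) :
    ((⁅G, Subgroup.closure (A ^ 18 ∩ M)⁆ : Subgroup Γ) : Set Γ) ⊆ A ^ 120 := by
  let Y : Set Γ := Set.image2 (fun g x ↦ g * x * g⁻¹) G (A ^ 18 ∩ M)
  have hYM : Y ⊆ M := Set.image2_subset_iff.2 fun g _ x hx ↦
    Subgroup.Normal.conj_mem ‹_› x hx.2 g
  have hY30 : Y ⊆ A ^ 30 := image2_conj_subset_pow h.inv_eq hcov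
  have hAY : A ^ 18 ∩ M ⊆ Y := fun x hx ↦ ⟨1, G.one_mem, x, hx, by simp⟩
  have h2Y : A ^ 2 ∩ M ⊆ Y := (Set.inter_subset_inter_left _ (pow_two_mul_subset (i := 1) (j := 9)
    h.nonempty h.inv_eq (by norm_num))).trans hAY
  have hYinv : Y⁻¹ = Y := by
    refine Set.inv_eq_self_iff_inv_subset.2 ?_
    rintro y ⟨g, hg, x, hx, hxy⟩
    refine ⟨g, hg, x⁻¹, ⟨inv_mem_pow h.inv_eq hx.1, M.inv_mem hx.2⟩, ?_⟩
    rw [← inv_inv y, ← hxy]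
    group
  have hYconj : ∀ g ∈ G, ∀ y ∈ Y, g * y * g⁻¹ ∈ Y := by
    rintro k hk _ ⟨g, hg, x, hx, rfl⟩
    exact ⟨k * g, G.mul_mem hk hg, x, hx, by group⟩
  obtain ⟨P, hPY, hP⟩ := hG.exists_subgroup_commutatorElement_mem hYM
    (h2Y ⟨one_mem_sq h.nonempty h.inv_eq, M.one_mem⟩) hYinv hYconj
    (h.ncard_pow_le_of_subset hY30 hYM h2Y (by norm_num)) hD
  have hLP : ⁅G, Subgroup.closure (A ^ 18 ∩ M)⁆ ≤ P :=
    (le_fixedModulo_iff.1 ((closure_le_fixedModulo_iff Set.inter_subset_right).2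
      fun g hg x hx ↦ hP g hg x (hAY hx))).2
  calc ((⁅G, Subgroup.closure (A ^ 18 ∩ M)⁆ : Subgroup Γ) : Set Γ) ⊆ P := hLP
    _ ⊆ Y ^ 4 := hPY
    _ ⊆ (A ^ 30) ^ 4 := Set.pow_subset_pow_left hY30
    _ = A ^ 120 := (pow_mul A 30 4).symm

lemma HasSmallPowers.commutator_closure_normal (h : HasSmallPowers A K)
    (hgen : Subgroup.closure A = ⊤) [G.Normal] [M.Normal] [Finite M] [IsMulCommutative M]
    [Group.IsPerfect G] (hG : IsQuasirandom G D) (hD : K ^ 123 ≤ D)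
    (hL : ((⁅G, Subgroup.closure (A ^ 18 ∩ M)⁆ : Subgroup Γ) : Set Γ) ⊆ A ^ 120) :
    ⁅G, Subgroup.closure (A ^ 18 ∩ M)⁆.Normal := by
  set H := Subgroup.closure (A ^ 18 ∩ M)
  have hHM : H ≤ M := (Subgroup.closure_le _).2 Set.inter_subset_right
  have hHfix : H ≤ fixedModulo G M ⁅G, H⁆ := le_fixedModulo_iff.2 ⟨hHM, le_rfl⟩
  refine normal_of_conj_mem h.inv_eq hgen fun a ha x hx ↦ ?_
  let H' := H.map (MulAut.conj a : Γ →* Γ)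
  have hmap : ⁅G, H⁆.map (MulAut.conj a : Γ →* Γ) = ⁅G, H'⁆ := by
    rw [Subgroup.map_commutator, Subgroup.Normal.map_conj_eq]
  have hH'M : H' ≤ M := (Subgroup.map_mono hHM).trans_eq (Subgroup.Normal.map_conj_eq M a)
  have hL'M : ⁅G, H'⁆ ≤ M := (Subgroup.commutator_mono le_rfl hH'M).trans
    (Subgroup.commutator_le_right G M)
  have hL' : ((⁅G, H'⁆ : Subgroup Γ) : Set Γ) ⊆ A ^ 122 := by
    rw [← hmap]
    rintro _ ⟨y, hy, rfl⟩
    exact conj_mem_pow (i := 1) h.inv_eq (by simpa using ha) (hL hy)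
  have : Finite (⁅G, H'⁆ : Subgroup Γ) := (Set.toFinite (M : Set Γ)).subset hL'M
  have : (fixedModulo G M ⁅G, H⁆).IsFiniteRelIndex ⁅G, H'⁆ := ⟨Subgroup.index_ne_zero_of_finite⟩
  have hfix : ⁅G, ⁅G, H'⁆⁆ ≤ fixedModulo G M ⁅G, H⁆ := by
    refine hG.commutator_le_of_relIndex_le ?_ ?_ ((h.relIndex_le hL' ?_).trans hD)
    · exact le_normalizer_fixedModulo Subgroup.le_normalizer
        (Subgroup.normalizer_commutator_ge_left _ _)
    · exact Subgroup.normalizer_commutator_ge_left _ _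
    · exact fun y hy ↦ hHfix (Subgroup.subset_closure ⟨pow_two_mul_subset (i := 1) (j := 9)
        h.nonempty h.inv_eq (by norm_num) hy.1, hL'M hy.2⟩)
  have hle : ⁅G, H'⁆ ≤ ⁅G, H⁆ := commutator_le_of_commutator_commutator_le hH'M <|
    commutator_le_of_commutator_commutator_le hL'M (le_fixedModulo_iff.1 hfix).2
  exact hle (hmap ▸ Subgroup.mem_map_of_mem _ hx)

end NormalAbelian

section AbelianCase

open scoped commutatorElement

variable {Γ : Type*} [Group Γ] {A : Set Γ} {K D : ℝ} {G M J : Subgroup Γ}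

lemma exists_subgroup_coe_eq_mul [J.Normal] {B : Set Γ} (hB : B.Nonempty) (hinv : B⁻¹ = B)
    (hmul : B * B ⊆ B * J) : ∃ E : Subgroup Γ, (E : Set Γ) = B * J := by
  have hclosed : B * J * (B * J) ⊆ B * J := by
    calc B * J * (B * J) = B * B * (J * J) := by
          rw [mul_assoc, ← mul_assoc (J : Set Γ), ← J.set_mul_normal_comm, mul_assoc B (J : Set Γ),
            ← mul_assoc]
      _ ⊆ B * J * (J * J) := Set.mul_subset_mul_right hmul
      _ = B * J := by simp [mul_assoc]
  refine ⟨{ carrier := B * J, mul_mem' := fun hx hy ↦ hclosed ⟨_, hx, _, hy, rfl⟩,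
            one_mem' := ?_, inv_mem' := fun {x} hx ↦ ?_ }, rfl⟩
  · obtain ⟨b, hb⟩ := hB
    have hb' : b⁻¹ ∈ B := hinv ▸ Set.inv_mem_inv.2 hb
    simpa using hmul ⟨b, hb, b⁻¹, hb', rfl⟩
  · have : (B * (J : Set Γ))⁻¹ = B * J := by
      rw [_root_.mul_inv_rev, hinv, inv_coe_set, J.set_mul_normal_comm]
    exact this ▸ Set.inv_mem_inv.2 hx

lemma pow_inter_subset_mul (hne : A.Nonempty) (hinv : A⁻¹ = A) (hMG : M ≤ G)
    (hcov : (G : Set Γ) ⊆ A ^ 6 * M) (hJ : A ^ 18 ∩ M ⊆ J) {i : ℕ} (hi : i ≤ 6) :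
    A ^ (2 * i) ∩ G ⊆ (A ^ 6 ∩ G) * J := by
  rintro x ⟨hxA, hxG⟩
  obtain ⟨a, ha, m, hm, rfl⟩ := hcov hxG
  refine ⟨a, ⟨ha, (G.mul_mem_cancel_right (hMG hm)).1 hxG⟩, m, hJ ⟨?_, hm⟩, rfl⟩
  have hmA : m ∈ A ^ (6 + 2 * i) := by
    simpa using mul_mem_pow_add (inv_mem_pow hinv ha) hxA
  exact pow_two_mul_subset (i := 3 + i) (j := 9) hne hinv (by lia) (by convert hmA using 2; ring)

lemma exists_normal_coe_eq_mul (hne : A.Nonempty) (hinv : A⁻¹ = A)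
    (hgen : Subgroup.closure A = ⊤) [G.Normal] [J.Normal] (hMG : M ≤ G)
    (hcov : (G : Set Γ) ⊆ A ^ 6 * M) (hJ : A ^ 18 ∩ M ⊆ J) :
    ∃ E : Subgroup Γ, E.Normal ∧ (E : Set Γ) = (A ^ 6 ∩ G) * J := by
  have hsub {i : ℕ} (hi : i ≤ 6) := pow_inter_subset_mul hne hinv hMG hcov hJ hi
  have h1 : (1 : Γ) ∈ A ^ 6 ∩ G :=
    ⟨pow_two_mul_subset (i := 1) (j := 3) hne hinv (by norm_num) (one_mem_sq hne hinv), G.one_mem⟩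
  have hinv6 : (A ^ 6 ∩ (G : Set Γ))⁻¹ = A ^ 6 ∩ G := by
    rw [Set.inter_inv, ← inv_pow, hinv, inv_coe_set]
  have hmul6 : (A ^ 6 ∩ (G : Set Γ)) * (A ^ 6 ∩ G) ⊆ A ^ 12 ∩ G := Set.mul_subset_iff.2
    fun x hx y hy ↦ ⟨pow_add A 6 6 ▸ Set.mul_mem_mul hx.1 hy.1, G.mul_mem hx.2 hy.2⟩
  obtain ⟨E, hE⟩ := exists_subgroup_coe_eq_mul ⟨1, h1⟩ hinv6 (hmul6.trans (hsub le_rfl))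
  refine ⟨E, normal_of_conj_mem hinv hgen fun a ha x hx ↦ ?_, hE⟩
  have hJE : (J : Set Γ) ⊆ E := hE ▸ Set.subset_mul_right _ h1
  have hBE : (A ^ 8 ∩ G : Set Γ) ⊆ E := hE ▸ hsub (i := 4) (by norm_num)
  obtain ⟨b, ⟨hb, hbG⟩, j, hj, rfl⟩ : x ∈ (A ^ 6 ∩ (G : Set Γ)) * J := hE ▸ hx
  have hab : a * b * a⁻¹ ∈ E :=
    hBE ⟨conj_mem_pow (i := 1) hinv (by simpa using ha) hb, ‹G.Normal›.conj_mem b hbG a⟩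
  simpa [mul_assoc] using E.mul_mem hab (hJE (‹J.Normal›.conj_mem j hj a))

lemma commutator_le_of_subset_mul [IsMulCommutative M] {E : Subgroup Γ} [E.Normal]
    (hGEM : (G : Set Γ) ⊆ E * M) : ⁅G, M⁆ ≤ E := by
  refine Subgroup.commutator_le.2 fun g hg m hm ↦ ?_
  obtain ⟨a, ha, m', hm', rfl⟩ := hGEM hg
  have hcomm : m' * m * m'⁻¹ = m := mul_inv_eq_iff_eq_mul.2 (setLike_mul_comm (s := M) hm' hm)
  have : ⁅a * m', m⁆ = a * (m * a⁻¹ * m⁻¹) := by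
    calc ⁅a * m', m⁆ = a * (m' * m * m'⁻¹) * a⁻¹ * m⁻¹ := by group
      _ = a * (m * a⁻¹ * m⁻¹) := by rw [hcomm]; group
  exact this ▸ E.mul_mem ha (‹E.Normal›.conj_mem _ (E.inv_mem ha) m)

-- Modulo `J` the set `A ^ 6 ∩ G` is a normal subgroup of `Γ` supplementing `M` in `G`, so it
-- contains `⁅G, M⁆ = M`.
lemma le_of_pow_inter_subset (hne : A.Nonempty) (hinv : A⁻¹ = A)
    (hgen : Subgroup.closure A = ⊤) [G.Normal] [IsMulCommutative M] [J.Normal]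
    (hMG : M ≤ G) (hGM : M ≤ ⁅G, M⁆) (hcov : (G : Set Γ) ⊆ A ^ 6 * M) (hJM : J ≤ M)
    (hJ : A ^ 18 ∩ M ⊆ J) : M ≤ J := by
  obtain ⟨E, _, hE⟩ := exists_normal_coe_eq_mul hne hinv hgen hMG hcov hJ
  have hGEM : (G : Set Γ) ⊆ E * M := fun g hg ↦ by
    obtain ⟨a, ha, m, hm, rfl⟩ := hcov hg
    have haG : a ∈ G := (G.mul_mem_cancel_right (hMG hm)).1 hg
    exact ⟨a, hE ▸ Set.subset_mul_left _ J.one_mem ⟨ha, haG⟩, m, hm, rfl⟩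
  intro m hm
  obtain ⟨a, ha, j, hj, rfl⟩ : m ∈ (A ^ 6 ∩ (G : Set Γ)) * J :=
    hE ▸ commutator_le_of_subset_mul hGEM (hGM hm)
  refine J.mul_mem (hJ ⟨?_, (M.mul_mem_cancel_right (hJM hj)).1 hm⟩) hj
  exact pow_two_mul_subset (i := 3) (j := 9) hne hinv (by norm_num) ha.1

lemma HasSmallPowers.inter_pow_three_eq_of_le_commutator (h : HasSmallPowers A K) (hK : 2 ≤ K)
    (hgen : Subgroup.closure A = ⊤) [Finite G] [G.Normal] [M.Normal] [IsMulCommutative M]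
    (hG : IsQuasirandom G D) (hD : K ^ 600 ≤ D) (hMG : M ≤ G) (hGM : M ≤ ⁅G, M⁆)
    (hcov : (G : Set Γ) ⊆ A ^ 6 * M) : (A ^ 2 ∩ G) ^ 3 = (G : Set Γ) := by
  have := Finite.of_injective _ (Subgroup.inclusion_injective hMG)
  have hpow {k : ℕ} (hk : k ≤ 600) : K ^ k ≤ D := (pow_le_pow_right₀ h.one_le hk).trans hD
  have := hG.isPerfect (hpow (Nat.zero_le _) |>.trans_eq' (pow_zero K).symm)
  have hKD : 65536 * (K ^ 181) ^ 3 ≤ D := by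
    calc 65536 * (K ^ 181) ^ 3 = 2 ^ 16 * K ^ 543 := by norm_num [← pow_mul]
      _ ≤ K ^ 16 * K ^ 543 := by gcongr
      _ = K ^ 559 := (pow_add K 16 543).symm
      _ ≤ D := hpow (by norm_num)
  have hL := h.commutator_closure_subset hG hcov hKD
  have := h.commutator_closure_normal hgen hG (hpow (by norm_num)) hL
  set L := ⁅G, Subgroup.closure (A ^ 18 ∩ M)⁆
  have hfix : Subgroup.closure (A ^ 18 ∩ M) ≤ fixedModulo G M L :=
    le_fixedModulo_iff.2 ⟨(Subgroup.closure_le _).2 Set.inter_subset_right, le_rfl⟩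
  have hML : M ≤ L := hGM.trans <| (le_fixedModulo_iff.1 (le_of_pow_inter_subset h.nonempty h.inv_eq
    hgen hMG hGM hcov (fun _ hy ↦ hy.1) (Subgroup.subset_closure.trans hfix))).2
  have hGA : (G : Set Γ) ⊆ A ^ 126 := by
    calc (G : Set Γ) ⊆ A ^ 6 * M := hcov
      _ ⊆ A ^ 6 * A ^ 120 := Set.mul_subset_mul_left ((SetLike.coe_subset_coe.2 hML).trans hL)
      _ = A ^ 126 := (pow_add A 6 120).symm
  refine hG.inter_pow_three_eq (h.natCard_le hGA) ?_
  rw [← pow_mul]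
  exact (pow_lt_pow_right₀ (by linarith) (by norm_num)).trans_le hD

end AbelianCase

/-! ### Tripling less than two -/

section SmallTripling

variable {Γ : Type*} [Group Γ] {A : Set Γ} {G : Subgroup Γ}

-- For `u, v ∈ A ^ 2` the translates `u⁻¹ • A` and `v • A` both lie in `A ^ 3`, so they meet.
lemma sq_mul_sq_subset_sq (hA : A.Finite) (hinv : A⁻¹ = A) (h3 : (A ^ 3).ncard < 2 * A.ncard) :
    A ^ 2 * A ^ 2 ⊆ A ^ 2 := by
  refine Set.mul_subset_iff.2 fun u hu v hv ↦ ?_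
  have hsub {w : Γ} (hw : w ∈ A ^ 2) : w • A ⊆ A ^ 3 :=
    pow_succ A 2 ▸ Set.smul_set_subset_smul hw
  have hmeet : ¬Disjoint (u⁻¹ • A) (v • A) := fun hdisj ↦ by
    have hcard := Set.ncard_union_eq hdisj hA.smul_set hA.smul_set
    rw [Set.ncard_smul_set, Set.ncard_smul_set] at hcard
    have hle := Set.ncard_le_ncard (Set.union_subset (hsub (inv_mem_pow hinv hu)) (hsub hv))
      (finite_set_pow hA 3)
    lia
  obtain ⟨_, ⟨a, ha, rfl⟩, b, hb, hab⟩ := Set.not_disjoint_iff.1 hmeet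
  have huv : u * v = a * b⁻¹ := by
    rw [eq_mul_inv_iff_mul_eq, mul_assoc, ← eq_inv_mul_iff_mul_eq]
    exact hab
  exact huv ▸ sq A ▸ Set.mul_mem_mul ha (hinv ▸ Set.inv_mem_inv.2 hb)

lemma exists_subgroup_coe_eq_sq (hA : A.Finite) (hne : A.Nonempty) (hinv : A⁻¹ = A)
    (h3 : (A ^ 3).ncard < 2 * A.ncard) : ∃ H : Subgroup Γ, (H : Set Γ) = A ^ 2 :=
  ⟨{ carrier := A ^ 2
     mul_mem' := fun hx hy ↦ sq_mul_sq_subset_sq hA hinv h3 (Set.mul_mem_mul hx hy)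
     one_mem' := one_mem_sq hne hinv
     inv_mem' := inv_mem_pow hinv }, rfl⟩

lemma isCyclic_quotient_of_coe_eq_sq {H : Subgroup Γ} [H.Normal] (hne : A.Nonempty)
    (hinv : A⁻¹ = A) (hgen : Subgroup.closure A = ⊤) (hH : (H : Set Γ) = A ^ 2) :
    IsCyclic (Γ ⧸ H) := by
  obtain ⟨a, ha⟩ := hne
  refine isCyclic_iff_exists_zpowers_eq_top.2 ⟨a, top_unique ?_⟩
  rw [← Subgroup.map_top_of_surjective _ (QuotientGroup.mk'_surjective H), ← hgen,
    Subgroup.map_le_iff_le_comap, Subgroup.closure_le]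
  intro b hb
  have hab : a⁻¹ * b ∈ H := by
    rw [← SetLike.mem_coe, hH, sq]
    exact Set.mul_mem_mul (hinv ▸ Set.inv_mem_inv.2 ha) hb
  exact (QuotientGroup.eq.2 hab : (a : Γ ⧸ H) = b) ▸ Subgroup.mem_zpowers _

lemma subset_sq_of_isPerfect [Group.IsPerfect G] (hA : A.Finite) (hne : A.Nonempty)
    (hinv : A⁻¹ = A) (hgen : Subgroup.closure A = ⊤) (h3 : (A ^ 3).ncard < 2 * A.ncard) :
    (G : Set Γ) ⊆ A ^ 2 := by
  obtain ⟨H, hH⟩ := exists_subgroup_coe_eq_sq hA hne hinv h3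
  have : H.Normal := by
    refine normal_of_conj_mem hinv hgen fun a ha x hx ↦ ?_
    rw [← SetLike.mem_coe, hH] at hx ⊢
    refine sq_mul_sq_subset_sq hA hinv h3 (pow_add A 2 2 ▸ ?_)
    exact conj_mem_pow (i := 1) hinv (by simpa using ha) hx
  have := isCyclic_quotient_of_coe_eq_sq hne hinv hgen hH
  have hcomm : commutator Γ ≤ H := Subgroup.Normal.quotient_commutative_iff_commutator_le.1
    IsCyclic.isMulCommutative
  rw [← hH, SetLike.coe_subset_coe, ← Subgroup.commutator_eq_self (H := G)]
  exact (Subgroup.commutator_mono le_top le_top).trans hcomm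

end SmallTripling

/-! ### Descent along a solvable normal subgroup -/

section Descent

variable {Γ : Type*} [Group Γ] {A : Set Γ} {K D : ℝ} {G R M : Subgroup Γ}

lemma coe_map_mk'_subset_pow_six_mul (hcov : (G : Set Γ) ⊆ (A ^ 2 ∩ G) ^ 3 * R) (M : Subgroup Γ)
    [M.Normal] : (G.map (QuotientGroup.mk' M) : Set (Γ ⧸ M)) ⊆
      (QuotientGroup.mk' M '' A) ^ 6 * R.map (QuotientGroup.mk' M) := by
  have hpow : (A ^ 2 ∩ G) ^ 3 ⊆ A ^ 6 :=
    (Set.pow_subset_pow_left Set.inter_subset_left).trans_eq (pow_mul A 2 3).symm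
  rw [Subgroup.coe_map, Subgroup.coe_map, ← Set.image_pow, ← Set.image_mul]
  exact Set.image_mono (hcov.trans (Set.mul_subset_mul_right hpow))

lemma subset_pow_three_mul_of_map_mk' [M.Normal] (hMG : M ≤ G)
    (h : ((QuotientGroup.mk' M '' A) ^ 2 ∩ (G.map (QuotientGroup.mk' M) : Set (Γ ⧸ M))) ^ 3 =
      G.map (QuotientGroup.mk' M)) : (G : Set Γ) ⊆ (A ^ 2 ∩ G) ^ 3 * M := by
  have hlift : (QuotientGroup.mk' M '' A) ^ 2 ∩ (G.map (QuotientGroup.mk' M) : Set (Γ ⧸ M)) ⊆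
      QuotientGroup.mk' M '' (A ^ 2 ∩ G) := by
    rw [← Set.image_pow]
    rintro _ ⟨⟨a, ha, rfl⟩, g, hg, hga⟩
    refine ⟨a, ⟨ha, ?_⟩, rfl⟩
    simpa using G.mul_mem hg (hMG (QuotientGroup.eq.1 hga))
  intro g hg
  have hgmap : QuotientGroup.mk' M g ∈ (G.map (QuotientGroup.mk' M) : Set (Γ ⧸ M)) := ⟨g, hg, rfl⟩
  obtain ⟨a, ha, hag⟩ := Set.image_pow (QuotientGroup.mk' M) _ 3 ▸
    Set.pow_subset_pow_left hlift (h.symm ▸ hgmap)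
  exact ⟨a, ha, a⁻¹ * g, QuotientGroup.eq.1 hag, mul_inv_cancel_left a g⟩

lemma le_centralizer_map_mk' [R.Normal] [G.Normal] : R.map (QuotientGroup.mk' ⁅G, R⁆) ≤
    Subgroup.centralizer (G.map (QuotientGroup.mk' ⁅G, R⁆) : Set (Γ ⧸ ⁅G, R⁆)) := by
  refine Subgroup.commutator_eq_bot_iff_le_centralizer.1 ((Subgroup.commutator_comm _ _).trans ?_)
  rw [← Subgroup.map_commutator, QuotientGroup.map_mk'_self]

lemma commutator_lt_of_isSolvable [Group.IsSolvable R] (hR : R ≠ ⊥) : ⁅R, R⁆ < R := by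
  have := (Subgroup.nontrivial_iff_ne_bot R).2 hR
  have hlt := Subgroup.map_subtype_lt_map_subtype.2
    (Group.IsSolvable.commutator_lt_top_of_nontrivial R)
  rwa [R.map_subtype_commutator, ← MonoidHom.range_eq_map, R.range_subtype] at hlt

lemma subset_pow_three_mul_of_subset_mul (hne : A.Nonempty) (hinv : A⁻¹ = A) (hRG : R ≤ G)
    (hcov : (G : Set Γ) ⊆ A * R) : (G : Set Γ) ⊆ (A ^ 2 ∩ G) ^ 3 * R := by
  obtain ⟨b, hb, r, hr, hbr : b * r = 1⟩ := hcov G.one_mem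
  have hbR : b ∈ R := eq_inv_of_mul_eq_one_left hbr ▸ R.inv_mem hr
  rintro _ hg
  obtain ⟨a, ha, s, hs, rfl⟩ := hcov hg
  have haG : a ∈ G := (G.mul_mem_cancel_right (hRG hs)).1 hg
  have hab : a * b ∈ A ^ 2 ∩ G :=
    ⟨sq A ▸ Set.mul_mem_mul ha hb, G.mul_mem haG (hRG hbR)⟩
  have h1 : (1 : Γ) ∈ A ^ 2 ∩ G := ⟨one_mem_sq hne hinv, G.one_mem⟩
  exact ⟨a * b, Set.subset_pow h1 three_ne_zero hab, b⁻¹ * s, R.mul_mem (R.inv_mem hbR) hs,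
    by group⟩

variable [Finite G] [G.Normal]

lemma IsQuasirandom.subset_pow_three_mul_commutator (hG : IsQuasirandom G D)
    (hA : A.Finite) (hne : A.Nonempty) (hinv : A⁻¹ = A) (h3 : ((A ^ 3).ncard : ℝ) ≤ K * A.ncard)
    (hK : 2 ≤ K) (hD : K ^ 31 ≤ D) [R.Normal] (hRG : R ≤ G)
    (hcov : (G : Set Γ) ⊆ (A ^ 2 ∩ G) ^ 3 * R) : (G : Set Γ) ⊆ (A ^ 2 ∩ G) ^ 3 * ⁅G, R⁆ := by
  have hsurj := (QuotientGroup.mk' ⁅G, R⁆).subgroupMap_surjective G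
  have := Finite.of_surjective _ hsurj
  refine subset_pow_three_mul_of_map_mk' ((Subgroup.commutator_le_right G R).trans hRG) ?_
  exact (HasSmallPowers.image_mk' hA hne hinv h3 _).inter_pow_three_eq_of_central hK
    (hG.of_surjective hsurj) hD (Subgroup.map_mono hRG) le_centralizer_map_mk'
    (coe_map_mk'_subset_pow_six_mul hcov _)

lemma IsQuasirandom.subset_pow_three_mul_commutator_self (hG : IsQuasirandom G D)
    (hA : A.Finite) (hne : A.Nonempty) (hinv : A⁻¹ = A) (hgen : Subgroup.closure A = ⊤)
    (h3 : ((A ^ 3).ncard : ℝ) ≤ K * A.ncard) (hK : 2 ≤ K) (hD : K ^ 600 ≤ D) [R.Normal]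
    (hRG : R ≤ G) (hGR : R ≤ ⁅G, R⁆) (hcov : (G : Set Γ) ⊆ (A ^ 2 ∩ G) ^ 3 * R) :
    (G : Set Γ) ⊆ (A ^ 2 ∩ G) ^ 3 * ((⁅R, R⁆ : Subgroup Γ) : Set Γ) := by
  set f := QuotientGroup.mk' ⁅R, R⁆
  have hf : Function.Surjective f := QuotientGroup.mk'_surjective _
  have := Finite.of_surjective _ (f.subgroupMap_surjective G)
  have : (G.map f).Normal := ‹G.Normal›.map f hf
  have : (R.map f).Normal := ‹R.Normal›.map f hf
  have : IsMulCommutative (R.map f) := Subgroup.commutator_self_eq_bot_iff.1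
    (by rw [← Subgroup.map_commutator, QuotientGroup.map_mk'_self])
  have hgen' : Subgroup.closure (f '' A) = ⊤ := by
    rw [← MonoidHom.map_closure, hgen, Subgroup.map_top_of_surjective f hf]
  refine subset_pow_three_mul_of_map_mk' ((Subgroup.commutator_le_right R R).trans hRG) ?_
  exact (HasSmallPowers.image_mk' hA hne hinv h3 _).inter_pow_three_eq_of_le_commutator hK hgen'
    (hG.of_surjective (f.subgroupMap_surjective G)) hD (Subgroup.map_mono hRG)
    ((Subgroup.map_mono hGR).trans_eq (Subgroup.map_commutator G R f))
    (coe_map_mk'_subset_pow_six_mul hcov _)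

lemma IsQuasirandom.inter_pow_three_eq_of_isSolvable (hG : IsQuasirandom G D)
    (hA : A.Finite) (hne : A.Nonempty) (hinv : A⁻¹ = A) (hgen : Subgroup.closure A = ⊤)
    (h3 : ((A ^ 3).ncard : ℝ) ≤ K * A.ncard) (hK : 2 ≤ K) (hD : K ^ 600 ≤ D) [R.Normal]
    [Group.IsSolvable R] (hRG : R ≤ G) (hcov : (G : Set Γ) ⊆ (A ^ 2 ∩ G) ^ 3 * R) :
    (A ^ 2 ∩ G) ^ 3 = (G : Set Γ) := by
  induction hn : Nat.card R using Nat.strong_induction_on generalizing R with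
  | _ n ih =>
  have descend {M : Subgroup Γ} [M.Normal] (hMR : M < R)
      (hM : (G : Set Γ) ⊆ (A ^ 2 ∩ G) ^ 3 * M) : (A ^ 2 ∩ G) ^ 3 = (G : Set Γ) := by
    have := Group.isSolvable_of_isSolvable_injective (Subgroup.inclusion_injective hMR.le)
    have hRfin : (R : Set Γ).Finite := (Set.toFinite (G : Set Γ)).subset hRG
    exact ih _ (hn ▸ Set.ncard_lt_ncard hMR hRfin) (hMR.le.trans hRG) hM rfl
  obtain rfl | hR := eq_or_ne R ⊥
  · refine ((Set.pow_subset_pow_left Set.inter_subset_right).trans_eq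
      (coe_set_pow three_ne_zero G)).antisymm ?_
    simpa using hcov
  obtain hGR | hGR := (Subgroup.commutator_le_right G R).lt_or_eq
  · exact descend hGR <| hG.subset_pow_three_mul_commutator hA hne hinv h3 hK
      ((pow_le_pow_right₀ (by linarith) (by norm_num)).trans hD) hRG hcov
  · exact descend (commutator_lt_of_isSolvable hR) <|
      hG.subset_pow_three_mul_commutator_self hA hne hinv hgen h3 hK hD hRG hGR.ge hcov

end Descent

lemma IsQuasirandom.pow_three_eq_univ {Γ : Type*} [Group Γ] {A : Set Γ} {K D : ℝ}
    (hG : IsQuasirandom (⊤ : Subgroup Γ) D) (hA : A.Finite) (hinv : A⁻¹ = A)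
    (h3 : ((A ^ 3).ncard : ℝ) ≤ K * A.ncard) (hK : 1 < K) (hD : K ^ 13 ≤ D)
    (hA6 : A ^ 6 = Set.univ) : A ^ 3 = Set.univ := by
  have := Set.finite_univ_iff.1 (hA6 ▸ finite_set_pow hA 6)
  have hcard := ncard_pow_le_of_tripling hA hinv h3 (k := 4) (by norm_num)
  rw [hA6, Set.ncard_univ] at hcard
  have hcard' : (Nat.card (⊤ : Subgroup Γ) : ℝ) ≤ K ^ 4 * (A ∩ (⊤ : Subgroup Γ)).ncard := by
    simpa using hcard
  simpa using hG.inter_pow_three_eq hcard'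
    ((pow_mul K 4 3).symm.trans_lt <| (pow_lt_pow_right₀ hK (by norm_num)).trans_le hD)

theorem covering_perfect_central_extension_general {Γ : Type*} [Group Γ] (G N : Subgroup Γ)
    [Finite G] [G.Normal] [N.Normal] (hNG : N ≤ G) [Group.IsSolvable N] {K : ℝ} (hK : 1 ≤ K)
    (hG : IsQuasirandom G (K ^ 600)) {A : Set Γ} (hA : A.Finite) (hinv : A⁻¹ = A)
    (h3 : ((A ^ 3).ncard : ℝ) ≤ K * A.ncard) (hgen : Subgroup.closure A = ⊤)
    (hcov : (G : Set Γ) ⊆ A * N) :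
    (A ^ 2 ∩ G) ^ 3 = (G : Set Γ) ∧ (G = ⊤ → A ^ 3 = G) := by
  have hne : A.Nonempty := (Set.Nonempty.mono hcov ⟨1, G.one_mem⟩).of_mul_left
  obtain hK2 | hK2 := lt_or_ge K 2
  · have := hG.isPerfect (one_le_pow₀ hK)
    have hpos : (0 : ℝ) < A.ncard := Nat.cast_pos.2 ((Set.ncard_pos hA).2 hne)
    have h3' : (A ^ 3).ncard < 2 * A.ncard := by
      exact_mod_cast h3.trans_lt (mul_lt_mul_of_pos_right hK2 hpos)
    have hGA := subset_sq_of_isPerfect (G := G) hA hne hinv hgen h3'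
    refine ⟨by rw [Set.inter_eq_right.2 hGA, coe_set_pow three_ne_zero], ?_⟩
    rintro rfl
    rw [pow_succ, Set.univ_subset_iff.1 hGA, Set.univ_mul hne, Subgroup.coe_top]
  · have hmain := hG.inter_pow_three_eq_of_isSolvable hA hne hinv hgen h3 hK2 le_rfl hNG
      (subset_pow_three_mul_of_subset_mul hne hinv hNG hcov)
    refine ⟨hmain, ?_⟩
    rintro rfl
    exact hG.pow_three_eq_univ hA hinv h3 (by linarith) (pow_le_pow_right₀ hK (by norm_num))
      (by simpa [← pow_mul] using hmain)

/-- For each `d ≥ 1` there is `m = m(d)` such that: if `N ≤ G` are finite normal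
subgroups of a group `Γ` with `[G,N] = N`, `N` nilpotent, `G/N` `d`-generated, and
`deg_ℂ(G) > K^m`, and `A` is a finite symmetric `K`-tripling generating set of `Γ`
covering `G/N`, then `(A² ∩ G)³ = G`; moreover if `Γ = G` then `A³ = G`. -/
theorem covering_perfect_central_extension :
    ∀ d : ℕ, 1 ≤ d → ∃ m : ℕ,
      ∀ (Γ : Type) [Group Γ], ∀ (G N : Subgroup Γ),
      Finite ↥G →
      N ≤ G →
      (∀ γ : Γ, ∀ g ∈ G, γ * g * γ⁻¹ ∈ G) →
      (∀ γ : Γ, ∀ x ∈ N, γ * x * γ⁻¹ ∈ N) →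
      ⁅G, N⁆ = N →
      Group.IsNilpotent ↥N →
      (∃ S : Finset Γ, S.card ≤ d ∧ (S : Set Γ) ⊆ (G : Set Γ) ∧
        ∀ g ∈ G, ∃ h ∈ Subgroup.closure (S : Set Γ), h⁻¹ * g ∈ N) →
      ∀ K : ℝ, 1 ≤ K →
      (∀ (e : ℕ) (φ : ↥G →* GL (Fin e) ℂ), φ.range ≠ ⊥ → K ^ m < (e : ℝ)) →
      ∀ A : Set Γ, A.Finite → A.Nonempty → A⁻¹ = A →
      ((A ^ 3).ncard : ℝ) ≤ K * (A.ncard : ℝ) →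
      Subgroup.closure A = ⊤ →
      (G : Set Γ) ⊆ A * (N : Set Γ) →
      ((A ^ 2 ∩ (G : Set Γ)) ^ 3 = (G : Set Γ)) ∧
        (G = ⊤ → A ^ 3 = (G : Set Γ)) := by
  refine fun d _ ↦ ⟨600, ?_⟩
  intro Γ _ G N _ hNG hG hN _ _ _ K hK hquasi A hA _ hinv h3 hgen hcov
  have : G.Normal := ⟨fun g hg γ ↦ hG γ g hg⟩
  have : N.Normal := ⟨fun x hx γ ↦ hN γ x hx⟩
  exact covering_perfect_central_extension_general G N hNG hK hquasi hA hinv h3 hgen hcov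
end
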